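/- arXiv:2012.08955 — 7 statements merged into one kernel-verified Lean document; each statement's English description precedes it below -/
import Mathlib

section
/- Let n ≥ 2 and let K ⊂ ℝⁿ be a convex body. Then K is centrally symmetric if and only if K is characterized by its convex hull function up to translations, i.e., if and only if every convex body L ⊂ ℝⁿ with G_L = G_K is a translate of K. -/
open MeasureTheory Set Pointwise Metric

/-- A convex body: a compact convex set with nonempty interior. -/
def IsConvexBody {n : ℕ} (K : Set (EuclideanSpace ℝ (Fin n))) : Prop :=
  IsCompact K ∧ Convex ℝ K ∧ (interior K).Nonempty

/-- The convex hull function `G_K(t) = volₙ(conv(K ∪ (t + K)))`. -/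
noncomputable def convexHullFn {n : ℕ} (K : Set (EuclideanSpace ℝ (Fin n)))
    (t : EuclideanSpace ℝ (Fin n)) : ℝ :=
  (volume (convexHull ℝ (K ∪ (t +ᵥ K)))).toReal

/-! ### One-dimensional Brunn-Minkowski and Prekopa-Leindler -/

lemma bm1_compact {A B : Set ℝ} (hA : IsCompact A) (hB : IsCompact B) (hA0 : A.Nonempty)
    (hB0 : B.Nonempty) : volume A + volume B ≤ volume (A + B) := by
  obtain ⟨a, haA, ha⟩ := hA.exists_isGreatest hA0
  obtain ⟨b, hbB, hb⟩ := hB.exists_isLeast hB0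
  have h1 : (b +ᵥ A) ∪ (a +ᵥ B) ⊆ A + B := by
    rintro x (⟨y, hy, rfl⟩ | ⟨y, hy, rfl⟩)
    · exact ⟨y, hy, b, hbB, by simp [add_comm]⟩
    · exact ⟨a, haA, y, hy, by simp⟩
  have h2 : AEDisjoint volume (b +ᵥ A) (a +ᵥ B) := by
    have : (b +ᵥ A) ∩ (a +ᵥ B) ⊆ {a + b} := by
      rintro x ⟨⟨y, hy, rfl⟩, ⟨z, hz, hz'⟩⟩
      have h3 := ha hy
      have h4 := hb hz
      simp only [vadd_eq_add] at hz' ⊢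
      simp only [mem_singleton_iff]
      linarith
    exact measure_mono_null this (by simp)
  have h3 : MeasurableSet (a +ᵥ B) := (hB.vadd a).measurableSet
  calc volume A + volume B = volume (b +ᵥ A) + volume (a +ᵥ B) := by
        rw [measure_vadd, measure_vadd]
    _ = volume ((b +ᵥ A) ∪ (a +ᵥ B)) := (measure_union₀ h3.nullMeasurableSet h2).symm
    _ ≤ _ := measure_mono h1

lemma exists_compact_lt {A : Set ℝ} (hA : MeasurableSet A) (hA0 : A.Nonempty) {r : ENNReal}
    (hr : r < volume A) : ∃ C ⊆ A, IsCompact C ∧ C.Nonempty ∧ r < volume C := by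
  obtain ⟨C, hC, hCc, hrC⟩ := hA.exists_lt_isCompact hr
  obtain ⟨a, ha⟩ := hA0
  exact ⟨insert a C, insert_subset ha hC, hCc.insert a, ⟨a, mem_insert _ _⟩,
    hrC.trans_le (measure_mono (subset_insert _ _))⟩

lemma bm1 {A B : Set ℝ} (hA : MeasurableSet A) (hB : MeasurableSet B) (hA0 : A.Nonempty)
    (hB0 : B.Nonempty) : volume A + volume B ≤ volume (A + B) := by
  have key : ∀ {A : Set ℝ}, MeasurableSet A → A.Nonempty → 
      volume A = ⨆ C : {C : Set ℝ // C ⊆ A ∧ IsCompact C ∧ C.Nonempty}, volume C.1 := by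
    intro A hA hA0
    apply le_antisymm
    · apply le_of_forall_lt
      intro r hr
      obtain ⟨C, h1, h2, h3, h4⟩ := exists_compact_lt hA hA0 hr
      exact h4.trans_le (le_iSup (fun C : {C : Set ℝ // C ⊆ A ∧ IsCompact C ∧ C.Nonempty} => 
        volume C.1) ⟨C, h1, h2, h3⟩)
    · exact iSup_le fun C => measure_mono C.2.1
  obtain ⟨a, ha⟩ := hA0
  obtain ⟨b, hb⟩ := hB0
  have : Nonempty {C : Set ℝ // C ⊆ A ∧ IsCompact C ∧ C.Nonempty} :=
    ⟨⟨{a}, by simpa using ha, isCompact_singleton, singleton_nonempty a⟩⟩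
  have : Nonempty {C : Set ℝ // C ⊆ B ∧ IsCompact C ∧ C.Nonempty} :=
    ⟨⟨{b}, by simpa using hb, isCompact_singleton, singleton_nonempty b⟩⟩
  rw [key hA ⟨a, ha⟩, key hB ⟨b, hb⟩]
  rw [ENNReal.iSup_add]
  refine iSup_le fun C => ?_
  rw [ENNReal.add_iSup]
  refine iSup_le fun D => ?_
  exact (bm1_compact C.2.2.1 D.2.2.1 C.2.2.2 D.2.2.2).trans
    (measure_mono (Set.add_subset_add C.2.1 D.2.1))

lemma pl1_norm {f g h : ℝ → ℝ} (hf : Measurable f) (hg : Measurable g) (hh : Measurable h)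
    (hf0 : ∀ x, 0 ≤ f x) (hg0 : ∀ x, 0 ≤ g x) (hh0 : ∀ x, 0 ≤ h x)
    (hf1 : ∀ x, f x ≤ 1) (hg1 : ∀ x, g x ≤ 1)
    (hfs : ∀ t < 1, ∃ x, t < f x) (hgs : ∀ t < 1, ∃ x, t < g x)
    (H : ∀ x y, f x * g y ≤ h ((x + y) / 2) ^ 2) :
    (∫⁻ x, ENNReal.ofReal (f x)) + (∫⁻ x, ENNReal.ofReal (g x)) ≤
      2 * ∫⁻ x, ENNReal.ofReal (h x) := by
  rw [lintegral_eq_lintegral_meas_lt volume (ae_of_all _ hf0) hf.aemeasurable,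
    lintegral_eq_lintegral_meas_lt volume (ae_of_all _ hg0) hg.aemeasurable,
    lintegral_eq_lintegral_meas_lt volume (ae_of_all _ hh0) hh.aemeasurable]
  have mf : Measurable fun t => volume {a | t < f a} := 
    Antitone.measurable fun s t hst => measure_mono fun x (hx : t < f x) => lt_of_le_of_lt hst hx
  have mh : Measurable fun t => volume {a | t < h a} := 
    Antitone.measurable fun s t hst => measure_mono fun x (hx : t < h x) => lt_of_le_of_lt hst hx
  rw [← lintegral_add_left mf, ← lintegral_const_mul _ mh]
  refine setLIntegral_mono' measurableSet_Ioi fun t (ht : 0 < t) => ?_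
  by_cases ht1 : t < 1
  · have h1 : volume ({a | t < f a} + {a | t < g a}) ≤ 2 * volume {a | t < h a} := by
      have : {a | t < f a} + {a | t < g a} ⊆ (2:ℝ) • {a | t < h a} := by
        rintro _ ⟨x, hx, y, hy, rfl⟩
        refine ⟨(x + y) / 2, ?_, by simp [mul_div_cancel₀]⟩
        simp only [mem_ofPred_eq] at hx hy ⊢
        have := H x y
        by_contra hc
        push Not at hc
        have := hh0 ((x+y)/2)
        nlinarith [hf0 x, hg0 y]
      refine (measure_mono this).trans ?_
      rw [Measure.addHaar_smul]
      simp
    refine le_trans (bm1 (measurableSet_lt measurable_const hf) 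
      (measurableSet_lt measurable_const hg) (hfs t ht1) (hgs t ht1)) h1
  · have e1 : {a | t < f a} = ∅ := by
      ext x; simp; linarith [hf1 x]
    have e2 : {a | t < g a} = ∅ := by
      ext x; simp; linarith [hg1 x]
    simp [e1, e2]

lemma ennreal_amgm (a b c : ENNReal) (h : a + b ≤ 2 * c) : a * b ≤ c ^ 2 := by
  by_cases hc : c = ⊤
  · simp [hc]
  have ht : 2 * c ≠ ⊤ := ENNReal.mul_ne_top (by simp) hc
  have ha : a ≠ ⊤ := ne_top_of_le_ne_top ht (le_self_add.trans h)
  have hb : b ≠ ⊤ := ne_top_of_le_ne_top ht (le_add_self.trans h)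
  lift a to NNReal using ha
  lift b to NNReal using hb
  lift c to NNReal using hc
  norm_cast at h ⊢
  have h' : (a:ℝ) + b ≤ 2 * c := by exact_mod_cast h
  have : (a:ℝ) * b ≤ (c:ℝ)^2 := by
    nlinarith [sq_nonneg ((a:ℝ) - b), a.2, b.2, c.2]
  exact_mod_cast this

lemma pl1_real {f g h : ℝ → ℝ} (hf : Measurable f) (hg : Measurable g) (hh : Measurable h)
    (hf0 : ∀ x, 0 ≤ f x) (hg0 : ∀ x, 0 ≤ g x) (hh0 : ∀ x, 0 ≤ h x)
    (hfb : BddAbove (range f)) (hgb : BddAbove (range g))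
    (H : ∀ x y, f x * g y ≤ h ((x + y) / 2) ^ 2) :
    (∫⁻ x, ENNReal.ofReal (f x)) * (∫⁻ x, ENNReal.ofReal (g x)) ≤
      (∫⁻ x, ENNReal.ofReal (h x)) ^ 2 := by
  by_cases hfz : ∀ x, f x = 0
  · simp [hfz]
  by_cases hgz : ∀ x, g x = 0
  · simp [hgz]
  push Not at hfz hgz
  obtain ⟨x0, hx0⟩ := hfz
  obtain ⟨y0, hy0⟩ := hgz
  set s := ⨆ x, f x with hs
  set t := ⨆ x, g x with ht
  have s0 : 0 < s := lt_of_lt_of_le (lt_of_le_of_ne (hf0 x0) hx0.symm) (le_ciSup hfb x0)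
  have t0 : 0 < t := lt_of_lt_of_le (lt_of_le_of_ne (hg0 y0) hy0.symm) (le_ciSup hgb y0)
  have c0 : 0 < √(s * t) := Real.sqrt_pos.2 (mul_pos s0 t0)
  have key := pl1_norm (f := fun x => s⁻¹ * f x) (g := fun x => t⁻¹ * g x) 
    (h := fun x => (√(s * t))⁻¹ * h x) (hf.const_mul _) (hg.const_mul _) (hh.const_mul _)
    (fun x => mul_nonneg (by positivity) (hf0 x)) (fun x => mul_nonneg (by positivity) (hg0 x))
    (fun x => mul_nonneg (by positivity) (hh0 x)) 
    (fun x => by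
      rw [inv_mul_le_iff₀ s0, mul_one]; exact le_ciSup hfb x)
    (fun x => by
      rw [inv_mul_le_iff₀ t0, mul_one]; exact le_ciSup hgb x)
    (fun r hr => by
      have : r * s < s := by nlinarith
      obtain ⟨x, hx⟩ := exists_lt_of_lt_ciSup this
      exact ⟨x, by rw [lt_inv_mul_iff₀ s0]; linarith⟩)
    (fun r hr => by
      have : r * t < t := by nlinarith
      obtain ⟨x, hx⟩ := exists_lt_of_lt_ciSup this
      exact ⟨x, by rw [lt_inv_mul_iff₀ t0]; linarith⟩)
    (fun x y => by
      have := H x y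
      simp only [mul_pow, inv_pow]
      rw [Real.sq_sqrt (by positivity)]
      calc s⁻¹ * f x * (t⁻¹ * g y) = (s * t)⁻¹ * (f x * g y) := by
            rw [mul_inv]; ring
        _ ≤ _ := by gcongr)
  have key2 := ennreal_amgm _ _ _ key
  have e : ∀ (c : ℝ) (f : ℝ → ℝ), 0 ≤ c → Measurable f → 
      ∫⁻ x, ENNReal.ofReal (c * f x) = ENNReal.ofReal c * ∫⁻ x, ENNReal.ofReal (f x) := by
    intro c f hc hf
    simp_rw [ENNReal.ofReal_mul hc]
    rw [lintegral_const_mul _ hf.ennreal_ofReal]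
  rw [e _ _ (by positivity) hf, e _ _ (by positivity) hg, e _ _ (by positivity) hh] at key2
  have e2 : ENNReal.ofReal (s⁻¹) * ENNReal.ofReal t⁻¹ = ENNReal.ofReal (√(s*t))⁻¹ ^ 2 := by
    rw [← ENNReal.ofReal_mul (by positivity), ← ENNReal.ofReal_pow (by positivity), inv_pow,
      Real.sq_sqrt (by positivity), mul_inv]
  rw [mul_pow, mul_mul_mul_comm, e2] at key2
  rwa [ENNReal.mul_le_mul_iff_right] at key2
  · have : 0 < ENNReal.ofReal (√(s*t))⁻¹ := by
      rw [ENNReal.ofReal_pos]; positivity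
    positivity
  · exact ENNReal.pow_ne_top ENNReal.ofReal_ne_top

lemma pl1_bdd {f g h : ℝ → ENNReal} (hf : Measurable f) (hg : Measurable g) (hh : Measurable h)
    (N : NNReal) (hfb : ∀ x, f x ≤ N) (hgb : ∀ x, g x ≤ N) 
    (H : ∀ x y, f x * g y ≤ h ((x + y) / 2) ^ 2) :
    (∫⁻ x, f x) * (∫⁻ x, g x) ≤ (∫⁻ x, h x) ^ 2 := by
  have hft : ∀ x, f x ≠ ⊤ := fun x => ne_top_of_le_ne_top ENNReal.coe_ne_top (hfb x)
  have hgt : ∀ x, g x ≠ ⊤ := fun x => ne_top_of_le_ne_top ENNReal.coe_ne_top (hgb x)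
  have hht : ∀ x, min (h x) N ≠ ⊤ := 
    fun x => ne_top_of_le_ne_top ENNReal.coe_ne_top (min_le_right _ _)
  have key := pl1_real (f := fun x => (f x).toReal) (g := fun x => (g x).toReal) 
    (h := fun x => (min (h x) N).toReal) hf.ennreal_toReal hg.ennreal_toReal
    (hh.min measurable_const).ennreal_toReal (fun _ => ENNReal.toReal_nonneg) 
    (fun _ => ENNReal.toReal_nonneg) (fun _ => ENNReal.toReal_nonneg) 
    ⟨N, by rintro _ ⟨x, rfl⟩; exact ENNReal.toReal_le_coe_of_le_coe (hfb x)⟩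
    ⟨N, by rintro _ ⟨x, rfl⟩; exact ENNReal.toReal_le_coe_of_le_coe (hgb x)⟩
    (fun x y => by
      rw [← ENNReal.toReal_mul, ← ENNReal.toReal_pow]
      refine ENNReal.toReal_mono (ENNReal.pow_ne_top (hht _)) ?_
      rcases le_total (h ((x+y)/2)) N with h1 | h1
      · rw [min_eq_left h1]; exact H x y
      · rw [min_eq_right h1, sq]; exact mul_le_mul' (hfb x) (hgb y))
  simp only [ENNReal.ofReal_toReal (hft _), ENNReal.ofReal_toReal (hgt _), 
    ENNReal.ofReal_toReal (hht _)] at key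
  refine key.trans ?_
  gcongr
  exact min_le_left _ _

lemma pl1 {f g h : ℝ → ENNReal} (hf : Measurable f) (hg : Measurable g) (hh : Measurable h)
    (H : ∀ x y, f x * g y ≤ h ((x + y) / 2) ^ 2) :
    (∫⁻ x, f x) * (∫⁻ x, g x) ≤ (∫⁻ x, h x) ^ 2 := by
  have tr : ∀ {f : ℝ → ENNReal}, Measurable f → 
      Filter.Tendsto (fun N : ℕ => ∫⁻ x, min (f x) N) Filter.atTop (nhds (∫⁻ x, f x)) := by
    intro f hf
    refine lintegral_tendsto_of_tendsto_of_monotone 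
      (fun N => (hf.min measurable_const).aemeasurable) 
      (ae_of_all _ fun x N M h => by dsimp only; gcongr) (ae_of_all _ fun x => ?_)
    have : Filter.Tendsto (fun N : ℕ => min (f x) (N : ENNReal)) Filter.atTop 
        (nhds (min (f x) ⊤)) := tendsto_const_nhds.min ENNReal.tendsto_nat_nhds_top
    simpa using this
  have hfin : ∀ N : ℕ, (∫⁻ x, min (f x) N) * (∫⁻ x, min (g x) N) ≤ (∫⁻ x, h x) ^ 2 := by
    intro N
    refine pl1_bdd (hf.min measurable_const) (hg.min measurable_const) hh N 
      (fun x => by simp) (fun x => by simp) (fun x y => ?_)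
    exact (mul_le_mul' (min_le_left _ _) (min_le_left _ _)).trans (H x y)
  have hmono : ∀ {f : ℝ → ENNReal}, Monotone (fun N : ℕ => ∫⁻ x, min (f x) N) := by
    intro f N M h
    dsimp only
    gcongr
  have e1 : ∫⁻ x, f x = ⨆ N : ℕ, ∫⁻ x, min (f x) N := 
    tendsto_nhds_unique (tr hf) (tendsto_atTop_iSup hmono)
  have e2 : ∫⁻ x, g x = ⨆ N : ℕ, ∫⁻ x, min (g x) N := 
    tendsto_nhds_unique (tr hg) (tendsto_atTop_iSup hmono)
  rw [e1, e2, ENNReal.iSup_mul]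
  refine iSup_le fun i => ?_
  rw [ENNReal.mul_iSup]
  refine iSup_le fun j => le_trans ?_ (hfin (max i j))
  exact mul_le_mul' (hmono (le_max_left i j)) (hmono (le_max_right i j))

lemma pln (n : ℕ) : ∀ {f g h : (Fin n → ℝ) → ENNReal} (_ : Measurable f) (_ : Measurable g) 
    (_ : Measurable h) (_ : ∀ x y, f x * g y ≤ h ((1 / 2 : ℝ) • (x + y)) ^ 2),
    (∫⁻ x, f x) * (∫⁻ x, g x) ≤ (∫⁻ x, h x) ^ 2 := by
  induction n with
  | zero =>
    intro f g h hf hg hh H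
    rw [lintegral_unique, lintegral_unique, lintegral_unique]
    have : (volume : Measure (Fin 0 → ℝ)) univ = 1 := by simp [volume_pi]
    rw [this]
    have := H default default
    rw [Subsingleton.elim ((1 / 2 : ℝ) • (default + default) : Fin 0 → ℝ) default] at this
    simp only [mul_one]
    convert this
  | succ n ih =>
    intro f g h hf hg hh H
    have hc : Measurable (fun p : ℝ × (Fin n → ℝ) => (Fin.cons p.1 p.2 : Fin (n+1) → ℝ)) := by
      have := (MeasurableEquiv.piFinSuccAbove (fun _ : Fin (n+1) => ℝ) 0).symm.measurable
      simpa [MeasurableEquiv.piFinSuccAbove, Fin.insertNthEquiv] using this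
    have key : ∀ {f : (Fin (n+1) → ℝ) → ENNReal}, Measurable f → 
        ∫⁻ x, f x = ∫⁻ s : ℝ, ∫⁻ y : Fin n → ℝ, f (Fin.cons s y) := by
      intro f hf
      have mp := (volume_preserving_piFinSuccAbove (fun _ : Fin (n+1) => ℝ) 0).symm
      rw [← mp.lintegral_comp hf]
      have : ∀ p, f ((MeasurableEquiv.piFinSuccAbove (fun _ : Fin (n+1) => ℝ) 0).symm p) = 
          f (Fin.cons p.1 p.2) := by
        intro p; congr 1
        simp [MeasurableEquiv.piFinSuccAbove, Fin.insertNthEquiv]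
      simp_rw [this]
      rw [Measure.volume_eq_prod, lintegral_prod (fun p : ℝ × (Fin n → ℝ) => f (Fin.cons p.1 p.2)) (hf.comp hc).aemeasurable]
    rw [key hf, key hg, key hh]
    refine pl1 (hf.comp hc).lintegral_prod_right' (hg.comp hc).lintegral_prod_right' 
      (hh.comp hc).lintegral_prod_right' fun s t => ?_
    refine ih (hf.comp (hc.comp measurable_prodMk_left)) 
      (hg.comp (hc.comp measurable_prodMk_left)) 
      (hh.comp (hc.comp measurable_prodMk_left)) fun x y => ?_
    refine (H _ _).trans (le_of_eq ?_)
    congr 2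
    ext i
    refine Fin.cases ?_ (fun j => ?_) i
    · simp; ring
    · simp; ring

lemma plE {n : ℕ} {f g h : EuclideanSpace ℝ (Fin n) → ENNReal} (hf : Measurable f) 
    (hg : Measurable g) (hh : Measurable h) 
    (H : ∀ x y, f x * g y ≤ h ((1 / 2 : ℝ) • (x + y)) ^ 2) :
    (∫⁻ x, f x) * (∫⁻ x, g x) ≤ (∫⁻ x, h x) ^ 2 := by
  have mp := PiLp.volume_preserving_toLp (Fin n)
  rw [← mp.lintegral_comp hf, ← mp.lintegral_comp hg, ← mp.lintegral_comp hh]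
  exact pln n (hf.comp mp.measurable) (hg.comp mp.measurable) (hh.comp mp.measurable) 
    fun x y => H _ _

/-! ### Consequences of Prekopa-Leindler and the equality case of Brunn-Minkowski -/

lemma pl_exp {n : ℕ} {L K : Set (EuclideanSpace ℝ (Fin n))} (hL : IsCompact L) (hK : IsCompact K)
    {p q r : EuclideanSpace ℝ (Fin n) → ℝ} (hp : Continuous p) (hq : Continuous q)
    (hr : Continuous r)
    (H : ∀ x ∈ L, ∀ y ∈ K, p x + r y ≤ 2 * q ((1 / 2 : ℝ) • (x + y))) :
    (∫ x in L, Real.exp (p x)) * (∫ x in K, Real.exp (r x)) ≤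
      (∫ x in (1 / 2 : ℝ) • (L + K), Real.exp (q x)) ^ 2 := by
  have hM : IsCompact ((1 / 2 : ℝ) • (L + K)) := (hL.add hK).smul _
  have key := plE (f := L.indicator fun x => ENNReal.ofReal (Real.exp (p x)))
    (g := K.indicator fun x => ENNReal.ofReal (Real.exp (r x)))
    (h := ((1 / 2 : ℝ) • (L + K)).indicator fun x => ENNReal.ofReal (Real.exp (q x)))
    (Measurable.indicator (by fun_prop) hL.measurableSet)
    (Measurable.indicator (by fun_prop) hK.measurableSet)
    (Measurable.indicator (by fun_prop) hM.measurableSet)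
    (fun x y => by
      by_cases hx : x ∈ L
      · by_cases hy : y ∈ K
        · have hm : (1 / 2 : ℝ) • (x + y) ∈ (1 / 2 : ℝ) • (L + K) :=
            smul_mem_smul_set (add_mem_add hx hy)
          rw [indicator_of_mem hx, indicator_of_mem hy, indicator_of_mem hm,
            ← ENNReal.ofReal_mul (Real.exp_pos _).le, ← ENNReal.ofReal_pow (Real.exp_pos _).le,
            ← Real.exp_add, ← Real.exp_nat_mul]
          apply ENNReal.ofReal_le_ofReal
          apply Real.exp_le_exp.2
          exact_mod_cast H x hx y hy
        · simp [hy]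
      · simp [hx])
  rw [lintegral_indicator hL.measurableSet, lintegral_indicator hK.measurableSet,
    lintegral_indicator hM.measurableSet] at key
  have e : ∀ {S : Set (EuclideanSpace ℝ (Fin n))} (_ : IsCompact S)
      {p : EuclideanSpace ℝ (Fin n) → ℝ} (_ : Continuous p),
      ∫⁻ x in S, ENNReal.ofReal (Real.exp (p x)) = ENNReal.ofReal (∫ x in S, Real.exp (p x)) := by
    intro S hS p hp
    rw [ofReal_integral_eq_lintegral_ofReal]
    · exact (by fun_prop : Continuous fun x => Real.exp (p x)).continuousOn.integrableOn_compact hS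
    · exact ae_of_all _ fun x => (Real.exp_pos _).le
  rw [e hL hp, e hK hr, e hM hq, ← ENNReal.ofReal_mul (by positivity), 
    ← ENNReal.ofReal_pow (by positivity)] at key
  exact (ENNReal.ofReal_le_ofReal_iff (by positivity)).1 key

lemma exp_expand {n : ℕ} {S : Set (EuclideanSpace ℝ (Fin n))} (hS : IsCompact S)
    {f : EuclideanSpace ℝ (Fin n) → ℝ} (hf : Continuous f) :
    ∃ C > 0, ∀ t : ℝ, |t| ≤ 1 / C → |(∫ x in S, Real.exp (t * f x)) - 
      (volume.real S + t * (∫ x in S, f x) + t ^ 2 * ((∫ x in S, f x ^ 2) / 2))| ≤ C * |t| ^ 3 := by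
  obtain ⟨C0, hC0⟩ := hS.exists_bound_of_continuousOn hf.continuousOn
  set B := max C0 1 with hB
  have hB1 : 1 ≤ B := le_max_right _ _
  have hfB : ∀ x ∈ S, |f x| ≤ B := fun x hx => (hC0 x hx).trans (le_max_left _ _)
  set C := B ^ 3 * (volume.real S + 1) with hC
  have hV : 0 ≤ volume.real S := measureReal_nonneg
  have hBC : B ≤ C := by
    rw [hC]
    nlinarith [mul_nonneg (pow_nonneg (zero_le_one.trans hB1) 3) hV, mul_self_nonneg B, 
      mul_nonneg (sub_nonneg.2 hB1) (mul_self_nonneg B)]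
  have hC0 : 0 < C := by linarith
  refine ⟨C, hC0, fun t ht => ?_⟩
  have i0 : IntegrableOn (fun x => Real.exp (t * f x)) S := 
    (by fun_prop : Continuous fun x => Real.exp (t * f x)).continuousOn.integrableOn_compact hS
  have i1 : IntegrableOn (fun x => f x) S := hf.continuousOn.integrableOn_compact hS
  have i2 : IntegrableOn (fun x => f x ^ 2) S := (hf.pow 2).continuousOn.integrableOn_compact hS
  have ic : IntegrableOn (fun x => (1:ℝ)) S := continuousOn_const.integrableOn_compact hS
  have e : (∫ x in S, Real.exp (t * f x)) - 
      (volume.real S + t * (∫ x in S, f x) + t ^ 2 * ((∫ x in S, f x ^ 2) / 2)) = 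
      ∫ x in S, (Real.exp (t * f x) - (1 + t * f x + t ^ 2 / 2 * f x ^ 2)) := by
    rw [integral_sub i0, integral_add, integral_add ic, integral_const_mul, integral_const_mul]
    · simp; ring
    · exact i1.const_mul t
    · exact ic.add (i1.const_mul t)
    · exact i2.const_mul _
    · exact (ic.add (i1.const_mul t)).add (i2.const_mul _)
  rw [e]
  have hb : ∀ x ∈ S, ‖Real.exp (t * f x) - (1 + t * f x + t ^ 2 / 2 * f x ^ 2)‖ ≤ 
      B ^ 3 * |t| ^ 3 := by
    intro x hx
    have h1 : |t * f x| ≤ |t| * B := by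
      rw [abs_mul]; gcongr; exact hfB x hx
    have h2 : |t| * B ≤ 1 := by
      calc |t| * B ≤ 1 / C * C := by gcongr
        _ = 1 := by field_simp
    have h3 := Real.exp_bound (h1.trans h2) (n := 3) (by norm_num)
    simp only [Finset.sum_range_succ, Finset.sum_range_zero, Nat.factorial] at h3
    norm_num at h3
    rw [Real.norm_eq_abs]
    calc _ = |Real.exp (t * f x) - (1 + t * f x + (t * f x) ^ 2 / 2)| := by congr 1; ring
      _ ≤ _ := h3
      _ ≤ |t * f x| ^ 3 := by 
        rw [abs_mul]
        have : 0 ≤ (|t| * |f x|) ^ 3 := by positivity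
        linarith
      _ ≤ (|t| * B) ^ 3 := by gcongr
      _ = _ := by ring
  refine (norm_setIntegral_le_of_norm_le_const hS.measure_lt_top hb).trans ?_
  rw [hC]
  have : 0 ≤ B ^ 3 * |t| ^ 3 := by positivity
  nlinarith

lemma exp_lim1 {n : ℕ} {S : Set (EuclideanSpace ℝ (Fin n))} (hS : IsCompact S)
    {f : EuclideanSpace ℝ (Fin n) → ℝ} (hf : Continuous f) :
    Filter.Tendsto (fun t : ℝ => ((∫ x in S, Real.exp (t * f x)) - volume.real S) / t)
      (nhdsWithin 0 (Ioi 0)) (nhds (∫ x in S, f x)) := by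
  obtain ⟨C, hC, h⟩ := exp_expand hS hf
  have l1 : Filter.Tendsto (fun t : ℝ => (∫ x in S, f x) + (t * ((∫ x in S, f x ^ 2) / 2) - C * t ^ 2)) 
      (nhdsWithin 0 (Ioi 0)) (nhds (∫ x in S, f x)) := by
    have : Continuous (fun t : ℝ => (∫ x in S, f x) + (t * ((∫ x in S, f x ^ 2) / 2) - C * t ^ 2)) := by
      fun_prop
    simpa using (this.tendsto 0).mono_left nhdsWithin_le_nhds
  have l2 : Filter.Tendsto (fun t : ℝ => (∫ x in S, f x) + (t * ((∫ x in S, f x ^ 2) / 2) + C * t ^ 2)) 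
      (nhdsWithin 0 (Ioi 0)) (nhds (∫ x in S, f x)) := by
    have : Continuous (fun t : ℝ => (∫ x in S, f x) + (t * ((∫ x in S, f x ^ 2) / 2) + C * t ^ 2)) := by
      fun_prop
    simpa using (this.tendsto 0).mono_left nhdsWithin_le_nhds
  have ev : ∀ᶠ t in nhdsWithin (0:ℝ) (Ioi 0), t ∈ Ioo 0 (1 / C) := Ioo_mem_nhdsGT (by positivity)
  refine tendsto_of_tendsto_of_tendsto_of_le_of_le' l1 l2 ?_ ?_
  · filter_upwards [ev] with t ht
    have := h t (by rw [abs_of_pos ht.1]; exact ht.2.le)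
    rw [abs_of_pos ht.1, abs_le] at this
    rw [le_div_iff₀ ht.1]
    nlinarith
  · filter_upwards [ev] with t ht
    have := h t (by rw [abs_of_pos ht.1]; exact ht.2.le)
    rw [abs_of_pos ht.1, abs_le] at this
    rw [div_le_iff₀ ht.1]
    nlinarith

lemma exp_lim2 {n : ℕ} {S : Set (EuclideanSpace ℝ (Fin n))} (hS : IsCompact S)
    {f : EuclideanSpace ℝ (Fin n) → ℝ} (hf : Continuous f) (h0 : ∫ x in S, f x = 0) :
    Filter.Tendsto (fun t : ℝ => ((∫ x in S, Real.exp (t * f x)) - volume.real S) / t ^ 2)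
      (nhdsWithin 0 (Ioi 0)) (nhds ((∫ x in S, f x ^ 2) / 2)) := by
  obtain ⟨C, hC, h⟩ := exp_expand hS hf
  rw [h0] at h
  have l1 : Filter.Tendsto (fun t : ℝ => ((∫ x in S, f x ^ 2) / 2) - C * t) 
      (nhdsWithin 0 (Ioi 0)) (nhds ((∫ x in S, f x ^ 2) / 2)) := by
    have : Continuous (fun t : ℝ => ((∫ x in S, f x ^ 2) / 2) - C * t) := by
      fun_prop
    simpa using (this.tendsto 0).mono_left nhdsWithin_le_nhds
  have l2 : Filter.Tendsto (fun t : ℝ => ((∫ x in S, f x ^ 2) / 2) + C * t) 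
      (nhdsWithin 0 (Ioi 0)) (nhds ((∫ x in S, f x ^ 2) / 2)) := by
    have : Continuous (fun t : ℝ => ((∫ x in S, f x ^ 2) / 2) + C * t) := by
      fun_prop
    simpa using (this.tendsto 0).mono_left nhdsWithin_le_nhds
  have ev : ∀ᶠ t in nhdsWithin (0:ℝ) (Ioi 0), t ∈ Ioo 0 (1 / C) := Ioo_mem_nhdsGT (by positivity)
  refine tendsto_of_tendsto_of_tendsto_of_le_of_le' l1 l2 ?_ ?_
  · filter_upwards [ev] with t ht
    have := h t (by rw [abs_of_pos ht.1]; exact ht.2.le)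
    rw [abs_of_pos ht.1, abs_le] at this
    have := ht.1
    rw [le_div_iff₀ (by positivity)]
    nlinarith
  · filter_upwards [ev] with t ht
    have := h t (by rw [abs_of_pos ht.1]; exact ht.2.le)
    rw [abs_of_pos ht.1, abs_le] at this
    have := ht.1
    rw [div_le_iff₀ (by positivity)]
    nlinarith

lemma quot_lim {l : Filter ℝ} [l.NeBot] {u FL FK FM : ℝ → ℝ} {V mL mK mM : ℝ} (hV : 0 < V)
    (hu : Filter.Tendsto u l (nhds 0)) (hu0 : ∀ᶠ t in l, 0 < u t)
    (hL : Filter.Tendsto (fun t => (FL t - V) / u t) l (nhds mL))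
    (hK : Filter.Tendsto (fun t => (FK t - V) / u t) l (nhds mK))
    (hM : Filter.Tendsto (fun t => (FM t - V) / u t) l (nhds mM))
    (H : ∀ᶠ t in l, FL t * FK t ≤ FM t ^ 2) : mL + mK ≤ 2 * mM := by
  have h1 := ((hL.add hK).const_mul V).add (hu.mul (hL.mul hK))
  have h2 := (hM.const_mul (2 * V)).add (hu.mul (hM.mul hM))
  have h3 : V * (mL + mK) + 0 * (mL * mK) ≤ 2 * V * mM + 0 * (mM * mM) := by
    refine le_of_tendsto_of_tendsto h1 h2 ?_
    filter_upwards [hu0, H] with t ht hH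
    have e1 : FL t = V + u t * ((FL t - V) / u t) := by field_simp; ring
    have e2 : FK t = V + u t * ((FK t - V) / u t) := by field_simp; ring
    have e3 : FM t = V + u t * ((FM t - V) / u t) := by field_simp; ring
    set a := (FL t - V) / u t
    set b := (FK t - V) / u t
    set c := (FM t - V) / u t
    rw [e1, e2, e3] at hH
    have : u t * (V * (a + b) + u t * (a * b)) ≤ u t * (2 * V * c + u t * (c * c)) := by
      nlinarith
    exact le_of_mul_le_mul_left this ht
  nlinarith

lemma pl_first {n : ℕ} {L K : Set (EuclideanSpace ℝ (Fin n))} (hL : IsCompact L) (hK : IsCompact K)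
    {p q r : EuclideanSpace ℝ (Fin n) → ℝ} (hp : Continuous p) (hq : Continuous q)
    (hr : Continuous r) {V : ℝ} (hV : 0 < V) (hLV : volume.real L = V) (hKV : volume.real K = V)
    (hMV : volume.real ((1 / 2 : ℝ) • (L + K)) = V)
    (H : ∀ x ∈ L, ∀ y ∈ K, p x + r y ≤ 2 * q ((1 / 2 : ℝ) • (x + y))) :
    (∫ x in L, p x) + (∫ x in K, r x) ≤ 2 * ∫ x in (1 / 2 : ℝ) • (L + K), q x := by
  have hM : IsCompact ((1 / 2 : ℝ) • (L + K)) := (hL.add hK).smul _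
  have a1 := exp_lim1 hL hp
  have a2 := exp_lim1 hK hr
  have a3 := exp_lim1 hM hq
  rw [hLV] at a1
  rw [hKV] at a2
  rw [hMV] at a3
  have hid : Filter.Tendsto (fun t : ℝ => t) (nhdsWithin 0 (Ioi 0)) (nhds 0) := 
    nhdsWithin_le_nhds
  refine quot_lim hV hid (by filter_upwards [self_mem_nhdsWithin] with t ht using ht) a1 a2 a3 ?_
  filter_upwards [self_mem_nhdsWithin] with t ht
  have ht : 0 < t := ht
  refine pl_exp hL hK (by fun_prop) (by fun_prop) (by fun_prop) fun x hx y hy => ?_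
  nlinarith [H x hx y hy]

lemma pl_second {n : ℕ} {L K : Set (EuclideanSpace ℝ (Fin n))} (hL : IsCompact L) (hK : IsCompact K)
    {V : ℝ} (hV : 0 < V) (hLV : volume.real L = V) (hKV : volume.real K = V)
    (hMV : volume.real ((1 / 2 : ℝ) • (L + K)) = V) (i : Fin n)
    (hL0 : ∫ x in L, x i = 0) (hK0 : ∫ x in K, x i = 0) :
    (∫ x in L, x i ^ 2) + (∫ x in K, x i ^ 2) ≤ 2 * ∫ x in (1 / 2 : ℝ) • (L + K), x i ^ 2 := by
  have hM : IsCompact ((1 / 2 : ℝ) • (L + K)) := (hL.add hK).smul _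
  have hc : Continuous fun x : EuclideanSpace ℝ (Fin n) => x i := by fun_prop
  have hM0 : ∫ x in (1 / 2 : ℝ) • (L + K), x i = 0 := by
    apply le_antisymm
    · have := pl_first hL hK (p := fun x => - x i) (q := fun x => - x i) (r := fun x => - x i)
        (by fun_prop) (by fun_prop) (by fun_prop) hV hLV hKV hMV (fun x _ y _ => by
          simp; linarith)
      rw [integral_neg, integral_neg, integral_neg, hL0, hK0] at this
      linarith
    · have := pl_first hL hK hc hc hc hV hLV hKV hMV (fun x _ y _ => by
          simp; linarith)
      linarith
  have a1 := exp_lim2 hL hc hL0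
  have a2 := exp_lim2 hK hc hK0
  have a3 := exp_lim2 hM hc hM0
  rw [hLV] at a1
  rw [hKV] at a2
  rw [hMV] at a3
  have : Filter.Tendsto (fun t : ℝ => t ^ 2) (nhdsWithin 0 (Ioi 0)) (nhds 0) := by
    have : Continuous (fun t : ℝ => t ^ 2) := by fun_prop
    simpa using (this.tendsto 0).mono_left nhdsWithin_le_nhds
  have := quot_lim hV this (by 
    filter_upwards [self_mem_nhdsWithin] with t ht
    have ht : 0 < t := ht
    positivity) a1 a2 a3 (by
    filter_upwards [self_mem_nhdsWithin] with t ht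
    have ht : 0 < t := ht
    refine pl_exp hL hK (by fun_prop) (by fun_prop) (by fun_prop) fun x hx y hy => ?_
    simp; linarith)
  linarith

lemma subset_of_integral_infDist {n : ℕ} {L K : Set (EuclideanSpace ℝ (Fin n))} (hL : IsCompact L)
    (hLc : Convex ℝ L) (hLi : (interior L).Nonempty) (hK : IsCompact K) (hK0 : K.Nonempty)
    (h : ∫ x in L, infDist x K ≤ 0) : L ⊆ K := by
  have hc : Continuous fun x : EuclideanSpace ℝ (Fin n) => infDist x K := continuous_infDist_pt K
  have h0 : ∫ x in L, infDist x K = 0 := le_antisymm h (integral_nonneg fun x => infDist_nonneg)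
  rw [integral_eq_zero_iff_of_nonneg (fun x => infDist_nonneg) 
    (hc.continuousOn.integrableOn_compact hL)] at h0
  have h1 : volume (L \ K) = 0 := by
    have := (ae_restrict_iff' hL.measurableSet).1 h0
    refine measure_mono_null ?_ (ae_iff.1 this)
    rintro x ⟨hx, hxK⟩
    simp only [mem_ofPred_eq, Classical.not_imp]
    refine ⟨hx, fun h => hxK ?_⟩
    exact (hK.isClosed.mem_iff_infDist_zero hK0).2 h
  have h2 : interior L ⊆ K := by
    by_contra hcon
    obtain ⟨x, hx, hxK⟩ := not_subset.1 hcon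
    have ho : IsOpen (interior L \ K) := isOpen_interior.sdiff hK.isClosed
    have := ho.measure_pos volume ⟨x, hx, hxK⟩
    exact this.ne' (measure_mono_null (sdiff_subset_sdiff_left interior_subset) h1)
  calc L = closure L := hL.isClosed.closure_eq.symm
    _ = closure (interior L) := (hLc.closure_interior_eq_closure_of_nonempty_interior hLi).symm
    _ ⊆ K := closure_minimal h2 hK.isClosed

lemma eq_of_bm_eq_centered {n : ℕ} {L K : Set (EuclideanSpace ℝ (Fin n))} (hL : IsConvexBody L) 
    (hK : IsConvexBody K)
    {V : ℝ} (hV : 0 < V) (hLV : volume.real L = V) (hKV : volume.real K = V)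
    (hMV : volume.real ((1 / 2 : ℝ) • (L + K)) = V)
    (hL0 : ∀ i, ∫ x in L, x i = 0) (hK0 : ∀ i, ∫ x in K, x i = 0) : L = K := by
  obtain ⟨hLc, hLx, hLi⟩ := hL
  obtain ⟨hKc, hKx, hKi⟩ := hK
  have hM : IsCompact ((1 / 2 : ℝ) • (L + K)) := (hLc.add hKc).smul _
  have hsum : ∀ {S : Set (EuclideanSpace ℝ (Fin n))}, IsCompact S → 
      ∫ x in S, ‖x‖ ^ 2 = ∑ i, ∫ x in S, x i ^ 2 := by
    intro S hS
    rw [← integral_finsetSum]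
    · simp_rw [EuclideanSpace.real_norm_sq_eq]
    · intro i _
      exact (by fun_prop : Continuous fun x : EuclideanSpace ℝ (Fin n) => 
        x i ^ 2).continuousOn.integrableOn_compact hS
  have h2 : (∫ x in L, ‖x‖ ^ 2) + (∫ x in K, ‖x‖ ^ 2) ≤ 
      2 * ∫ x in (1 / 2 : ℝ) • (L + K), ‖x‖ ^ 2 := by
    rw [hsum hLc, hsum hKc, hsum hM, Finset.mul_sum, ← Finset.sum_add_distrib]
    exact Finset.sum_le_sum fun i _ => pl_second hLc hKc hV hLV hKV hMV i (hL0 i) (hK0 i)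
  have key : ∀ f : EuclideanSpace ℝ (Fin n) → ℝ, LipschitzWith 1 f → 
      (∫ x in L, f x) ≤ ∫ x in K, f x := by
    intro f hf
    have hfc := hf.continuous
    have h3 : ∀ d : ℝ, 0 < d → (∫ x in L, f x) - (∫ x in K, f x) ≤ d * V / 2 := by
      intro d hd
      have := pl_first hLc hKc (p := fun x => - ‖x‖ ^ 2 + d * f x) 
        (q := fun x => - ‖x‖ ^ 2 + d ^ 2 / 4) (r := fun x => - ‖x‖ ^ 2 - d * f x)
        (by fun_prop) (by fun_prop) (by fun_prop) hV hLV hKV hMV (fun x _ y _ => by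
          have h4 : f x - f y ≤ ‖x - y‖ := by
            have := hf.dist_le_mul x y
            rw [Real.dist_eq, dist_eq_norm] at this
            simpa using (le_abs_self _).trans this
          have h5 := parallelogram_law_with_norm ℝ x y
          have h6 : ‖(1 / 2 : ℝ) • (x + y)‖ = ‖x + y‖ / 2 := by
            rw [norm_smul]; norm_num; ring
          rw [h6]
          nlinarith [sq_nonneg (‖x - y‖ - d)])
      have i1 : ∀ {S : Set (EuclideanSpace ℝ (Fin n))}, IsCompact S → 
          IntegrableOn (fun x => - ‖x‖ ^ 2) S := fun hS => 
        (by fun_prop : Continuous fun x : EuclideanSpace ℝ (Fin n) => 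
          - ‖x‖ ^ 2).continuousOn.integrableOn_compact hS
      have i2 : ∀ {S : Set (EuclideanSpace ℝ (Fin n))}, IsCompact S → 
          IntegrableOn (fun x => d * f x) S := fun hS => 
        (by fun_prop : Continuous fun x : EuclideanSpace ℝ (Fin n) => 
          d * f x).continuousOn.integrableOn_compact hS
      have i3 : IntegrableOn (fun x : EuclideanSpace ℝ (Fin n) => d ^ 2 / 4) 
          ((1 / 2 : ℝ) • (L + K)) := continuousOn_const.integrableOn_compact hM
      rw [integral_add (i1 hLc) (i2 hLc), integral_sub (i1 hKc) (i2 hKc), integral_add (i1 hM) i3,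
        integral_neg, integral_neg, integral_neg, integral_const_mul, integral_const_mul, 
        setIntegral_const, hMV, smul_eq_mul] at this
      have h7 : d * ((∫ x in L, f x) - (∫ x in K, f x)) ≤ d * (d * V / 2) := by
        nlinarith
      exact le_of_mul_le_mul_left h7 hd
    by_contra hcon
    push Not at hcon
    have := h3 (((∫ x in L, f x) - (∫ x in K, f x)) / V) (div_pos (by linarith) hV)
    rw [div_mul_cancel₀ _ hV.ne'] at this
    linarith
  have nL : L.Nonempty := hLi.mono interior_subset
  have nK : K.Nonempty := hKi.mono interior_subset
  have zero : ∀ {S : Set (EuclideanSpace ℝ (Fin n))}, IsCompact S → ∫ x in S, infDist x S = 0 := by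
    intro S hS
    rw [setIntegral_congr_fun hS.measurableSet (g := fun _ => 0) 
      (fun x hx => infDist_zero_of_mem hx)]
    simp
  apply Subset.antisymm
  · apply subset_of_integral_infDist hLc hLx hLi hKc nK
    have := key (fun x => infDist x K) (lipschitz_infDist_pt K)
    rwa [zero hKc] at this
  · apply subset_of_integral_infDist hKc hKx hKi hLc nL
    have := key (fun x => - infDist x L) (lipschitz_infDist_pt L).neg
    rw [integral_neg, integral_neg, zero hLc] at this
    linarith

lemma vadd_eq_singleton_add {E : Type*} [AddCommGroup E] (c : E) (L : Set E) : 
    c +ᵥ L = {c} + L := by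
  rw [← singleton_vadd, vadd_eq_add]

lemma IsConvexBody.vadd {n : ℕ} {L : Set (EuclideanSpace ℝ (Fin n))} (hL : IsConvexBody L) 
    (c : EuclideanSpace ℝ (Fin n)) : IsConvexBody (c +ᵥ L) := by
  refine ⟨hL.1.vadd c, hL.2.1.vadd c, ?_⟩
  rw [interior_vadd]
  exact hL.2.2.image _

lemma volume_real_vadd {n : ℕ} (L : Set (EuclideanSpace ℝ (Fin n))) 
    (c : EuclideanSpace ℝ (Fin n)) : volume.real (c +ᵥ L) = volume.real L := by
  simp [measureReal_def, measure_vadd]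

lemma exists_center {n : ℕ} {L : Set (EuclideanSpace ℝ (Fin n))} (hL : IsCompact L) 
    (hV : 0 < volume.real L) : 
    ∃ c : EuclideanSpace ℝ (Fin n), ∀ i, ∫ x in c +ᵥ L, x i = 0 := by
  refine ⟨WithLp.toLp 2 fun i => - (∫ x in L, x i) / volume.real L, fun i => ?_⟩
  set c : EuclideanSpace ℝ (Fin n) := 
    WithLp.toLp 2 fun i => - (∫ x in L, x i) / volume.real L with hc
  have hmp : MeasurePreserving (fun x : EuclideanSpace ℝ (Fin n) => c + x) volume volume := 
    measurePreserving_add_left volume c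
  have : c +ᵥ L = (fun x => c + x) '' L := rfl
  rw [this, hmp.setIntegral_image_emb (measurableEmbedding_addLeft c)]
  simp only [PiLp.add_apply]
  rw [integral_add (continuousOn_const.integrableOn_compact hL) 
    ((by fun_prop : Continuous fun x : EuclideanSpace ℝ (Fin n) => 
      x i).continuousOn.integrableOn_compact hL), setIntegral_const, smul_eq_mul, hc]
  simp only
  field_simp
  ring

lemma translate_of_bm_eq {n : ℕ} {L K : Set (EuclideanSpace ℝ (Fin n))} (hL : IsConvexBody L) 
    (hK : IsConvexBody K)
    {V : ℝ} (hV : 0 < V) (hLV : volume.real L = V) (hKV : volume.real K = V)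
    (hMV : volume.real ((1 / 2 : ℝ) • (L + K)) = V) : 
    ∃ x : EuclideanSpace ℝ (Fin n), L = x +ᵥ K := by
  obtain ⟨c, hc⟩ := exists_center hL.1 (hLV ▸ hV)
  obtain ⟨d, hd⟩ := exists_center hK.1 (hKV ▸ hV)
  have e : (1 / 2 : ℝ) • ((c +ᵥ L) + (d +ᵥ K)) = ((1 / 2 : ℝ) • (c + d)) +ᵥ (1 / 2 : ℝ) • (L + K) := by
    rw [vadd_eq_singleton_add, vadd_eq_singleton_add, vadd_eq_singleton_add, add_add_add_comm, 
      singleton_add_singleton, smul_add, smul_set_singleton]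
  have := eq_of_bm_eq_centered (hL.vadd c) (hK.vadd d) hV (by rw [volume_real_vadd, hLV]) 
    (by rw [volume_real_vadd, hKV]) (by rw [e, volume_real_vadd, hMV]) hc hd
  refine ⟨- c + d, ?_⟩
  rw [add_vadd, ← this, neg_vadd_vadd]

/-! ### Segments, zonotopes and volumes of Minkowski sums -/

/-- Shorthand for Euclidean space. -/
abbrev EE (n : ℕ) := EuclideanSpace ℝ (Fin n)

/-- The segment from `-z` to `z`. -/
def seg {n : ℕ} (z : EE n) : Set (EE n) := (fun s : ℝ => s • z) '' Icc (-1) 1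

/-- The zonotope generated by a list of vectors. -/
def zon {n : ℕ} : List (EE n) → Set (EE n)
  | [] => {0}
  | z :: l => seg z + zon l

lemma ray_compact {n : ℕ} (z : EE n) (a b : ℝ) : 
    IsCompact ((fun s : ℝ => s • z) '' Icc a b) := 
  isCompact_Icc.image (by fun_prop)

lemma ray_convex {n : ℕ} (z : EE n) (a b : ℝ) : 
    Convex ℝ ((fun s : ℝ => s • z) '' Icc a b) := 
  (convex_Icc a b).linear_image (LinearMap.toSpanSingleton ℝ (EE n) z)

lemma seg_compact {n : ℕ} (z : EE n) : IsCompact (seg z) := ray_compact z _ _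
lemma seg_convex {n : ℕ} (z : EE n) : Convex ℝ (seg z) := ray_convex z _ _
lemma zero_mem_seg {n : ℕ} (z : EE n) : 0 ∈ seg z := ⟨0, by simp, by simp⟩

lemma zon_compact {n : ℕ} (l : List (EE n)) : IsCompact (zon l) := by
  induction l with
  | nil => exact isCompact_singleton
  | cons z l ih => exact (seg_compact z).add ih

lemma zon_convex {n : ℕ} (l : List (EE n)) : Convex ℝ (zon l) := by
  induction l with
  | nil => exact convex_singleton _
  | cons z l ih => exact (seg_convex z).add ih

lemma zero_mem_zon {n : ℕ} (l : List (EE n)) : 0 ∈ zon l := by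
  induction l with
  | nil => exact mem_singleton _
  | cons z l ih => exact ⟨0, zero_mem_seg z, 0, ih, by simp⟩

lemma zon_append {n : ℕ} (l m : List (EE n)) : zon (l ++ m) = zon l + zon m := by
  induction l with
  | nil => simp [zon]
  | cons z l ih => simp [zon, ih, add_assoc]

lemma ray_diff {n : ℕ} {M : Set (EE n)} (hM : Convex ℝ M) (z : EE n) {a b : ℝ} (ha : 0 ≤ a) :
    (M + (fun s : ℝ => s • z) '' Icc 0 (a + b)) \ (M + (fun s : ℝ => s • z) '' Icc 0 a) = 
      (a • z) +ᵥ ((M + (fun s : ℝ => s • z) '' Icc 0 b) \ M) := by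
  ext x
  constructor
  · rintro ⟨⟨m, hm, _, ⟨s, hs, rfl⟩, rfl⟩, hx⟩
    dsimp only at hx ⊢
    have hsa : a < s := by
      by_contra hc
      exact hx ⟨m, hm, _, ⟨s, ⟨hs.1, not_lt.1 hc⟩, rfl⟩, rfl⟩
    refine ⟨m + (s - a) • z, ⟨⟨m, hm, _, ⟨s - a, ⟨by linarith, by linarith [hs.2]⟩, rfl⟩, rfl⟩, 
      fun hmem => hx ?_⟩, by simp only [vadd_eq_add]; module⟩
    exact ⟨_, hmem, _, ⟨a, ⟨ha, le_rfl⟩, rfl⟩, by dsimp only; module⟩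
  · rintro ⟨_, ⟨⟨m, hm, _, ⟨s, hs, rfl⟩, rfl⟩, hx⟩, rfl⟩
    dsimp only at hx ⊢
    refine ⟨⟨m, hm, _, ⟨a + s, ⟨by linarith [hs.1], by linarith [hs.2]⟩, rfl⟩, 
      by simp only [vadd_eq_add]; module⟩, ?_⟩
    rintro ⟨m', hm', _, ⟨t, ht, rfl⟩, h⟩
    simp only [vadd_eq_add] at h
    apply hx
    have hm'e : m' = m + (s + (a - t)) • z := by
      rw [← sub_eq_zero] at h ⊢
      rw [← h]; module
    rcases eq_or_lt_of_le hs.1 with h0 | h0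
    · rw [← h0]; simpa using hm
    have hpos : 0 < s + (a - t) := by linarith [ht.2]
    have := hM hm hm' (a := (a - t) / (s + (a - t))) (b := s / (s + (a - t))) 
      (div_nonneg (by linarith [ht.2]) hpos.le) (by positivity) (by field_simp; ring)
    convert this using 1
    rw [hm'e, smul_add, smul_smul, div_mul_cancel₀ _ hpos.ne', ← add_assoc, ← add_smul,
      ← add_div, show (a - t) + s = s + (a - t) by ring, div_self hpos.ne', one_smul]

lemma subset_add_right' {n : ℕ} {M C : Set (EE n)} (h : 0 ∈ C) : M ⊆ M + C := 
  fun x hx => ⟨x, hx, 0, h, by simp⟩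

lemma ray_vol_add {n : ℕ} {M : Set (EE n)} (hM : Convex ℝ M) (hMc : IsCompact M) (z : EE n) 
    {a b : ℝ} (ha : 0 ≤ a) (hb : 0 ≤ b) :
    volume.real (M + (fun s : ℝ => s • z) '' Icc 0 (a + b)) - 
      volume.real (M + (fun s : ℝ => s • z) '' Icc 0 a) = 
      volume.real (M + (fun s : ℝ => s • z) '' Icc 0 b) - volume.real M := by
  have c1 := hMc.add (ray_compact z 0 a)
  have c2 := hMc.add (ray_compact z 0 b)
  have c3 := hMc.add (ray_compact z 0 (a+b))
  have hsub : M + (fun s : ℝ => s • z) '' Icc 0 a ⊆ M + (fun s : ℝ => s • z) '' Icc 0 (a + b) :=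
    Set.add_subset_add_left (image_mono (Icc_subset_Icc_right (by linarith)))
  have hsub2 : M ⊆ M + (fun s : ℝ => s • z) '' Icc 0 b :=
    subset_add_right' ⟨0, ⟨le_rfl, hb⟩, by simp⟩
  rw [← measureReal_sdiff hsub c1.measurableSet c3.measure_ne_top, 
    ← measureReal_sdiff hsub2 hMc.measurableSet 
      c2.measure_ne_top, ray_diff hM z ha, volume_real_vadd]

lemma ray_vol_nat {n : ℕ} {M : Set (EE n)} (hM : Convex ℝ M) (hMc : IsCompact M) (z : EE n) 
    {b : ℝ} (hb : 0 ≤ b) (k : ℕ) :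
    volume.real (M + (fun s : ℝ => s • z) '' Icc 0 (k * b)) - volume.real M = 
      k * (volume.real (M + (fun s : ℝ => s • z) '' Icc 0 b) - volume.real M) := by
  induction k with
  | zero => simp
  | succ k ih =>
    have := ray_vol_add hM hMc z (a := k * b) (by positivity) hb
    have e : ((k + 1 : ℕ) : ℝ) * b = k * b + b := by push_cast; ring
    rw [e]
    push_cast
    linarith

lemma seg_eq {n : ℕ} (z : EE n) {c : ℝ} (hc : 0 ≤ c) : 
    c • seg z = (-(c • z)) +ᵥ ((fun s : ℝ => s • ((2 : ℝ) • z)) '' Icc 0 c) := by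
  ext x
  constructor
  · rintro ⟨_, ⟨s, hs, rfl⟩, rfl⟩
    refine ⟨_, ⟨c * (s + 1) / 2, ⟨by nlinarith [hs.1], by nlinarith [hs.2]⟩, rfl⟩, ?_⟩
    simp only [vadd_eq_add]; module
  · rintro ⟨_, ⟨s, hs, rfl⟩, rfl⟩
    rcases eq_or_lt_of_le hc with h0 | h0
    · have : s = 0 := le_antisymm (by linarith [hs.2]) hs.1
      exact ⟨0, zero_mem_seg z, by simp [← h0, this]⟩
    · refine ⟨_, ⟨2 * s / c - 1, ⟨by have := div_nonneg hs.1 hc; rw [mul_div_assoc]; linarith, 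
        by have := (div_le_one h0).2 hs.2; rw [mul_div_assoc]; linarith⟩, rfl⟩, ?_⟩
      simp only [vadd_eq_add]
      rw [smul_smul, mul_sub, mul_div_cancel₀ _ h0.ne']
      module

lemma add_vadd_set {n : ℕ} (M C : Set (EE n)) (w : EE n) : M + (w +ᵥ C) = w +ᵥ (M + C) := by
  rw [vadd_eq_singleton_add, vadd_eq_singleton_add, add_left_comm]

/-- The volume increment when adding a segment. -/
noncomputable def PP {n : ℕ} (L : Set (EE n)) (z : EE n) : ℝ := 
  volume.real (L + seg z) - volume.real L

lemma vol_seg {n : ℕ} {M : Set (EE n)} (hM : Convex ℝ M) (hMc : IsCompact M) (z : EE n) 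
    {N : ℕ} (hN : 0 < N) : 
    volume.real (M + (1 / N : ℝ) • seg z) - volume.real M = 1 / N * PP M z := by
  have h1 : seg z = (1 : ℝ) • seg z := by simp
  have hN' : (0:ℝ) < N := by exact_mod_cast hN
  rw [PP, h1, smul_smul, seg_eq z (by positivity), seg_eq z (by positivity), add_vadd_set, 
    add_vadd_set, volume_real_vadd, volume_real_vadd]
  have := ray_vol_nat hM hMc ((2:ℝ) • z) (b := 1 / N) (by positivity) N
  rw [mul_one_div_cancel hN'.ne'] at this
  rw [this]
  field_simp

lemma PP_smul {n : ℕ} {M : Set (EE n)} (hM : Convex ℝ M) (hMc : IsCompact M) (z : EE n) 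
    {N : ℕ} (hN : 0 < N) : PP M ((1 / N : ℝ) • z) = 1 / N * PP M z := by
  rw [← vol_seg hM hMc z hN, PP]
  congr 3
  ext x
  simp only [seg, mem_smul_set, mem_image]
  constructor
  · rintro ⟨s, hs, rfl⟩
    exact ⟨_, ⟨s, hs, rfl⟩, by module⟩
  · rintro ⟨_, ⟨s, hs, rfl⟩, rfl⟩
    exact ⟨s, hs, by module⟩

lemma hull_eq {n : ℕ} {K : Set (EE n)} (hK : Convex ℝ K) (t : EE n) : 
    convexHull ℝ (K ∪ (t +ᵥ K)) = K + (fun s : ℝ => s • t) '' Icc 0 1 := by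
  apply Subset.antisymm
  · refine convexHull_min ?_ (hK.add (ray_convex t 0 1))
    rintro x (hx | ⟨y, hy, rfl⟩)
    · exact ⟨x, hx, 0, ⟨0, by simp, by simp⟩, by simp⟩
    · exact ⟨y, hy, t, ⟨1, by simp, by simp⟩, by simp [add_comm]⟩
  · rintro _ ⟨m, hm, _, ⟨s, hs, rfl⟩, rfl⟩
    have := convex_convexHull ℝ (K ∪ (t +ᵥ K)) (subset_convexHull ℝ _ (Or.inl hm)) 
      (subset_convexHull ℝ _ (Or.inr ⟨m, hm, rfl⟩)) (a := 1 - s) (b := s) (by linarith [hs.2]) 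
      hs.1 (by ring)
    convert this using 1
    simp only [vadd_eq_add]
    module

lemma convexHullFn_zero {n : ℕ} {K : Set (EE n)} (hK : Convex ℝ K) : 
    convexHullFn K 0 = volume.real K := by
  simp [convexHullFn, hK.convexHull_eq, measureReal_def]

lemma convexHullFn_two {n : ℕ} {K : Set (EE n)} (hK : Convex ℝ K) (z : EE n) : 
    convexHullFn K ((2:ℝ) • z) = volume.real (K + seg z) := by
  have h1 : seg z = (1 : ℝ) • seg z := by simp
  rw [convexHullFn, hull_eq hK, h1, seg_eq z zero_le_one, add_vadd_set, volume_real_vadd,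
    measureReal_def]

lemma PP_eq {n : ℕ} {K : Set (EE n)} (hK : Convex ℝ K) (z : EE n) : 
    PP K z = convexHullFn K ((2:ℝ) • z) - convexHullFn K 0 := by
  rw [convexHullFn_zero hK, convexHullFn_two hK, PP]

lemma vol_lim {n : ℕ} {L C : Set (EE n)} (hL : IsCompact L) (hC : IsCompact C) (h0 : 0 ∈ C) : 
    Filter.Tendsto (fun N : ℕ => volume.real (L + (1 / N : ℝ) • C)) Filter.atTop 
      (nhds (volume.real L)) := by
  obtain ⟨R, hR⟩ := hC.isBounded.exists_norm_le
  have hR0 : 0 ≤ R := by simpa using hR 0 h0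
  have t1 : Filter.Tendsto (fun N : ℕ => R / (N:ℝ)) Filter.atTop (nhds 0) := 
    tendsto_const_div_atTop_nhds_zero_nat R
  have t2 := (tendsto_measure_cthickening_of_isCompact (μ := volume) hL).comp t1
  have t3 := (ENNReal.tendsto_toReal hL.measure_ne_top).comp t2
  refine tendsto_of_tendsto_of_tendsto_of_le_of_le tendsto_const_nhds t3 (fun N => ?_) (fun N => ?_)
  · exact measureReal_mono (subset_add_right' ⟨0, h0, by simp⟩) 
      (hL.add (hC.smul _)).measure_ne_top
  · refine ENNReal.toReal_mono (hL.cthickening).measure_ne_top (measure_mono ?_)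
    rintro _ ⟨x, hx, _, ⟨c, hc, rfl⟩, rfl⟩
    refine mem_cthickening_of_dist_le _ x _ _ hx ?_
    simp only [dist_eq_norm, add_sub_cancel_left, norm_smul]
    rw [Real.norm_of_nonneg (by positivity)]
    calc 1 / (N:ℝ) * ‖c‖ ≤ 1 / (N:ℝ) * R := by gcongr; exact hR c hc
      _ = R / N := by ring

lemma deriv_seg {n : ℕ} {L M : Set (EE n)} (hL : IsCompact L) (hLc : Convex ℝ L) 
    (hM : IsCompact M) (hMc : Convex ℝ M) (h0 : 0 ∈ M) (z : EE n) : 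
    Filter.Tendsto (fun N : ℕ => N * (volume.real (L + (1 / N : ℝ) • (M + seg z)) - 
      volume.real (L + (1 / N : ℝ) • M))) Filter.atTop (nhds (PP L z)) := by
  have h1 := (vol_lim (hL.add (seg_compact z)) hM h0).sub (vol_lim hL hM h0)
  refine h1.congr' ?_
  filter_upwards [Filter.eventually_gt_atTop 0] with N hN
  have hN' : (0:ℝ) < N := by exact_mod_cast hN
  rw [smul_add, ← add_assoc, vol_seg (hLc.add (hMc.smul _)) (hL.add (hM.smul _)) z hN, PP,
    add_right_comm]
  field_simp

lemma deriv_zon {n : ℕ} {L M : Set (EE n)} (hL : IsCompact L) (hLc : Convex ℝ L) 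
    (hM : IsCompact M) (hMc : Convex ℝ M) (h0 : 0 ∈ M) (l : List (EE n)) : 
    Filter.Tendsto (fun N : ℕ => N * (volume.real (L + (1 / N : ℝ) • (M + zon l)) - 
      volume.real (L + (1 / N : ℝ) • M))) Filter.atTop (nhds (l.map (PP L)).sum) := by
  induction l with
  | nil => simp [zon]
  | cons z l ih =>
    have h1 := deriv_seg hL hLc (hM.add (zon_compact l)) (hMc.add (zon_convex l)) 
      ⟨0, h0, 0, zero_mem_zon l, by simp⟩ z
    have := h1.add ih
    simp only [List.map_cons, List.sum_cons]
    refine this.congr fun N => ?_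
    rw [zon, add_comm (seg z), ← add_assoc M]
    ring

lemma deriv_self {n : ℕ} {K : Set (EE n)} (hKc : Convex ℝ K) : 
    Filter.Tendsto (fun N : ℕ => N * (volume.real (K + (1 / N : ℝ) • K) - volume.real K)) 
      Filter.atTop (nhds (n * volume.real K)) := by
  have e : ∀ N : ℕ, volume.real (K + (1 / N : ℝ) • K) = (1 + 1 / N : ℝ) ^ n * volume.real K := by
    intro N
    have : K + (1 / N : ℝ) • K = (1 + 1 / N : ℝ) • K := by
      rw [hKc.add_smul (by positivity) (by positivity), one_smul]
    rw [this, measureReal_def, Measure.addHaar_smul, ENNReal.toReal_mul, 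
      ENNReal.toReal_ofReal (by positivity), measureReal_def, finrank_euclideanSpace_fin, 
      abs_of_nonneg (by positivity)]
  have hd : HasDerivAt (fun x : ℝ => (1 + x) ^ n) n 0 := by
    have := ((hasDerivAt_id (0:ℝ)).const_add 1).fun_pow n
    simpa using this
  have h1 := hd.tendsto_slope_zero
  have h2 : Filter.Tendsto (fun N : ℕ => (1 / N : ℝ)) Filter.atTop (nhdsWithin 0 {0}ᶜ) := by
    refine tendsto_nhdsWithin_iff.2 ⟨tendsto_one_div_atTop_nhds_zero_nat, ?_⟩
    filter_upwards [Filter.eventually_gt_atTop 0] with N hN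
    have hN' : (0:ℝ) < N := by exact_mod_cast hN
    simp [hN'.ne']
  have h3 := (h1.comp h2).mul_const (volume.real K)
  refine h3.congr fun N => ?_
  rw [e]
  simp
  ring

/-! ### Density of the span of absolute values of linear functionals -/

open ProbabilityTheory in
lemma hasDerivAt_pdf (x : ℝ) : 
    HasDerivAt (fun x => -gaussianPDFReal 0 1 x) (gaussianPDFReal 0 1 x * x) x := by
  unfold gaussianPDFReal
  have h : HasDerivAt (fun x : ℝ => -(x - 0) ^ 2 / (2 * ((1 : NNReal) : ℝ))) (-x) x := by
    have := (((hasDerivAt_id x).fun_pow 2).fun_neg).div_const (2 : ℝ)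
    simp only [sub_zero, NNReal.coe_one, mul_one]
    refine this.congr_deriv ?_
    simp
    ring
  have := (h.exp.const_mul ((√(2 * Real.pi * ((1 : NNReal) : ℝ)))⁻¹)).fun_neg
  refine this.congr_deriv ?_
  simp only [sub_zero, NNReal.coe_one, mul_one]
  ring

open ProbabilityTheory in
lemma pdf_mul_integrable : Integrable (fun x : ℝ => gaussianPDFReal 0 1 x * x) := by
  have h := (memLp_id_gaussianReal (μ := 0) (v := 1) 1)
  have h2 := memLp_one_iff_integrable.1 h
  rw [gaussianReal_of_var_ne_zero _ one_ne_zero] at h2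
  have := (integrable_withDensity_iff_integrable_smul' (measurable_gaussianPDF 0 1) 
    (Filter.Eventually.of_forall fun x => gaussianPDF_lt_top)).1 h2
  simpa [gaussianPDF, ENNReal.toReal_ofReal, gaussianPDFReal_nonneg] using this

open ProbabilityTheory in
lemma pdf_tendsto_top : Filter.Tendsto (fun x => -gaussianPDFReal 0 1 x) Filter.atTop (nhds 0) := by
  unfold gaussianPDFReal
  have h : Filter.Tendsto (fun x : ℝ => -(x - 0) ^ 2 / (2 * ((1 : NNReal) : ℝ))) Filter.atTop 
      Filter.atBot := by
    have := (Filter.tendsto_neg_atTop_atBot.comp (Filter.tendsto_pow_atTop (α := ℝ) two_ne_zero))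
    have := this.atBot_div_const (r := 2) two_pos
    simpa using this
  have := ((Real.tendsto_exp_atBot.comp h).const_mul 
    ((√(2 * Real.pi * ((1 : NNReal) : ℝ)))⁻¹)).neg
  simpa using this

lemma measurable_sgn (s a : ℝ) : Measurable (fun x : ℝ => (SignType.sign (s + a * x) : ℝ)) := by
  have h : Measurable (fun y : ℝ => (SignType.sign y : ℝ)) := by
    have : (fun y : ℝ => (SignType.sign y : ℝ)) = 
        fun y => if 0 < y then 1 else if y < 0 then -1 else 0 := by
      ext y
      rw [sign_apply]
      split_ifs <;> simp
    rw [this]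
    exact Measurable.ite measurableSet_Ioi measurable_const 
      (Measurable.ite measurableSet_Iio measurable_const measurable_const)
  exact h.comp (by fun_prop)

open ProbabilityTheory in
lemma pdf_tendsto_bot : Filter.Tendsto (fun x => -gaussianPDFReal 0 1 x) Filter.atBot (nhds 0) := by
  have := pdf_tendsto_top.comp Filter.tendsto_neg_atBot_atTop
  refine this.congr fun x => ?_
  simp [gaussianPDFReal]

open ProbabilityTheory in
lemma integral_sign (s : ℝ) {a : ℝ} (ha : 0 < a) : 
    ∫ x, ((SignType.sign (s + a * x) : ℝ) * x) ∂(gaussianReal 0 1) = 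
      2 * gaussianPDFReal 0 1 (s / a) := by
  rw [integral_gaussianReal_eq_integral_smul one_ne_zero]
  have hI := integral_Ioi_of_hasDerivAt_of_tendsto' (a := -s / a) 
    (fun x _ => hasDerivAt_pdf x) pdf_mul_integrable.integrableOn pdf_tendsto_top
  have hJ := integral_Iic_of_hasDerivAt_of_tendsto' (a := -s / a) 
    (fun x _ => hasDerivAt_pdf x) pdf_mul_integrable.integrableOn pdf_tendsto_bot
  have he : gaussianPDFReal 0 1 (-s / a) = gaussianPDFReal 0 1 (s / a) := by
    simp [gaussianPDFReal, neg_div]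
  have e1 : ∫ x in Ioi (-s / a), gaussianPDFReal 0 1 x • ((SignType.sign (s + a * x) : ℝ) * x) = 
      gaussianPDFReal 0 1 (s / a) := by
    rw [← he, ← zero_add (gaussianPDFReal 0 1 (-s / a)), ← sub_neg_eq_add, ← hI]
    refine setIntegral_congr_fun measurableSet_Ioi fun x hx => ?_
    have : 0 < s + a * x := by
      have := (div_lt_iff₀ ha).1 (mem_Ioi.1 hx)
      linarith
    simp [sign_pos this]
  have e2 : ∫ x in Iio (-s / a), gaussianPDFReal 0 1 x • ((SignType.sign (s + a * x) : ℝ) * x) = 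
      gaussianPDFReal 0 1 (s / a) := by
    rw [← he, ← neg_neg (gaussianPDFReal 0 1 (-s / a)), 
      ← sub_zero (- (gaussianPDFReal 0 1 (-s / a))), ← hJ, ← integral_neg, integral_Iic_eq_integral_Iio]
    refine setIntegral_congr_fun measurableSet_Iio fun x hx => ?_
    have : s + a * x < 0 := by
      have := (lt_div_iff₀ ha).1 (mem_Iio.1 hx)
      linarith
    simp [sign_neg this]
  have hintegr : Integrable 
      (fun x => gaussianPDFReal 0 1 x • ((SignType.sign (s + a * x) : ℝ) * x)) := by
    have hm : Measurable (fun x : ℝ => (SignType.sign (s + a * x) : ℝ)) := measurable_sgn s a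
    refine pdf_mul_integrable.norm.mono' ?_ (Filter.Eventually.of_forall fun x => ?_)
    · exact ((measurable_gaussianPDFReal 0 1).mul (hm.mul measurable_id)).aestronglyMeasurable
    · simp only [smul_eq_mul, norm_mul]
      rcases lt_trichotomy 0 (s + a * x) with h | h | h
      · simp [sign_pos h]
      · simp [← h]; positivity
      · simp [sign_neg h]
  rw [← integral_add_compl measurableSet_Iio hintegr, compl_Iio, integral_Ici_eq_integral_Ioi, e1, e2]
  ring

open ProbabilityTheory in
lemma gauss_deriv (s : ℝ) {a : ℝ} (ha : 0 < a) : 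
    HasDerivAt (fun a => ∫ x, |s + a * x| ∂(gaussianReal 0 1)) 
      (2 * gaussianPDFReal 0 1 (s / a)) a := by
  rw [← integral_sign s ha]
  have hid : Integrable (fun x : ℝ => x) (gaussianReal 0 1) := 
    memLp_one_iff_integrable.1 (memLp_id_gaussianReal (μ := 0) (v := 1) 1)
  have hna : NullSingletonClass (gaussianReal 0 1) := nullSingletonClass_gaussianReal one_ne_zero
  have hm : Measurable (fun x : ℝ => (SignType.sign (s + a * x) : ℝ)) := measurable_sgn s a
  refine (hasDerivAt_integral_of_dominated_loc_of_lip (bound := fun x => x) 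
    (F := fun a x => |s + a * x|) (s := univ) Filter.univ_mem 
    (Filter.Eventually.of_forall fun b => by fun_prop) ?_ (hm.mul measurable_id).aestronglyMeasurable ?_ hid ?_).2
  · exact ((integrable_const s).add (hid.const_mul a)).abs
  · refine Filter.Eventually.of_forall fun x => ?_
    refine LipschitzOnWith.of_dist_le_mul fun b _ c _ => ?_
    simp only [Real.dist_eq, Real.coe_nnabs]
    refine (abs_abs_sub_abs_le_abs_sub _ _).trans ?_
    rw [← abs_mul]
    apply le_of_eq; congr 1; ring
  · have : ∀ᵐ x ∂(gaussianReal 0 1), x ≠ -s / a := by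
      simp [ae_iff]
    filter_upwards [this] with x hx
    have hne : s + a * x ≠ 0 := by
      intro h; apply hx; field_simp; linarith
    have := (hasDerivAt_abs hne).comp a (((hasDerivAt_id a).mul_const x).const_add s)
    exact HasDerivAt.congr_deriv this (by simp)

/-- Absolute values of linear functionals, as continuous functions on the sphere. -/
noncomputable def ab {n : ℕ} : C(EE n, C(sphere (0 : EE n) 1, ℝ)) := 
  ContinuousMap.curry ⟨fun p => |inner ℝ p.1 (p.2 : EE n)|, by fun_prop⟩

lemma ab_apply {n : ℕ} (y : EE n) (v : sphere (0 : EE n) 1) : ab y v = |inner ℝ y (v : EE n)| := rfl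

/-- The closed span of `ab`. -/
noncomputable def AA (n : ℕ) : Submodule ℝ C(sphere (0 : EE n) 1, ℝ) := 
  (Submodule.span ℝ (range ab)).topologicalClosure

lemma AA_closed (n : ℕ) : IsClosed (AA n : Set C(sphere (0 : EE n) 1, ℝ)) := 
  Submodule.isClosed_topologicalClosure _

lemma ab_mem {n : ℕ} (y : EE n) : ab y ∈ AA n := 
  Submodule.le_topologicalClosure _ (Submodule.subset_span ⟨y, rfl⟩)

lemma ab_norm {n : ℕ} (y : EE n) : ‖ab y‖ ≤ ‖y‖ := by
  rw [ContinuousMap.norm_le _ (norm_nonneg _)]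
  intro v
  rw [ab_apply, Real.norm_eq_abs, abs_abs]
  have := abs_real_inner_le_norm y (v : EE n)
  simpa using this

open ProbabilityTheory in
lemma marginal {n : ℕ} (v : sphere (0 : EE n) 1) : 
    (stdGaussian (EE n)).map (fun x => inner ℝ (v : EE n) x) = gaussianReal 0 1 := by
  have h := IsGaussian.map_eq_gaussianReal (μ := stdGaussian (EE n)) (innerSL ℝ (v : EE n))
  rw [integral_strongDual_stdGaussian, variance_dual_stdGaussian, innerSL_apply_norm] at h
  simpa using h

open ProbabilityTheory in
/-- Gaussian averages of `ab`. -/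
noncomputable def gav {n : ℕ} (y : EE n) (a : ℝ) : C(sphere (0 : EE n) 1, ℝ) := 
  ∫ x, ab (y + a • x) ∂(stdGaussian (EE n))

open ProbabilityTheory in
lemma gav_int {n : ℕ} (y : EE n) (a : ℝ) : 
    Integrable (fun x => ab (y + a • x)) (stdGaussian (EE n)) := by
  have hid : Integrable (fun x : EE n => x) (stdGaussian (EE n)) := IsGaussian.integrable_id
  have h1 : Integrable (fun x : EE n => y + a • x) (stdGaussian (EE n)) := 
    (integrable_const y).add (hid.smul a)
  refine h1.norm.mono' (Continuous.aestronglyMeasurable (by fun_prop)) 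
    (Filter.Eventually.of_forall fun x => ab_norm _)

lemma gav_mem {n : ℕ} (y : EE n) (a : ℝ) : gav y a ∈ AA n := 
  (AA n).convex.integral_mem (AA_closed n) (Filter.Eventually.of_forall fun x => ab_mem _) 
    (gav_int y a)

open ProbabilityTheory in
lemma gav_apply {n : ℕ} (y : EE n) (a : ℝ) (v : sphere (0 : EE n) 1) : 
    gav y a v = ∫ x, |inner ℝ y (v : EE n) + a * x| ∂(gaussianReal 0 1) := by
  rw [gav, ContinuousMap.integral_apply (gav_int y a), ← marginal v, integral_map]
  · simp only [ab_apply, inner_add_left, inner_smul_left, real_inner_comm]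
    simp
  · fun_prop
  · fun_prop

open ProbabilityTheory in
/-- Gaussian functions of linear functionals. -/
noncomputable def gfn {n : ℕ} (y : EE n) : C(ℝ, C(sphere (0 : EE n) 1, ℝ)) := 
  ContinuousMap.curry ⟨fun p => 2 * gaussianPDFReal 0 1 (inner ℝ y (p.2 : EE n) / max p.1 (1/2)), by 
    unfold gaussianPDFReal
    have : ∀ p : ℝ × sphere (0 : EE n) 1, max p.1 (1/2) ≠ 0 := fun p => 
      (lt_of_lt_of_le one_half_pos (le_max_right _ _)).ne'
    have hd : Continuous (fun p : ℝ × sphere (0 : EE n) 1 => 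
        inner ℝ y (p.2 : EE n) / max p.1 (1/2)) := 
      Continuous.div (by fun_prop) (by fun_prop) this
    fun_prop⟩

lemma gav_hasDerivAt {n : ℕ} (y : EE n) : HasDerivAt (gav y) (gfn y 1) 1 := by
  have h1 : HasDerivAt (fun b => gav y (1/2) + ∫ a in (1/2)..b, gfn y a) (gfn y 1) 1 := 
    ((intervalIntegral.integral_hasDerivAt_right ((gfn y).continuous.intervalIntegrable _ _) 
      ((gfn y).continuous.stronglyMeasurableAtFilter _ _) (gfn y).continuous.continuousAt)).const_add _
  refine h1.congr_of_eventuallyEq ?_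
  filter_upwards [lt_mem_nhds (show (1/2 : ℝ) < 1 by norm_num)] with b hb
  ext v
  have h2 : (∫ a in (1/2)..b, gfn y a) v = ∫ a in (1/2)..b, gfn y a v := by
    rw [intervalIntegral.integral_of_le hb.le, intervalIntegral.integral_of_le hb.le, 
      ContinuousMap.integral_apply]
    exact ((gfn y).continuous.intervalIntegrable (1/2) b).1
  rw [ContinuousMap.add_apply, h2]
  have h3 := intervalIntegral.integral_eq_sub_of_hasDerivAt (a := 1/2) (b := b) 
    (f := fun a => gav y a v) (f' := fun a => gfn y a v) ?_ ?_
  · rw [h3]; ring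
  · intro a ha
    rw [uIcc_of_le hb.le] at ha
    have := gauss_deriv (inner ℝ y (v : EE n)) (lt_of_lt_of_le one_half_pos ha.1)
    simp only [gav_apply]
    refine this.congr_deriv ?_
    change _ = 2 * ProbabilityTheory.gaussianPDFReal 0 1 (inner ℝ y (v : EE n) / max a (1/2))
    rw [max_eq_left ha.1]
  · refine Continuous.intervalIntegrable ?_ _ _
    exact (ContinuousEvalConst.continuous_eval_const v).comp (gfn y).continuous

lemma gfn_mem {n : ℕ} (y : EE n) : gfn y 1 ∈ AA n := by
  have h := (gav_hasDerivAt y).tendsto_slope_zero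
  refine (AA_closed n).mem_of_tendsto h (Filter.Eventually.of_forall fun t => ?_)
  exact (AA n).smul_mem _ ((AA n).sub_mem (gav_mem _ _) (gav_mem _ _))

open ProbabilityTheory in
lemma gexp_mem {n : ℕ} (y : EE n) (f : C(sphere (0 : EE n) 1, ℝ)) 
    (hf : ∀ v, f v = Real.exp (-(inner ℝ y (v : EE n)) ^ 2)) : f ∈ AA n := by
  have : f = (√(2 * Real.pi) / 2) • gfn (√2 • y) 1 := by
    ext v
    rw [hf]
    have h2 : √(2 * Real.pi) ≠ 0 := by positivity
    simp [gfn, gaussianPDFReal, inner_smul_left, mul_pow, max_eq_left (show (2:ℝ)⁻¹ ≤ 1 by norm_num)]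
    field_simp
  rw [this]
  exact (AA n).smul_mem _ (gfn_mem _)

lemma sw_aux {X : Type*} [TopologicalSpace X] [CompactSpace X] (S : Set C(X, ℝ)) (h1 : 1 ∈ S) 
    (hmul : ∀ f ∈ S, ∀ g ∈ S, f * g ∈ Submodule.span ℝ S) 
    (hsep : ∀ x y : X, x ≠ y → ∃ f ∈ S, f x ≠ f y) (M : Submodule ℝ C(X, ℝ)) 
    (hM : IsClosed (M : Set C(X, ℝ))) (hS : S ⊆ M) (f : C(X, ℝ)) : f ∈ M := by
  have hle : Submodule.span ℝ S * Submodule.span ℝ S ≤ Submodule.span ℝ S := by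
    rw [Submodule.span_mul_span, Submodule.span_le]
    rintro _ ⟨f, hf, g, hg, rfl⟩
    exact hmul f hf g hg
  let B := (Submodule.span ℝ S).toSubalgebra (Submodule.subset_span h1) 
    (fun f g hf hg => hle (Submodule.mul_mem_mul hf hg))
  have hB : B.SeparatesPoints := by
    intro x y hxy
    obtain ⟨f, hf, hne⟩ := hsep x y hxy
    exact ⟨f, ⟨f, Submodule.subset_span hf, rfl⟩, hne⟩
  have h := ContinuousMap.continuousMap_mem_subalgebra_closure_of_separatesPoints B hB f
  have h2 : closure (B : Set C(X, ℝ)) ⊆ M := by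
    refine closure_minimal ?_ hM
    exact (Submodule.span_le.2 hS : Submodule.span ℝ S ≤ M)
  exact h2 h

lemma cos_mem {n : ℕ} (y : EE n) (f : C(sphere (0 : EE n) 1, ℝ)) 
    (hf : ∀ v, f v = Real.cos (inner ℝ y (v : EE n))) : f ∈ AA n := by
  have hb : ∀ v : sphere (0 : EE n) 1, (inner ℝ y (v : EE n)) ^ 2 ∈ Icc 0 (‖y‖ ^ 2) := by
    intro v
    refine ⟨sq_nonneg _, sq_le_sq' ?_ ?_⟩
    · have := neg_le_of_abs_le (abs_real_inner_le_norm y (v : EE n))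
      simpa using this
    · have := real_inner_le_norm y (v : EE n)
      simpa using this
  let j : C(sphere (0 : EE n) 1, Icc (0:ℝ) (‖y‖ ^ 2)) := ⟨fun v => ⟨_, hb v⟩, by fun_prop⟩
  let P : C(Icc (0:ℝ) (‖y‖ ^ 2), ℝ) →ₗ[ℝ] C(sphere (0 : EE n) 1, ℝ) := 
    (ContinuousMap.compRightAlgHom ℝ ℝ j).toLinearMap
  have hPc : Continuous P := ContinuousMap.compRightAlgHom_continuous (R := ℝ) (A := ℝ) j
  have hP : ∀ g v, P g v = g (j v) := fun g v => rfl
  let S : Set C(Icc (0:ℝ) (‖y‖ ^ 2), ℝ) := 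
    {g | ∃ a : ℝ, 0 ≤ a ∧ ∀ t, g t = Real.exp (-a * (t : ℝ))}
  have key := sw_aux S ⟨0, le_rfl, by simp⟩ ?_ ?_ ((AA n).comap P) 
    ((AA_closed n).preimage hPc) ?_ ⟨fun t => Real.cos (√(t : ℝ)), by fun_prop⟩
  · have : f = P ⟨fun t => Real.cos (√(t : ℝ)), by fun_prop⟩ := by
      ext v
      rw [hf, hP]
      simp only [ContinuousMap.coe_mk, j]
      rw [Real.sqrt_sq_eq_abs, Real.cos_abs]
    rw [this]
    exact key
  · rintro g ⟨a, ha, hg⟩ g' ⟨b, hb, hg'⟩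
    refine Submodule.subset_span ⟨a + b, by positivity, fun t => ?_⟩
    rw [ContinuousMap.mul_apply, hg, hg', ← Real.exp_add]
    congr 1; ring
  · intro s t hst
    refine ⟨⟨fun t => Real.exp (-1 * (t : ℝ)), by fun_prop⟩, ⟨1, by norm_num, fun t => rfl⟩, ?_⟩
    simp only [ContinuousMap.coe_mk, ne_eq, Real.exp_eq_exp]
    intro h
    exact hst (Subtype.ext (by linarith))
  · rintro g ⟨a, ha, hg⟩
    refine gexp_mem (√a • y) _ fun v => ?_
    rw [hP, hg]
    simp only [ContinuousMap.coe_mk, j, inner_smul_left, mul_pow]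
    simp [Real.sq_sqrt ha]

/-- Cosine functions. -/
noncomputable def cs {n : ℕ} (y : EE n) (θ : ℝ) : C(sphere (0 : EE n) 1, ℝ) := 
  ⟨fun v => Real.cos (inner ℝ y (v : EE n) + θ), by fun_prop⟩

/-- The antipodal map. -/
noncomputable def ant (n : ℕ) : C(sphere (0 : EE n) 1, sphere (0 : EE n) 1) := 
  ⟨fun v => -v, continuous_neg⟩

lemma even_mem {n : ℕ} (f : C(sphere (0 : EE n) 1, ℝ)) (hf : ∀ v, f (-v) = f v) : f ∈ AA n := by
  let P : C(sphere (0 : EE n) 1, ℝ) →ₗ[ℝ] C(sphere (0 : EE n) 1, ℝ) := 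
    LinearMap.id + (ContinuousMap.compRightAlgHom ℝ ℝ (ant n)).toLinearMap
  have hPc : Continuous P := 
    continuous_id.add (ContinuousMap.compRightAlgHom_continuous (R := ℝ) (A := ℝ) (ant n))
  have hP : ∀ g v, P g v = g v + g (-v) := fun g v => rfl
  have key := sw_aux {g | ∃ y θ, g = cs (n := n) y θ} ⟨0, 0, by ext; simp [cs]⟩ ?_ ?_ 
    ((AA n).comap P) ((AA_closed n).preimage hPc) ?_ f
  · have : f = (1 / 2 : ℝ) • P f := by
      ext v
      rw [ContinuousMap.smul_apply, hP, hf, smul_eq_mul]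
      ring
    rw [this]
    exact (AA n).smul_mem _ key
  · rintro _ ⟨y, θ, rfl⟩ _ ⟨z, η, rfl⟩
    have : cs y θ * cs z η = (1 / 2 : ℝ) • cs (y + z) (θ + η) + (1 / 2 : ℝ) • cs (y - z) (θ - η) := by
      ext v
      simp only [cs, ContinuousMap.mul_apply, ContinuousMap.add_apply, ContinuousMap.smul_apply,
        ContinuousMap.coe_mk, inner_add_left, inner_sub_left, smul_eq_mul]
      rw [show inner ℝ y (v : EE n) + inner ℝ z (v : EE n) + (θ + η) = 
        (inner ℝ y (v : EE n) + θ) + (inner ℝ z (v : EE n) + η) by ring, 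
        show inner ℝ y (v : EE n) - inner ℝ z (v : EE n) + (θ - η) = 
        (inner ℝ y (v : EE n) + θ) - (inner ℝ z (v : EE n) + η) by ring, Real.cos_add (_ + _), 
        Real.cos_sub (_ + _)]
      ring
    rw [this]
    exact Submodule.add_mem _ (Submodule.smul_mem _ _ (Submodule.subset_span ⟨_, _, rfl⟩)) 
      (Submodule.smul_mem _ _ (Submodule.subset_span ⟨_, _, rfl⟩))
  · intro v w hvw
    refine ⟨cs v 1, ⟨v, 1, rfl⟩, fun h => ?_⟩
    have hv : inner ℝ (v : EE n) (v : EE n) = (1:ℝ) := by simp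
    have hw := neg_le_of_abs_le (abs_real_inner_le_norm (v : EE n) (w : EE n))
    have hw2 := real_inner_le_norm (v : EE n) (w : EE n)
    have hpi := Real.two_le_pi
    simp only [norm_eq_of_mem_sphere, mul_one] at hw hw2
    have := Real.injOn_cos ⟨by rw [hv]; norm_num, by rw [hv]; linarith⟩ 
      ⟨by linarith, by linarith⟩ h
    have h1 : inner ℝ (v : EE n) (w : EE n) = (1 : ℝ) := by linarith
    exact hvw (Subtype.ext ((inner_eq_one_iff_of_norm_eq_one (by simp) (by simp)).1 h1))
  · rintro _ ⟨y, θ, rfl⟩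
    have : P (cs y θ) = (2 * Real.cos θ) • cs y 0 := by
      ext v
      rw [hP]
      simp only [cs, ContinuousMap.coe_mk, ContinuousMap.smul_apply, smul_eq_mul, coe_neg_sphere, 
        inner_neg_right, add_zero]
      rw [Real.cos_add, Real.cos_add, Real.cos_neg, Real.sin_neg]
      ring
    change P (cs y θ) ∈ AA n
    rw [this]
    exact (AA n).smul_mem _ (cos_mem y _ (by simp [cs]))

lemma span_ab {n : ℕ} {g : C(sphere (0 : EE n) 1, ℝ)} (hg : g ∈ Submodule.span ℝ (range ab)) : 
    ∃ l₁ l₂ : List (EE n), ∀ v : sphere (0 : EE n) 1, 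
      g v = (l₁.map fun z => |inner ℝ z (v : EE n)|).sum - 
        (l₂.map fun z => |inner ℝ z (v : EE n)|).sum := by
  induction hg using Submodule.span_induction with
  | mem x hx => 
    obtain ⟨y, rfl⟩ := hx
    exact ⟨[y], [], fun v => by simp [ab_apply]⟩
  | zero => exact ⟨[], [], by simp⟩
  | add x y _ _ hx hy =>
    obtain ⟨l₁, l₂, h⟩ := hx
    obtain ⟨m₁, m₂, h'⟩ := hy
    refine ⟨l₁ ++ m₁, l₂ ++ m₂, fun v => ?_⟩
    rw [ContinuousMap.add_apply, h, h']
    simp only [List.map_append, List.sum_append]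
    ring
  | smul c x _ hx =>
    obtain ⟨l₁, l₂, h⟩ := hx
    have key : ∀ (c : ℝ) (l : List (EE n)) (v : EE n), 
        ((l.map fun z => c • z).map fun z => |inner ℝ z v|).sum = 
          |c| * (l.map fun z => |inner ℝ z v|).sum := by
      intro c l v
      rw [List.map_map, ← List.sum_map_mul_left]
      congr 2
      ext z
      simp [inner_smul_left, abs_mul]
    rcases le_total 0 c with hc | hc
    · refine ⟨l₁.map fun z => c • z, l₂.map fun z => c • z, fun v => ?_⟩
      rw [key, key, ContinuousMap.smul_apply, h, abs_of_nonneg hc, smul_eq_mul]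
      ring
    · refine ⟨l₂.map fun z => c • z, l₁.map fun z => c • z, fun v => ?_⟩
      rw [key, key, ContinuousMap.smul_apply, h, abs_of_nonpos hc, smul_eq_mul]
      ring

/-- Even functions, homogeneous of degree one, are approximated by differences of support
functions of zonotopes. -/
lemma approx {n : ℕ} (h : EE n → ℝ) (hc : Continuous h) (he : ∀ v, h (-v) = h v) 
    (hh : ∀ (c : ℝ) v, 0 ≤ c → h (c • v) = c * h v) {δ : ℝ} (hδ : 0 < δ) : 
    ∃ l₁ l₂ : List (EE n), ∀ v : EE n, 
      |h v + (l₂.map fun z => |inner ℝ z v|).sum - (l₁.map fun z => |inner ℝ z v|).sum| 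
        ≤ δ * ‖v‖ := by
  let f : C(sphere (0 : EE n) 1, ℝ) := ⟨fun v => h v, by fun_prop⟩
  have hf : f ∈ AA n := even_mem f fun v => by simp [f, he]
  obtain ⟨g, hg, hfg⟩ := Metric.mem_closure_iff.1 hf δ hδ
  obtain ⟨l₁, l₂, hl⟩ := span_ab hg
  refine ⟨l₁, l₂, fun v => ?_⟩
  have hs : ∀ (c : ℝ) (l : List (EE n)) (v : EE n), 0 ≤ c → 
      (l.map fun z => |inner ℝ z (c • v)|).sum = c * (l.map fun z => |inner ℝ z v|).sum := by
    intro c l v hc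
    rw [← List.sum_map_mul_left]
    simp [inner_smul_right, abs_mul, abs_of_nonneg hc]
  rcases eq_or_ne v 0 with rfl | hv
  · have := hh 0 0 le_rfl
    simp at this
    simp [this]
  have hv' : 0 < ‖v‖ := norm_pos_iff.2 hv
  let u : sphere (0 : EE n) 1 := ⟨‖v‖⁻¹ • v, by simp [norm_smul, hv'.ne']⟩
  have hu : v = ‖v‖ • (u : EE n) := by simp [u, smul_smul, hv'.ne']
  have h1 := (ContinuousMap.dist_apply_le_dist (f := f) (g := g) u).trans hfg.le
  rw [Real.dist_eq, hl] at h1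
  rw [hu, hh _ _ hv'.le, hs _ _ _ hv'.le, hs _ _ _ hv'.le, ← mul_add, ← mul_sub, abs_mul, 
    abs_norm, ← hu, mul_comm δ]
  gcongr
  refine le_of_eq_of_le ?_ h1
  congr 1
  change _ = h u - _
  ring

/-! ### Inclusions from support functions -/

lemma incl_of_inner {n : ℕ} {C D : Set (EE n)} (hC : IsCompact C) (hCc : Convex ℝ C) 
    (h : ∀ v : EE n, ∀ x ∈ D, ∃ y ∈ C, (inner ℝ v x : ℝ) ≤ inner ℝ v y) : D ⊆ C := by
  intro x hx
  by_contra hxC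
  obtain ⟨f, u, h1, h2⟩ := geometric_hahn_banach_closed_point hCc hC.isClosed hxC
  obtain ⟨y, hy, hxy⟩ := h ((InnerProductSpace.toDual ℝ (EE n)).symm f) x hx
  rw [InnerProductSpace.toDual_symm_apply, InnerProductSpace.toDual_symm_apply] at hxy
  linarith [h1 y hy]

/-- Support function of a zonotope. -/
noncomputable def zs {n : ℕ} (l : List (EE n)) (v : EE n) : ℝ := 
  (l.map fun z => |inner ℝ z v|).sum

lemma zs_append {n : ℕ} (l m : List (EE n)) (v : EE n) : zs (l ++ m) v = zs l v + zs m v := by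
  simp [zs]

lemma zs_le {n : ℕ} (l : List (EE n)) (v : EE n) : ∀ y ∈ zon l, (inner ℝ v y : ℝ) ≤ zs l v := by
  induction l with
  | nil => rintro y hy; rw [zon, mem_singleton_iff] at hy; simp [hy, zs]
  | cons z l ih =>
    rintro _ ⟨_, ⟨s, hs, rfl⟩, y, hy, rfl⟩
    have := ih y hy
    simp only [zs, List.map_cons, List.sum_cons] at this ⊢
    rw [inner_add_right, inner_smul_right, real_inner_comm]
    refine add_le_add ?_ this
    refine (le_abs_self _).trans ?_
    rw [abs_mul]
    exact mul_le_of_le_one_left (abs_nonneg _) (abs_le.2 hs)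

lemma zs_attained {n : ℕ} (l : List (EE n)) (v : EE n) : ∃ y ∈ zon l, (inner ℝ v y : ℝ) = zs l v := by
  induction l with
  | nil => exact ⟨0, mem_singleton _, by simp [zs]⟩
  | cons z l ih =>
    obtain ⟨y, hy, h⟩ := ih
    rcases le_total 0 (inner ℝ z v : ℝ) with hz | hz
    · refine ⟨(1:ℝ) • z + y, ⟨_, ⟨1, by simp, rfl⟩, y, hy, rfl⟩, ?_⟩
      rw [inner_add_right, h, inner_smul_right, real_inner_comm]
      simp [zs, abs_of_nonneg hz]
    · refine ⟨(-1:ℝ) • z + y, ⟨_, ⟨-1, by simp, rfl⟩, y, hy, rfl⟩, ?_⟩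
      rw [inner_add_right, h, inner_smul_right, real_inner_comm]
      simp [zs, abs_of_nonpos hz]

/-- The standard basis as a list. -/
noncomputable def bl (n : ℕ) : List (EE n) := List.ofFn fun i => EuclideanSpace.single i (1:ℝ)

/-- The scaled standard basis as a list. -/
noncomputable def cl (n m : ℕ) : List (EE n) := (bl n).map fun z => (1 / m : ℝ) • z

lemma cl_ge {n : ℕ} (m : ℕ) (v : EE n) : 1 / m * ‖v‖ ≤ zs (cl n m) v := by
  have h1 : zs (cl n m) v = 1 / m * zs (bl n) v := by
    rw [zs, zs, cl, List.map_map, ← List.sum_map_mul_left]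
    congr 2
    ext z
    simp [inner_smul_left, abs_mul]
  rw [h1]
  gcongr
  have h2 : zs (bl n) v = ∑ i, |v i| := by
    rw [zs, bl, List.map_ofFn, List.sum_ofFn]
    simp [EuclideanSpace.inner_single_left]
  rw [h2, EuclideanSpace.norm_eq, Real.sqrt_le_iff]
  refine ⟨by positivity, ?_⟩
  have := Finset.sum_sq_le_sq_sum_of_nonneg (s := Finset.univ) (f := fun i => |v i|) (fun i _ => abs_nonneg _)
  simpa using this

/-- The support function. -/
noncomputable def sfn {n : ℕ} (K : Set (EE n)) (v : EE n) : ℝ := sSup ((fun x => inner ℝ v x) '' K)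

lemma sfn_bdd {n : ℕ} {K : Set (EE n)} (hK : IsCompact K) (v : EE n) : 
    BddAbove ((fun x => (inner ℝ v x : ℝ)) '' K) := 
  (hK.image (by fun_prop)).bddAbove

lemma le_sfn {n : ℕ} {K : Set (EE n)} (hK : IsCompact K) (v : EE n) {x : EE n} (hx : x ∈ K) : 
    inner ℝ v x ≤ sfn K v := le_csSup (sfn_bdd hK v) ⟨x, hx, rfl⟩

lemma sfn_attained {n : ℕ} {K : Set (EE n)} (hK : IsCompact K) (hne : K.Nonempty) (v : EE n) : 
    ∃ x ∈ K, (inner ℝ v x : ℝ) = sfn K v := 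
  (hK.image (f := fun x => (inner ℝ v x : ℝ)) (by fun_prop)).sSup_mem (hne.image _)

lemma sfn_cont {n : ℕ} {K : Set (EE n)} (hK : IsCompact K) (hne : K.Nonempty) : 
    Continuous (sfn K) := by
  obtain ⟨R, hR⟩ := hK.isBounded.exists_norm_le
  have hR0 : 0 ≤ R := hne.elim fun x hx => (norm_nonneg x).trans (hR x hx)
  have key : ∀ v w, sfn K v ≤ sfn K w + R * dist v w := by
    intro v w
    obtain ⟨x, hx, h⟩ := sfn_attained hK hne v
    rw [← h, ← sub_add_cancel v w, inner_add_left, add_comm, dist_eq_norm]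
    refine add_le_add (le_sfn hK w hx) ((real_inner_le_norm _ _).trans ?_)
    rw [mul_comm]
    simp only [sub_add_cancel]
    gcongr
    exact hR x hx
  have : LipschitzWith ⟨R, hR0⟩ (sfn K) := LipschitzWith.of_le_add_mul _ key
  exact this.continuous

lemma sfn_homog {n : ℕ} {K : Set (EE n)} (hK : IsCompact K) (hne : K.Nonempty) (c : ℝ) (v : EE n) 
    (hc : 0 ≤ c) : sfn K (c • v) = c * sfn K v := by
  apply le_antisymm
  · obtain ⟨x, hx, h⟩ := sfn_attained hK hne (c • v)
    rw [← h, inner_smul_left]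
    exact mul_le_mul_of_nonneg_left (le_sfn hK v hx) hc
  · obtain ⟨x, hx, h⟩ := sfn_attained hK hne v
    have := le_sfn hK (c • v) hx
    rw [inner_smul_left] at this
    rw [← h]; exact this

lemma sfn_even {n : ℕ} {K : Set (EE n)} (hK : IsCompact K) (hne : K.Nonempty) (hs : K = -K) 
    (v : EE n) : sfn K (-v) = sfn K v := by
  have key : ∀ v, sfn K (-v) ≤ sfn K v := by
    intro v
    obtain ⟨x, hx, h⟩ := sfn_attained hK hne (-v)
    rw [← h, inner_neg_left, ← inner_neg_right]
    rw [hs] at hx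
    exact le_sfn hK v hx
  refine le_antisymm (key v) ?_
  have := key (-v)
  rwa [neg_neg] at this

lemma zon_incl {n : ℕ} {K : Set (EE n)} (hK : IsCompact K) (hKc : Convex ℝ K) (hne : K.Nonempty) 
    (hs : K = -K) {m : ℕ} (hm : 0 < m) : ∃ l₁ l₂ : List (EE n), 
      K + zon l₂ ⊆ zon (l₁ ++ cl n m) ∧ zon l₁ ⊆ K + zon (l₂ ++ cl n m) := by
  have hm' : (0:ℝ) < 1 / m := by positivity
  obtain ⟨l₁, l₂, h⟩ := approx (sfn K) (sfn_cont hK hne) (sfn_even hK hne hs) (sfn_homog hK hne) hm'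
  refine ⟨l₁, l₂, ?_, ?_⟩
  · refine incl_of_inner (zon_compact _) (zon_convex _) fun v => ?_
    rintro _ ⟨x, hx, y, hy, rfl⟩
    obtain ⟨w, hw, hwe⟩ := zs_attained (l₁ ++ cl n m) v
    refine ⟨w, hw, ?_⟩
    rw [hwe, zs_append, inner_add_right]
    have h1 := le_sfn hK v hx
    have h2 := zs_le l₂ v y hy
    have h3 := cl_ge m v
    have h4 := le_of_abs_le (h v)
    simp only [zs] at *
    linarith
  · refine incl_of_inner (hK.add (zon_compact _)) (hKc.add (zon_convex _)) fun v => ?_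
    intro y hy
    obtain ⟨w, hw, hwe⟩ := zs_attained (l₂ ++ cl n m) v
    obtain ⟨x, hx, hxe⟩ := sfn_attained hK hne v
    refine ⟨x + w, ⟨x, hx, w, hw, rfl⟩, ?_⟩
    rw [inner_add_right, hxe, hwe, zs_append]
    have h2 := zs_le l₁ v y hy
    have h3 := cl_ge m v
    have h4 := neg_le_of_abs_le (h v)
    simp only [zs] at *
    linarith

lemma cl_PP {n : ℕ} {M : Set (EE n)} (hM : Convex ℝ M) (hMc : IsCompact M) {m : ℕ} (hm : 0 < m) : 
    ((cl n m).map (PP M)).sum = 1 / m * ((bl n).map (PP M)).sum := by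
  rw [cl, List.map_map, ← List.sum_map_mul_left]
  congr 2
  ext z
  exact PP_smul hM hMc z hm

lemma vol_add_mono {n : ℕ} {L C D : Set (EE n)} (hL : IsCompact L) (hD : IsCompact D) (h : C ⊆ D) 
    (c : ℝ) : volume.real (L + c • C) ≤ volume.real (L + c • D) := 
  measureReal_mono (Set.add_subset_add_left (smul_set_mono h)) (hL.add (hD.smul c)).measure_ne_top

lemma upper_deriv {n : ℕ} {L K : Set (EE n)} (hL : IsCompact L) (hLc : Convex ℝ L) 
    (hK : IsCompact K) (hKc : Convex ℝ K) (h0 : 0 ∈ K) (hs : K = -K) (hPP : PP L = PP K) {V : ℝ} 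
    (hLV : volume.real L = V) (hKV : volume.real K = V) {η : ℝ} (hη : 0 < η) : 
    ∀ᶠ N : ℕ in Filter.atTop, N * (volume.real (L + (1 / N : ℝ) • K) - V) ≤ n * V + η := by
  set c := ((bl n).map (PP K)).sum with hc
  obtain ⟨m, hm⟩ := exists_nat_gt (2 * c / η)
  obtain ⟨m, hm0, hm⟩ : ∃ m : ℕ, 0 < m ∧ 2 * c / η < m := 
    ⟨m + 1, by positivity, by push_cast; linarith⟩
  have hm' : (0:ℝ) < m := by exact_mod_cast hm0
  have hcm : 2 * (1 / m * c) < η := by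
    rw [div_lt_iff₀ hη] at hm
    rw [← mul_assoc, mul_one_div, div_mul_eq_mul_div, div_lt_iff₀ hm']
    linarith
  obtain ⟨l₁, l₂, i1, i2⟩ := zon_incl hK hKc ⟨0, h0⟩ hs hm0
  have a1 := deriv_zon hL hLc hK hKc h0 l₂
  have a2 := deriv_zon hL hLc isCompact_singleton (convex_singleton 0) rfl (l₁ ++ cl n m)
  have b1 := deriv_zon hK hKc isCompact_singleton (convex_singleton 0) rfl l₁
  have b2 := deriv_zon hK hKc hK hKc h0 (l₂ ++ cl n m)
  have b3 := deriv_self hKc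
  simp only [smul_set_singleton, smul_zero, singleton_zero, add_zero, zero_add, hLV, hKV, hPP, List.map_append, 
    List.sum_append, cl_PP hKc hK hm0, ← hc] at a1 a2 b1 b2 b3
  have hS : (l₁.map (PP K)).sum ≤ (l₂.map (PP K)).sum + 1 / m * c + n * V := by
    refine le_of_tendsto_of_tendsto' b1 (b2.add b3) fun N => ?_
    rw [← mul_add]
    refine mul_le_mul_of_nonneg_left ?_ (by positivity)
    have := vol_add_mono hK (hK.add (zon_compact (l₂ ++ cl n m))) i2 (1 / N : ℝ)
    linarith
  have hlt : (l₁.map (PP K)).sum + 1 / m * c - (l₂.map (PP K)).sum < n * V + η := by linarith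
  filter_upwards [(a2.sub a1).eventually_lt_const hlt] with N hN
  refine le_trans ?_ hN.le
  rw [← mul_sub]
  refine mul_le_mul_of_nonneg_left ?_ (by positivity)
  have := vol_add_mono hL (zon_compact (l₁ ++ cl n m)) i1 (1 / N : ℝ)
  linarith

/-! ### Assembly -/

lemma bm_mid {n : ℕ} {L K : Set (EE n)} (hL : IsCompact L) (hK : IsCompact K) : 
    volume.real L * volume.real K ≤ volume.real ((1 / 2 : ℝ) • (L + K)) ^ 2 := by
  have := pl_exp hL hK (p := fun _ => 0) (q := fun _ => 0) (r := fun _ => 0) continuous_const 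
    continuous_const continuous_const (by simp)
  simpa using this

lemma vol_smul {n : ℕ} (K : Set (EE n)) {c : ℝ} (hc : 0 ≤ c) : 
    volume.real (c • K) = c ^ n * volume.real K := by
  rw [measureReal_def, Measure.addHaar_smul, ENNReal.toReal_mul, 
    ENNReal.toReal_ofReal (by positivity), measureReal_def, finrank_euclideanSpace_fin, 
    abs_of_nonneg (by positivity)]

/-- The interpolation between `L` and `K`. -/
def Mj {n : ℕ} (L K : Set (EE n)) (j : ℕ) : Set (EE n) := 
  (1 - 1 / 2 ^ j : ℝ) • L + (1 / 2 ^ j : ℝ) • K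

lemma pow_half_le (j : ℕ) : (1 / 2 ^ j : ℝ) ≤ 1 := by
  rw [div_le_one (by positivity)]; exact one_le_pow₀ (by norm_num)

lemma Mj_succ {n : ℕ} {L K : Set (EE n)} (hLc : Convex ℝ L) (j : ℕ) : 
    (1 / 2 : ℝ) • (L + Mj L K j) = Mj L K (j + 1) := by
  have h := pow_half_le j
  have : L + (1 - 1 / 2 ^ j : ℝ) • L = (1 + (1 - 1 / 2 ^ j) : ℝ) • L := by
    rw [hLc.add_smul (by positivity) (by linarith), one_smul]
  rw [Mj, Mj, ← add_assoc, this, smul_add, smul_smul, smul_smul]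
  congr 2
  · rw [pow_succ]; field_simp; ring
  · rw [pow_succ]; field_simp

lemma mid_le {n : ℕ} {L K : Set (EE n)} (hL : IsCompact L) (hLc : Convex ℝ L) 
    (hK : IsCompact K) {V : ℝ} (hV : 0 < V) (hLV : volume.real L = V) (hKV : volume.real K = V)
    (hne : L.Nonempty)
    (hF : ∀ η : ℝ, 0 < η → ∀ᶠ N : ℕ in Filter.atTop, 
      N * (volume.real (L + (1 / N : ℝ) • K) - V) ≤ n * V + η) : 
    volume.real ((1 / 2 : ℝ) • (L + K)) ≤ V := by
  set W : ℕ → ℝ := fun j => volume.real (Mj L K j) with hW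
  have hcomp : ∀ j, IsCompact (Mj L K j) := fun j => (hL.smul _).add (hK.smul _)
  have hW0 : W 0 = V := by simp [hW, Mj, zero_smul_set hne, hKV]
  have hW1 : Mj L K 1 = (1 / 2 : ℝ) • (L + K) := by
    rw [Mj, smul_add]; norm_num
  have hstep : ∀ j, V * W j ≤ W (j + 1) ^ 2 := by
    intro j
    have := bm_mid hL (hcomp j)
    rwa [Mj_succ hLc, hLV] at this
  have hpos : ∀ j, 0 < W j := by
    intro j
    induction j with
    | zero => rw [hW0]; exact hV
    | succ j ih =>
      have h1 : 0 < W (j+1) ^ 2 := lt_of_lt_of_le (mul_pos hV ih) (hstep j)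
      exact lt_of_le_of_ne measureReal_nonneg (fun h => by rw [← h] at h1; simp at h1)
  set D : ℕ → ℝ := fun j => 2 ^ j * (Real.log (W j) - Real.log V) with hD
  have hmono : Monotone D := by
    refine monotone_nat_of_le_succ fun j => ?_
    have h1 := Real.log_le_log (mul_pos hV (hpos j)) (hstep j)
    rw [Real.log_mul hV.ne' (hpos j).ne', Real.log_pow] at h1
    simp only [hD, pow_succ, mul_assoc]
    refine mul_le_mul_of_nonneg_left ?_ (by positivity)
    push_cast at h1
    linarith
  have hD1 : D 1 ≤ 0 := by
    refine le_of_forall_pos_le_add fun ε hε => ?_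
    rw [zero_add]
    set e := ε / 2 with he
    have hepos : 0 < e := by positivity
    obtain ⟨N₀, hN₀⟩ := Filter.eventually_atTop.1 (hF (e * V) (by positivity))
    obtain ⟨N₁, hN₁⟩ := exists_nat_gt ((n + e) / e)
    obtain ⟨j, hj⟩ : ∃ j : ℕ, N₀ + N₁ + 2 ≤ 2 ^ j := ⟨_, Nat.lt_two_pow_self.le⟩
    obtain ⟨N, hN⟩ : ∃ N, 2 ^ j = N + 1 := ⟨2 ^ j - 1, by omega⟩
    have hj1 : 1 ≤ j := by
      by_contra hc
      have : j = 0 := by omega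
      rw [this] at hj; norm_num at hj; omega
    refine (hmono hj1).trans ?_
    have hNR : (2:ℝ) ^ j = N + 1 := by exact_mod_cast hN
    have hNpos : (0:ℝ) < N := by
      have : 0 < N := by omega
      exact_mod_cast this
    have hNge : (n + e) / e ≤ N := by
      refine hN₁.le.trans ?_
      have : N₁ ≤ N := by omega
      exact_mod_cast this
    have hM : Mj L K j = ((N : ℝ) / (N + 1)) • (L + (1 / N : ℝ) • K) := by
      rw [Mj, hNR, smul_add, smul_smul]
      congr 2 
      · field_simp; ring
      · field_simp
    have hb := hN₀ N (by omega)
    have hv : volume.real (L + (1 / N : ℝ) • K) ≤ V * (1 + (n + e) / N) := by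
      have : volume.real (L + (1 / N : ℝ) • K) - V ≤ (n * V + e * V) / N := by
        rw [le_div_iff₀ hNpos]; linarith
      calc _ ≤ V + (n * V + e * V) / N := by linarith
        _ = _ := by ring
    have hWj : W j ≤ ((N : ℝ) / (N + 1)) ^ n * (V * (1 + (n + e) / N)) := by
      simp only [hW]
      rw [hM, vol_smul _ (by positivity)]
      gcongr
    have hl := Real.log_le_log (hpos j) hWj
    rw [Real.log_mul (by positivity) (by positivity), Real.log_mul hV.ne' (by positivity), 
      Real.log_pow] at hl
    have l1 : Real.log ((N : ℝ) / (N + 1)) ≤ - (1 / (N + 1)) := by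
      refine (Real.log_le_sub_one_of_pos (by positivity)).trans (le_of_eq ?_)
      field_simp; ring
    have l2 : Real.log (1 + (n + e) / N) ≤ (n + e) / N := by
      have := Real.log_le_sub_one_of_pos (show 0 < 1 + (n + e) / (N:ℝ) by positivity)
      linarith
    have l3 : (n : ℝ) * Real.log ((N : ℝ) / (N + 1)) ≤ n * (- (1 / (N + 1))) := by gcongr
    have l4 : Real.log (W j) - Real.log V ≤ n * (- (1 / (N + 1))) + (n + e) / N := by linarith
    simp only [hD, hNR]
    calc ((N:ℝ) + 1) * (Real.log (W j) - Real.log V) 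
        ≤ (N + 1) * (n * (- (1 / (N + 1))) + (n + e) / N) := by gcongr
      _ = e + (n + e) / N := by field_simp; ring
      _ ≤ e + e := by
        gcongr
        rw [div_le_iff₀ hNpos]
        rw [div_le_iff₀ hepos] at hNge
        linarith
      _ = ε := by rw [he]; ring
  have : Real.log (W 1) ≤ Real.log V := by
    simp only [hD] at hD1; linarith
  rw [← hW1]
  exact (Real.log_le_log_iff (hpos 1) hV).1 this

lemma vol_pos {n : ℕ} {K : Set (EE n)} (hK : IsConvexBody K) : 0 < volume.real K := 
  ENNReal.toReal_pos (ne_of_gt (Measure.measure_pos_of_nonempty_interior _ hK.2.2)) hK.1.measure_ne_top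

lemma main_sym {n : ℕ} {L K : Set (EE n)} (hL : IsConvexBody L) (hK : IsConvexBody K) 
    (hs : K = -K) (hPP : PP L = PP K) (hV : volume.real L = volume.real K) : 
    ∃ x : EE n, L = x +ᵥ K := by
  obtain ⟨x, hx⟩ : K.Nonempty := hK.2.2.mono interior_subset
  have h0 : (0 : EE n) ∈ K := by
    have hx' : -x ∈ K := by rw [hs]; simpa using hx
    have hcv : Convex ℝ K := hK.2.1
    have := hcv hx hx' (a := 1/2) (b := 1/2) (by norm_num) (by norm_num) (by norm_num)
    simpa using this
  refine translate_of_bm_eq hL hK (vol_pos hK) hV rfl (le_antisymm ?_ ?_)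
  · exact mid_le hL.1 hL.2.1 hK.1 (vol_pos hK) hV rfl (hL.2.2.mono interior_subset) 
      fun η hη => upper_deriv hL.1 hL.2.1 hK.1 hK.2.1 h0 hs hPP hV rfl hη
  · have := bm_mid hL.1 hK.1
    rw [hV, ← sq] at this
    exact (sq_le_sq₀ measureReal_nonneg measureReal_nonneg).1 this

lemma IsConvexBody.neg {n : ℕ} {K : Set (EE n)} (hK : IsConvexBody K) : IsConvexBody (-K) := by
  refine ⟨hK.1.neg, hK.2.1.neg, ?_⟩
  have := (Homeomorph.neg (EE n)).image_interior K
  have h2 : (Homeomorph.neg (EE n)) '' K = -K := image_neg_eq_neg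
  rw [← h2, ← this]
  exact hK.2.2.image _

lemma hullFn_neg {n : ℕ} (K : Set (EE n)) : convexHullFn (-K) = convexHullFn K := by
  ext t
  have h1 : t +ᵥ (-(K ∪ (t +ᵥ K))) = (-K) ∪ (t +ᵥ (-K)) := by
    ext x
    simp only [mem_vadd_set_iff_neg_vadd_mem, mem_union, mem_neg, vadd_eq_add]
    rw [or_comm]
    simp
  have h2 : convexHull ℝ ((-K) ∪ (t +ᵥ (-K))) = t +ᵥ (-convexHull ℝ (K ∪ (t +ᵥ K))) := by
    rw [← h1, convexHull_vadd, convexHull_neg]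
  rw [convexHullFn, convexHullFn, h2, measure_vadd, Measure.measure_neg]

theorem stmt2 {n : ℕ} (hn : 2 ≤ n) (K : Set (EuclideanSpace ℝ (Fin n)))
    (hK : IsConvexBody K) :
    (∃ c : EuclideanSpace ℝ (Fin n), K = ((2 : ℝ) • c) +ᵥ (-K)) ↔
      (∀ L : Set (EuclideanSpace ℝ (Fin n)), IsConvexBody L →
        convexHullFn L = convexHullFn K → ∃ x : EuclideanSpace ℝ (Fin n), L = x +ᵥ K) := by
  constructor
  · rintro ⟨c, hc⟩ L hL hLK
    have hK' := hK.vadd (-c)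
    have hs : -c +ᵥ K = -(-c +ᵥ K) := by
      ext x
      simp only [mem_neg, mem_vadd_set_iff_neg_vadd_mem, vadd_eq_add, neg_neg]
      conv_lhs => rw [hc]
      simp only [mem_neg, mem_vadd_set_iff_neg_vadd_mem, vadd_eq_add]
      rw [show -(-((2:ℝ) • c) + (c + x)) = c + -x by module]
    have hVL : volume.real L = volume.real K := by
      rw [← convexHullFn_zero hL.2.1, ← convexHullFn_zero hK.2.1, hLK]
    have hPP : PP L = PP (-c +ᵥ K) := by
      ext z
      have : PP (-c +ᵥ K) z = PP K z := by
        rw [PP, PP, add_comm, add_vadd_set, volume_real_vadd, volume_real_vadd, add_comm]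
      rw [this, PP_eq hL.2.1, PP_eq hK.2.1, hLK]
    obtain ⟨x, hx⟩ := main_sym hL hK' hs hPP (by rw [hVL, volume_real_vadd])
    exact ⟨x + -c, by rw [hx, vadd_vadd]⟩
  · intro h
    obtain ⟨x, hx⟩ := h (-K) (IsConvexBody.neg hK) (hullFn_neg K)
    refine ⟨(-(1 / 2 : ℝ)) • x, ?_⟩
    rw [hx, vadd_vadd]
    have : (2 : ℝ) • (-(1 / 2 : ℝ)) • x + x = 0 := by module
    rw [this, zero_vadd]
end

section
/- Let K ⊂ ℝ² be a plane convex body. Then K satisfies the translative constant volume property if and only if Birkhoff orthogonality is symmetric in the norm on ℝ² whose unit ball is the central symmetral ½(K − K); that is, if and only if for all x, y ∈ ℝ², whenever ‖x‖ ≤ ‖x + ty‖ for all t ∈ ℝ then also ‖y‖ ≤ ‖y + tx‖ for all t ∈ ℝ, where ‖·‖ denotes the Minkowski gauge of ½(K − K). -/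
open MeasureTheory Set Pointwise Metric

/-- Two sets touch each other if they intersect and their interiors are disjoint. -/
def Touching {n : ℕ} (A B : Set (EuclideanSpace ℝ (Fin n))) : Prop :=
  (A ∩ B).Nonempty ∧ interior A ∩ interior B = ∅

/-- The translative constant volume property. -/
def TCVP {n : ℕ} (K : Set (EuclideanSpace ℝ (Fin n))) : Prop :=
  ∃ c : ℝ, ∀ v w : EuclideanSpace ℝ (Fin n), Touching (v +ᵥ K) (w +ᵥ K) →
    (volume (convexHull ℝ ((v +ᵥ K) ∪ (w +ᵥ K)))).toReal = c

abbrev V2 := EuclideanSpace ℝ (Fin 2)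

/-- The standard area form. -/
def om (x y : V2) : ℝ := x 0 * y 1 - x 1 * y 0

/-- A norm together with its antinorm. -/
structure NG (N g : V2 → ℝ) : Prop where
  N_smul : ∀ (c : ℝ) x, N (c • x) = |c| * N x
  N_add : ∀ x y, N (x + y) ≤ N x + N y
  N_pos : ∀ x, x ≠ 0 → 0 < N x
  g_smul : ∀ (c : ℝ) x, g (c • x) = |c| * g x
  g_add : ∀ x y, g (x + y) ≤ g x + g y
  bound : ∀ x y, 2 * |om x y| ≤ N x * g y
  sup : ∀ y C, (∀ d, N d ≤ 2 → |om d y| ≤ C) → g y ≤ C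

lemma om_cramer (x y d : V2) : om x y • d = om d y • x + om x d • y := by
  ext i
  fin_cases i <;> simp [om] <;> ring

lemma om_swap (x y : V2) : om y x = - om x y := by simp only [om]; ring

lemma om_add_smul (x y : V2) (t : ℝ) : om (y + t • x) x = om y x := by
  simp [om]; ring

lemma om_left_ne {x y : V2} (h : om x y ≠ 0) : x ≠ 0 := by
  rintro rfl; simp [om] at h

lemma om_right_ne {x y : V2} (h : om x y ≠ 0) : y ≠ 0 := by
  rintro rfl; simp [om] at h

namespace NG
variable {N g : V2 → ℝ}

lemma N_zero (h : NG N g) : N 0 = 0 := by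
  have := h.N_smul 0 0
  simpa using this

lemma N_nonneg (h : NG N g) (x : V2) : 0 ≤ N x := by
  by_cases hx : x = 0
  · rw [hx, h.N_zero]
  · exact (h.N_pos x hx).le

lemma perp_le (h : NG N g) {x y : V2} (hp : ∀ t : ℝ, N x ≤ N (x + t • y)) :
    N x * g y ≤ 2 * |om x y| := by
  by_cases hx : x = 0
  · rw [hx, h.N_zero, zero_mul]; positivity
  have hN := h.N_pos x hx
  have key : ∀ d, N x * |om d y| ≤ N d * |om x y| := by
    intro d
    by_cases hd : om d y = 0
    · rw [hd, abs_zero, mul_zero]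
      exact mul_nonneg (h.N_nonneg d) (abs_nonneg _)
    · have h1 : om x y • d = om d y • (x + (om x d / om d y) • y) := by
        rw [om_cramer, smul_add, smul_smul, mul_div_cancel₀ _ hd]
      have h2 := congrArg N h1
      rw [h.N_smul, h.N_smul] at h2
      have := mul_le_mul_of_nonneg_left (hp (om x d / om d y)) (abs_nonneg (om d y))
      linarith
  have := h.sup y (2 * |om x y| / N x) (by
    intro d hd
    rw [le_div_iff₀ hN]
    have := key d
    have := mul_le_mul_of_nonneg_right hd (abs_nonneg (om x y))
    linarith)
  rw [le_div_iff₀ hN] at this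
  linarith

lemma perp_symm_of_const (h : NG N g) {c : ℝ} (hc : ∀ x, g x = c * N x) {x y : V2}
    (hp : ∀ t : ℝ, N x ≤ N (x + t • y)) (t : ℝ) : N y ≤ N (y + t • x) := by
  by_cases hx : x = 0
  · simp [hx]
  by_cases hy : y = 0
  · rw [hy, h.N_zero]; exact h.N_nonneg _
  have hNx := h.N_pos x hx
  have hNy := h.N_pos y hy
  have h1 := h.perp_le hp
  have h2 := h.bound (y + t • x) x
  rw [om_add_smul, om_swap, abs_neg, hc] at h2
  rw [hc] at h1
  have hom : om x y ≠ 0 := by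
    intro h0
    have h3 := om_cramer x y
    by_cases hy0 : y 0 = 0
    · have hy1 : y 1 ≠ 0 := by
        intro hy1
        apply hy; ext i; fin_cases i <;> simp [hy0, hy1]
      have : x + (-(x 1 / y 1)) • y = 0 := by
        have : x 0 = 0 := by
          simp only [om, hy0, mul_zero, sub_zero] at h0
          exact (mul_eq_zero.1 h0).resolve_right hy1
        ext i; fin_cases i <;> simp [hy0, this]
        field_simp; ring
      have h4 := hp (-(x 1 / y 1))
      rw [this, h.N_zero] at h4
      linarith
    · have : x + (-(x 0 / y 0)) • y = 0 := by
        ext i; fin_cases i <;> simp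
        · field_simp; ring
        · simp only [om] at h0
          field_simp; linarith
      have h4 := hp (-(x 0 / y 0))
      rw [this, h.N_zero] at h4
      linarith
  have hcpos : 0 < c := by
    have h3 := h.bound x y
    rw [hc] at h3
    have h4 : 0 < |om x y| := abs_pos.2 hom
    by_contra hcn
    have : c * (N x * N y) ≤ 0 := mul_nonpos_of_nonpos_of_nonneg (by linarith) (by positivity)
    nlinarith
  have h5 : (N x * c) * N y ≤ (N x * c) * N (y + t • x) := by nlinarith
  exact le_of_mul_le_mul_left h5 (by positivity)

lemma slope_transfer (h : NG N g)
    (hs : ∀ x y : V2, (∀ t : ℝ, N x ≤ N (x + t • y)) → ∀ t : ℝ, N y ≤ N (y + t • x))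
    {x b : V2} (hxb : om x b ≠ 0) {p : ℝ} (hp : ∀ t : ℝ, N x + p * t ≤ N (x + t • b)) (τ : ℝ) :
    g x * (N x + p * τ) ≤ N x * g (x + τ • b) := by
  have hx := om_left_ne hxb
  have hN := h.N_pos x hx
  set y : V2 := N x • b - p • x with hy
  have hsmall : ∀ t : ℝ, 0 < 1 - t * p → N x ≤ N (x + t • y) := by
    intro t ht
    have e : x + t • y = (1 - t * p) • (x + (t * N x / (1 - t * p)) • b) := by
      rw [smul_add, smul_smul, mul_div_cancel₀ _ ht.ne', hy]
      module
    rw [e, h.N_smul, abs_of_pos ht]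
    have := mul_le_mul_of_nonneg_left (hp (t * N x / (1 - t * p))) ht.le
    have e2 : (1 - t * p) * (N x + p * (t * N x / (1 - t * p))) = N x := by
      field_simp; ring
    linarith
  have hperp : ∀ t : ℝ, N x ≤ N (x + t • y) := by
    intro t
    set ε : ℝ := 1 / (1 + |t * p|) with hε
    have hε0 : 0 < ε := by positivity
    have hd : 0 < 1 + |t * p| := by positivity
    have hε1 : ε ≤ 1 := by
      rw [hε, div_le_one hd]; linarith [abs_nonneg (t * p)]
    have h1 : 0 < 1 - (ε * t) * p := by
      have : ε * (1 + |t * p|) = 1 := by rw [hε]; field_simp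
      have h3 := mul_le_mul_of_nonneg_left (le_abs_self (t * p)) hε0.le
      nlinarith
    have h2 := hsmall _ h1
    have e : x + (ε * t) • y = (1 - ε) • x + ε • (x + t • y) := by module
    have h3 := h.N_add ((1 - ε) • x) (ε • (x + t • y))
    rw [← e, h.N_smul, h.N_smul, abs_of_pos hε0, abs_of_nonneg (by linarith)] at h3
    have h4 : ε * N x ≤ ε * N (x + t • y) := by linarith
    exact le_of_mul_le_mul_left h4 hε0
  have hperp' := hs x y hperp
  have h1 := h.perp_le hperp'
  have h2 := h.bound y (x + τ • b)
  have e1 : om y x = -(N x * om x b) := by simp [om, hy]; ring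
  have e2 : om y (x + τ • b) = -((N x + p * τ) * om x b) := by simp [om, hy]; ring
  have hy0 : y ≠ 0 := by
    apply om_left_ne (y := x)
    rw [e1]
    exact neg_ne_zero.2 (mul_ne_zero hN.ne' hxb)
  have hNy := h.N_pos y hy0
  rw [e1, abs_neg, abs_mul, abs_of_pos hN] at h1
  rw [e2, abs_neg, abs_mul] at h2
  have hg : ∀ z, 0 ≤ g z := by
    intro z
    have h3 := h.bound y z
    by_contra hn
    have : N y * g z < 0 := mul_neg_of_pos_of_neg hNy (by linarith)
    have := abs_nonneg (om y z)
    linarith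
  have habs := le_abs_self (N x + p * τ)
  have h5 : N y * (g x * |N x + p * τ|) ≤ N y * (N x * g (x + τ • b)) := by
    have h6 := mul_le_mul_of_nonneg_right h1 (abs_nonneg (N x + p * τ))
    have h7 := mul_le_mul_of_nonneg_left h2 hN.le
    nlinarith
  have h6 := le_of_mul_le_mul_left h5 hNy
  have h7 := mul_le_mul_of_nonneg_left habs (hg x)
  linarith

end NG

lemma convexOn_line {F : V2 → ℝ} (hsm : ∀ (c : ℝ) x, F (c • x) = |c| * F x)
    (hadd : ∀ x y, F (x + y) ≤ F x + F y) (x b : V2) :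
    ConvexOn ℝ univ (fun s : ℝ => F (x + s • b)) := by
  refine ⟨convex_univ, ?_⟩
  intro s _ t _ α β hα hβ hαβ
  have e : x + (α • s + β • t) • b = α • (x + s • b) + β • (x + t • b) := by
    have : x = (α + β) • x := by rw [hαβ, one_smul]
    nth_rewrite 1 [this]
    simp only [smul_eq_mul]
    module
  show F (x + (α • s + β • t) • b) ≤ α * F (x + s • b) + β * F (x + t • b)
  rw [e]
  refine (hadd _ _).trans ?_
  rw [hsm, hsm, abs_of_nonneg hα, abs_of_nonneg hβ]

lemma convexOn_support {f : ℝ → ℝ} (hf : ConvexOn ℝ univ f) (s t : ℝ) :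
    f s + derivWithin f (Ioi s) s * (t - s) ≤ f t := by
  rcases lt_trichotomy s t with h | h | h
  · have := hf.rightDeriv_le_slope_of_mem_interior (x := s) (y := t) (by simp) (mem_univ _) h
    rw [slope_def_field, le_div_iff₀ (by linarith)] at this
    linarith
  · subst h; simp
  · have h1 := hf.slope_le_leftDeriv_of_mem_interior (x := t) (y := s) (mem_univ _) (by simp) h
    have h2 := hf.leftDeriv_le_rightDeriv_of_mem_interior (x := s) (by simp)
    have := h1.trans h2
    rw [slope_def_field, div_le_iff₀ (by linarith)] at this
    linarith

lemma NG.ratio_le {N g : V2 → ℝ} (h : NG N g)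
    (hs : ∀ x y : V2, (∀ t : ℝ, N x ≤ N (x + t • y)) → ∀ t : ℝ, N y ≤ N (y + t • x))
    {x b : V2} (hxb : om x b ≠ 0) : g x / N x ≤ g (x + b) / N (x + b) := by
  set n : ℝ → ℝ := fun s => N (x + s • b) with hn
  set G : ℝ → ℝ := fun s => g (x + s • b) with hG
  have cn : ConvexOn ℝ univ n := convexOn_line h.N_smul h.N_add x b
  have cG : ConvexOn ℝ univ G := convexOn_line h.g_smul h.g_add x b
  have hom : ∀ s : ℝ, om (x + s • b) b ≠ 0 := by
    intro s; rwa [om_add_smul]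
  have npos : ∀ s, 0 < n s := fun s => h.N_pos _ (om_left_ne (hom s))
  have contn : Continuous n := by
    rw [← continuousOn_univ]; exact cn.continuousOn isOpen_univ
  have contG : Continuous G := by
    rw [← continuousOn_univ]; exact cG.continuousOn isOpen_univ
  have dn : ∀ s, HasDerivWithinAt n (derivWithin n (Ioi s) s) (Ici s) s := fun s =>
    (cn.hasDerivWithinAt_rightDeriv_of_mem_interior (by simp)).Ici_of_Ioi
  have dG : ∀ s, HasDerivWithinAt G (derivWithin G (Ioi s) s) (Ici s) s := fun s =>
    (cG.hasDerivWithinAt_rightDeriv_of_mem_interior (by simp)).Ici_of_Ioi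
  have key : ∀ s, G s * derivWithin n (Ioi s) s ≤ n s * derivWithin G (Ioi s) s := by
    intro s
    have h1 : ∀ τ : ℝ, G s * (n s + derivWithin n (Ioi s) s * τ) ≤ n s * G (s + τ) := by
      intro τ
      have := h.slope_transfer hs (hom s) (p := derivWithin n (Ioi s) s) (by
        intro t
        have := convexOn_support cn s (s + t)
        simp only [add_sub_cancel_left] at this
        have e : x + s • b + t • b = x + (s + t) • b := by module
        rw [e]
        exact this) τ
      have e : x + s • b + τ • b = x + (s + τ) • b := by module
      rw [e] at this
      exact this
    have h2 := cG.hasDerivWithinAt_rightDeriv_of_mem_interior (x := s) (by simp)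
    rw [hasDerivWithinAt_iff_tendsto_slope' (by simp)] at h2
    have h3 := h2.const_mul (n s)
    refine ge_of_tendsto h3 ?_
    filter_upwards [self_mem_nhdsWithin] with t ht
    have ht' : 0 < t - s := by simpa using ht
    rw [slope_def_field, ← mul_div_assoc, le_div_iff₀ ht']
    have := h1 (t - s)
    rw [add_sub_cancel] at this
    nlinarith
  have := image_le_of_deriv_right_le_deriv_boundary (f := fun s => -(G s / n s))
    (f' := fun s => -((derivWithin G (Ioi s) s * n s - G s * derivWithin n (Ioi s) s) / n s ^ 2))
    (a := 0) (b := 1) (B := fun _ => -(G 0 / n 0)) (B' := fun _ => 0)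
    ((contG.div contn (fun s => (npos s).ne')).neg.continuousOn)
    (fun s _ => ((dG s).div (dn s) (npos s).ne').neg) le_rfl continuousOn_const
    (fun s _ => hasDerivWithinAt_const _ _ _)
    (fun s _ => by
      have := key s
      have : 0 ≤ (derivWithin G (Ioi s) s * n s - G s * derivWithin n (Ioi s) s) / n s ^ 2 :=
        div_nonneg (by linarith) (by positivity)
      linarith) (x := 1) (by simp)
  simpa [hn, hG] using this

lemma NG.ratio_eq {N g : V2 → ℝ} (h : NG N g)
    (hs : ∀ x y : V2, (∀ t : ℝ, N x ≤ N (x + t • y)) → ∀ t : ℝ, N y ≤ N (y + t • x))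
    {x y : V2} (hxy : om x y ≠ 0) : g x / N x = g y / N y := by
  apply le_antisymm
  · have := h.ratio_le hs (x := x) (b := y - x) (by
      have : om x (y - x) = om x y := by simp [om]; ring
      rwa [this])
    simpa using this
  · have := h.ratio_le hs (x := y) (b := x - y) (by
      have : om y (x - y) = - om x y := by simp [om]; ring
      rw [this]; exact neg_ne_zero.2 hxy)
    simpa using this

lemma NG.ratio_const {N g : V2 → ℝ} (h : NG N g)
    (hs : ∀ x y : V2, (∀ t : ℝ, N x ≤ N (x + t • y)) → ∀ t : ℝ, N y ≤ N (y + t • x)) :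
    ∃ c, ∀ x, g x = c * N x := by
  set e1 : V2 := !₂[1, 0] with he1
  set e2 : V2 := !₂[0, 1] with he2
  have h12 : om e1 e2 ≠ 0 := by simp [om, he1, he2]
  refine ⟨g e1 / N e1, fun x => ?_⟩
  by_cases hx : x = 0
  · have : g 0 = 0 := by simpa using h.g_smul 0 0
    rw [hx, h.N_zero, this, mul_zero]
  have hN := h.N_pos x hx
  suffices g e1 / N e1 = g x / N x by
    rw [this]; field_simp
  by_cases h1 : om e1 x = 0
  · have h2 : om e2 x ≠ 0 := by
      intro h2
      apply hx
      ext i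
      fin_cases i
      · simpa [om, he2] using h2
      · simpa [om, he1] using h1
    rw [h.ratio_eq hs h12, h.ratio_eq hs h2]
  · exact h.ratio_eq hs h1

lemma slice_Icc {A : Set ℝ} (hc : IsCompact A) (hv : Convex ℝ A) (hne : A.Nonempty) :
    ∃ a b, a ≤ b ∧ A = Icc a b := by
  have h := eq_Icc_of_connected_compact ⟨hne, hv.isPreconnected⟩ hc
  refine ⟨sInf A, sSup A, ?_, h⟩
  rw [h] at hne
  exact nonempty_Icc.1 hne

/-- The set swept out by translating `C` horizontally over unit length. -/
def sweep (C : Set (ℝ × ℝ)) : Set (ℝ × ℝ) :=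
  (fun q : (ℝ × ℝ) × ℝ => (q.1.1 + q.2, q.1.2)) '' (C ×ˢ Icc (0 : ℝ) 1)

lemma area_sweep {C : Set (ℝ × ℝ)} (hc : IsCompact C) (hv : Convex ℝ C) :
    volume (sweep C) = volume C + volume (Prod.snd '' C) := by
  have hS : IsCompact (sweep C) := (hc.prod isCompact_Icc).image (by fun_prop)
  have hP : IsCompact (Prod.snd '' C) := hc.image continuous_snd
  rw [Measure.volume_eq_prod, Measure.prod_apply_symm hS.measurableSet,
    Measure.prod_apply_symm hc.measurableSet, ← lintegral_indicator_one hP.measurableSet,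
    ← lintegral_add_right _ (measurable_one.indicator hP.measurableSet)]
  congr 1
  ext t
  set A : Set ℝ := (fun x => (x, t)) ⁻¹' C with hA
  have hSA : (fun x => (x, t)) ⁻¹' (sweep C) = {s | ∃ a ∈ A, ∃ l ∈ Icc (0 : ℝ) 1, a + l = s} := by
    ext s
    simp only [sweep, mem_preimage, mem_image, mem_prod, mem_ofPred_eq, hA]
    constructor
    · rintro ⟨⟨⟨p, q⟩, l⟩, ⟨h1, h2⟩, h3⟩
      simp only [Prod.mk.injEq] at h3
      obtain ⟨h3, rfl⟩ := h3
      exact ⟨p, h1, l, h2, h3⟩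
    · rintro ⟨a, ha, l, hl, h⟩
      exact ⟨((a, t), l), ⟨ha, hl⟩, by simp [h]⟩
  rw [hSA]
  by_cases ht : t ∈ Prod.snd '' C
  · have hne : A.Nonempty := by
      obtain ⟨⟨p, q⟩, h, rfl⟩ := ht
      exact ⟨p, h⟩
    have hAc : IsCompact A := by
      have : A = Prod.fst '' (C ∩ (Prod.snd ⁻¹' {t})) := by
        ext s
        simp [hA]
      rw [this]
      exact (hc.inter_right (isClosed_singleton.preimage continuous_snd)).image continuous_fst
    have hAv : Convex ℝ A := by
      intro p hp q hq α β hα hβ hαβ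
      have := hv hp hq hα hβ hαβ
      simp only [Prod.smul_mk, Prod.mk_add_mk, ← add_smul, hαβ, one_smul] at this
      exact this
    obtain ⟨a, b, hab, hAab⟩ := slice_Icc hAc hAv hne
    have : {s | ∃ a ∈ A, ∃ l ∈ Icc (0 : ℝ) 1, a + l = s} = Icc a (b + 1) := by
      rw [hAab]
      ext s
      simp only [mem_ofPred_eq, mem_Icc]
      constructor
      · rintro ⟨c, hc, l, hl, rfl⟩
        constructor <;> linarith [hc.1, hc.2, hl.1, hl.2]
      · rintro ⟨h1, h2⟩
        rcases le_total s b with h | h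
        · exact ⟨s, ⟨h1, h⟩, 0, by simp, by simp⟩
        · exact ⟨b, ⟨hab, le_rfl⟩, s - b, ⟨by linarith, by linarith⟩, by ring⟩
    rw [this, hAab, Real.volume_Icc, Real.volume_Icc, indicator_of_mem ht, Pi.one_apply,
      ← ENNReal.ofReal_one, ← ENNReal.ofReal_add (by linarith) (by norm_num)]
    congr 1; ring
  · have hA0 : A = ∅ := by
      by_contra h
      obtain ⟨p, hp⟩ := nonempty_iff_ne_empty.2 h
      exact ht ⟨(p, t), hp, rfl⟩
    simp [hA0, indicator_of_notMem ht]

lemma measurePreserving_coord {x z : V2} (h : om x z = 1) :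
    MeasurePreserving (fun p : ℝ × ℝ => p.1 • x + p.2 • z) := by
  set M : Matrix (Fin 2) (Fin 2) ℝ := !![x 0, z 0; x 1, z 1] with hM
  have hdet : M.det = 1 := by
    rw [hM, Matrix.det_fin_two_of, ← h, om]; ring
  have h1 : MeasurePreserving (Matrix.toLin' M) := by
    refine ⟨(LinearMap.continuous_of_finiteDimensional _).measurable, ?_⟩
    rw [Real.map_matrix_volume_pi_eq_smul_volume_pi (by rw [hdet]; norm_num), hdet]
    simp
  have h2 := (volume_preserving_finTwoArrow ℝ).symm
  have h3 := (PiLp.volume_preserving_toLp (Fin 2)).comp (h1.comp h2)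
  have e : (fun p : ℝ × ℝ => p.1 • x + p.2 • z)
      = WithLp.toLp 2 ∘ ⇑(Matrix.toLin' M) ∘ ⇑(MeasurableEquiv.finTwoArrow (α := ℝ)).symm := by
    funext p
    ext i
    fin_cases i <;> simp [hM, MeasurableEquiv.finTwoArrow, Matrix.toLin'_apply, Matrix.mulVec,
      dotProduct, Fin.sum_univ_two] <;> ring
  rw [e]; exact h3

lemma hull_eq_s9 {K : Set V2} (hv : Convex ℝ K) (u : V2) :
    convexHull ℝ (K ∪ (u +ᵥ K)) = {y | ∃ k ∈ K, ∃ l ∈ Icc (0 : ℝ) 1, y = k + l • u} := by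
  apply Subset.antisymm
  · apply convexHull_min
    · rintro y (hy | ⟨k, hk, rfl⟩)
      · exact ⟨y, hy, 0, by simp, by simp⟩
      · exact ⟨k, hk, 1, by simp, by simp [add_comm]⟩
    · rintro _ ⟨k, hk, l, hl, rfl⟩ _ ⟨k', hk', l', hl', rfl⟩ α β hα hβ hαβ
      refine ⟨α • k + β • k', hv hk hk' hα hβ hαβ, α • l + β • l',
        convex_Icc 0 1 hl hl' hα hβ hαβ, ?_⟩
      simp only [smul_eq_mul]
      module
  · rintro _ ⟨k, hk, l, hl, rfl⟩
    have h1 : k ∈ convexHull ℝ (K ∪ (u +ᵥ K)) := subset_convexHull _ _ (Or.inl hk)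
    have h2 : u + k ∈ convexHull ℝ (K ∪ (u +ᵥ K)) :=
      subset_convexHull _ _ (Or.inr ⟨k, hk, rfl⟩)
    have := convex_convexHull ℝ (K ∪ (u +ᵥ K)) h1 h2 (a := 1 - l) (b := l)
      (by linarith [hl.2]) hl.1 (by ring)
    convert this using 1
    module

lemma area_hull {K : Set V2} (hc : IsCompact K) (hv : Convex ℝ K) {u : V2} (hu : u ≠ 0) :
    volume (convexHull ℝ (K ∪ (u +ᵥ K))) = volume K + volume ((fun k => om u k) '' K) := by
  obtain ⟨z, hz⟩ : ∃ z, om u z = 1 := by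
    have hpos : u 0 ^ 2 + u 1 ^ 2 ≠ 0 := by
      intro h0
      apply hu
      have h1 : u 0 = 0 := by nlinarith [sq_nonneg (u 0), sq_nonneg (u 1)]
      have h2 : u 1 = 0 := by nlinarith [sq_nonneg (u 0), sq_nonneg (u 1)]
      ext i; fin_cases i <;> simp [h1, h2]
    refine ⟨!₂[-(u 1) / (u 0 ^ 2 + u 1 ^ 2), u 0 / (u 0 ^ 2 + u 1 ^ 2)], ?_⟩
    simp [om]
    field_simp
    ring
  have hmp := measurePreserving_coord hz
  set Φ : ℝ × ℝ → V2 := fun p => p.1 • u + p.2 • z with hΦ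
  set Ψ : V2 → ℝ × ℝ := fun y => (om y z, om u y) with hΨ
  have hΦΨ : ∀ y, Φ (Ψ y) = y := by
    intro y
    have := om_cramer u z y
    rw [hz, one_smul] at this
    exact this.symm
  have hΨΦ : ∀ p, Ψ (Φ p) = p := by
    rintro ⟨p, q⟩
    simp only [hΦ, hΨ, Prod.mk.injEq]
    constructor
    · have : om (p • u + q • z) z = p * om u z := by simp [om]; ring
      rw [this, hz, mul_one]
    · have : om u (p • u + q • z) = q * om u z := by simp [om]; ring
      rw [this, hz, mul_one]
  have hpre : ∀ S : Set V2, Φ ⁻¹' S = Ψ '' S := by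
    intro S
    ext p
    constructor
    · intro h; exact ⟨Φ p, h, hΨΦ p⟩
    · rintro ⟨y, hy, rfl⟩
      show Φ (Ψ y) ∈ S
      rwa [hΦΨ]
  have hΨc : Continuous Ψ := by
    simp only [hΨ, om]; fun_prop
  have hCc : IsCompact (Ψ '' K) := hc.image hΨc
  have hCv : Convex ℝ (Φ ⁻¹' K) := by
    intro p hp q hq α β hα hβ hαβ
    have := hv hp hq hα hβ hαβ
    show Φ (α • p + β • q) ∈ K
    convert this using 1
    simp only [hΦ, Prod.fst_add, Prod.snd_add, Prod.smul_fst, Prod.smul_snd, smul_eq_mul]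
    module
  have hH : Ψ '' (convexHull ℝ (K ∪ (u +ᵥ K))) = sweep (Ψ '' K) := by
    rw [hull_eq_s9 hv]
    have hst : ∀ k : V2, ∀ l : ℝ, Ψ (k + l • u) = ((Ψ k).1 + l, (Ψ k).2) := by
      intro k l
      simp only [hΨ, Prod.mk.injEq]
      constructor
      · have : om (k + l • u) z = om k z + l * om u z := by simp [om]; ring
        rw [this, hz, mul_one]
      · simp [om]; ring
    ext p
    constructor
    · rintro ⟨_, ⟨k, hk, l, hl, rfl⟩, rfl⟩
      exact ⟨(Ψ k, l), ⟨⟨k, hk, rfl⟩, hl⟩, (hst k l).symm⟩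
    · rintro ⟨⟨_, l⟩, ⟨⟨k, hk, rfl⟩, hl⟩, rfl⟩
      exact ⟨_, ⟨k, hk, l, hl, rfl⟩, hst k l⟩
  have hHc : IsCompact (convexHull ℝ (K ∪ (u +ᵥ K))) := by
    have : IsCompact (sweep (Ψ '' K)) := (hCc.prod isCompact_Icc).image (by fun_prop)
    rw [← hH] at this
    have h2 := this.image (f := Φ) (by simp only [hΦ]; fun_prop)
    rw [image_image] at h2
    simpa only [hΦΨ, image_id'] using h2
  rw [← hmp.measure_preimage hHc.measurableSet.nullMeasurableSet,
    ← hmp.measure_preimage hc.measurableSet.nullMeasurableSet, hpre, hH,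
    area_sweep hCc (by rw [← hpre]; exact hCv), hpre, image_image]

/-- The antinorm associated with the difference body of `K`. -/
noncomputable def anti (K : Set V2) (y : V2) : ℝ := sSup ((fun d => |om d y|) '' (K - K))

lemma diff_compact {K : Set V2} (hc : IsCompact K) : IsCompact (K - K) := by
  rw [sub_eq_add_neg]; exact hc.add hc.neg

lemma le_anti {K : Set V2} (hc : IsCompact K) {d : V2} (hd : d ∈ K - K) (y : V2) :
    |om d y| ≤ anti K y := by
  refine le_csSup ?_ (mem_image_of_mem (fun d => |om d y|) hd)
  exact ((diff_compact hc).image (by unfold om; fun_prop)).bddAbove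

lemma anti_le {K : Set V2} (hne : K.Nonempty) {y : V2} {C : ℝ}
    (h : ∀ d ∈ K - K, |om d y| ≤ C) : anti K y ≤ C := by
  apply csSup_le
  · exact (hne.sub hne).image _
  · rintro _ ⟨d, hd, rfl⟩
    exact h d hd

lemma volume_image_om {K : Set V2} (hc : IsCompact K) (hv : Convex ℝ K) (hne : K.Nonempty)
    (u : V2) : (volume ((fun k => om u k) '' K)).toReal = anti K u := by
  have h1 : IsCompact ((fun k => om u k) '' K) := hc.image (by unfold om; fun_prop)
  have h2 : Convex ℝ ((fun k => om u k) '' K) := by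
    rintro _ ⟨k, hk, rfl⟩ _ ⟨l, hl, rfl⟩ α β hα hβ hαβ
    refine ⟨_, hv hk hl hα hβ hαβ, ?_⟩
    simp [om]; ring
  obtain ⟨a, b, hab, h⟩ := slice_Icc h1 h2 (hne.image _)
  rw [h, Real.volume_Icc, ENNReal.toReal_ofReal (by linarith)]
  have hmem : ∀ k ∈ K, om u k ∈ Icc a b := fun k hk => by rw [← h]; exact ⟨k, hk, rfl⟩
  apply le_antisymm
  · obtain ⟨k, hk, hka⟩ : a ∈ (fun k => om u k) '' K := by rw [h]; exact ⟨le_rfl, hab⟩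
    obtain ⟨l, hl, hlb⟩ : b ∈ (fun k => om u k) '' K := by rw [h]; exact ⟨hab, le_rfl⟩
    have h3 := le_anti hc (sub_mem_sub hk hl) u
    have h4 : om (k - l) u = b - a := by
      simp only at hka hlb
      rw [← hka, ← hlb]; simp [om]; ring
    rw [h4] at h3
    exact (le_abs_self _).trans h3
  · apply anti_le hne
    rintro _ ⟨k, hk, l, hl, rfl⟩
    have h4 : om (k - l) u = om u l - om u k := by simp [om]; ring
    simp only [h4]
    have h5 := hmem k hk
    have h6 := hmem l hl
    rw [abs_le]
    constructor <;> linarith [h5.1, h5.2, h6.1, h6.2]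

section body
variable {K : Set V2}

lemma half_nhds (hi : (interior K).Nonempty) : (2 : ℝ)⁻¹ • (K - K) ∈ nhds (0 : V2) := by
  rw [set_smul_mem_nhds_zero_iff (by norm_num)]
  obtain ⟨z, hz⟩ := hi
  have : IsOpen (interior K - interior K) := isOpen_interior.sub_right
  apply Filter.mem_of_superset (this.mem_nhds ⟨z, hz, z, hz, sub_self z⟩)
  exact sub_subset_sub interior_subset interior_subset

lemma gauge_two_smul (u : V2) : gauge ((2 : ℝ)⁻¹ • (K - K)) ((2 : ℝ)⁻¹ • u)
    = 2⁻¹ * gauge ((2 : ℝ)⁻¹ • (K - K)) u := by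
  rw [gauge_smul_of_nonneg (by norm_num), smul_eq_mul]

lemma gauge_le_two (hc : IsCompact K) (hv : Convex ℝ K) (hi : (interior K).Nonempty) (u : V2) :
    gauge ((2 : ℝ)⁻¹ • (K - K)) u ≤ 2 ↔ u ∈ K - K := by
  have h1 := gauge_le_one_iff_mem_closure (x := (2 : ℝ)⁻¹ • u)
    ((hv.sub hv).smul (2 : ℝ)⁻¹) (half_nhds hi)
  rw [((diff_compact hc).smul (2 : ℝ)⁻¹).isClosed.closure_eq,
    smul_mem_smul_set_iff₀ (by norm_num), gauge_two_smul] at h1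
  rw [← h1]
  constructor <;> intro h <;> linarith

lemma gauge_lt_two (hv : Convex ℝ K) (hi : (interior K).Nonempty) (u : V2) :
    gauge ((2 : ℝ)⁻¹ • (K - K)) u < 2 ↔ u ∈ interior K - interior K := by
  constructor
  · intro h
    obtain ⟨_, ⟨_, ⟨k, hk, l, hl, rfl⟩, rfl⟩, α, β, hα, hβ, hαβ, he⟩ :=
      mem_openSegment_of_gauge_lt_one (absorbent_nhds_zero (half_nhds hi))
      (show gauge ((2 : ℝ)⁻¹ • (K - K)) ((2 : ℝ)⁻¹ • u) < 1 by
        rw [gauge_two_smul]; linarith)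
    obtain ⟨z, hz⟩ := hi
    refine ⟨_, hv.combo_interior_self_mem_interior hz hk hα hβ.le hαβ,
      _, hv.combo_interior_self_mem_interior hz hl hα hβ.le hαβ, ?_⟩
    have : u = (2 : ℝ) • ((2 : ℝ)⁻¹ • u) := by rw [smul_smul]; norm_num
    rw [this, ← he]
    simp only [smul_zero, zero_add, smul_sub, smul_smul]
    module
  · intro h
    have ho : IsOpen ((2 : ℝ)⁻¹ • (interior K - interior K)) :=
      (isOpen_interior.sub_right).smul₀ (by norm_num)
    have hsub : (2 : ℝ)⁻¹ • (interior K - interior K) ⊆ interior ((2 : ℝ)⁻¹ • (K - K)) :=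
      interior_maximal (smul_set_mono (sub_subset_sub interior_subset interior_subset)) ho
    have := interior_subset_gauge_lt_one _ (hsub (smul_mem_smul_set h))
    simp only [mem_ofPred_eq, gauge_two_smul] at this
    linarith

lemma touching_iff (hc : IsCompact K) (hv : Convex ℝ K) (hi : (interior K).Nonempty) (v w : V2) :
    Touching (v +ᵥ K) (w +ᵥ K) ↔ gauge ((2 : ℝ)⁻¹ • (K - K)) (w - v) = 2 := by
  have gen : ∀ A : Set V2, ((v +ᵥ A) ∩ (w +ᵥ A)).Nonempty ↔ w - v ∈ A - A := by
    intro A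
    constructor
    · rintro ⟨_, ⟨a, ha, rfl⟩, ⟨b, hb, h⟩⟩
      refine ⟨a, ha, b, hb, ?_⟩
      simp only [vadd_eq_add] at h
      simp only
      rw [sub_eq_sub_iff_add_eq_add, h, add_comm]
    · rintro ⟨a, ha, b, hb, h⟩
      refine ⟨v + a, ⟨a, ha, rfl⟩, ⟨b, hb, ?_⟩⟩
      simp only [vadd_eq_add]
      simp only [sub_eq_sub_iff_add_eq_add] at h
      rw [← h, add_comm]
  unfold Touching
  rw [gen, interior_vadd, interior_vadd, ← not_nonempty_iff_eq_empty, gen,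
    ← gauge_le_two hc hv hi, ← gauge_lt_two hv hi, not_lt, le_antisymm_iff]

lemma ng_body (hc : IsCompact K) (hv : Convex ℝ K) (hi : (interior K).Nonempty) :
    NG (gauge ((2 : ℝ)⁻¹ • (K - K))) (anti K) := by
  have hne : K.Nonempty := hi.mono interior_subset
  have habs : Absorbent ℝ _ := absorbent_nhds_zero (half_nhds hi)
  have hsymm : ∀ x ∈ (2 : ℝ)⁻¹ • (K - K), -x ∈ (2 : ℝ)⁻¹ • (K - K) := by
    rintro _ ⟨_, ⟨k, hk, l, hl, rfl⟩, rfl⟩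
    exact ⟨l - k, sub_mem_sub hl hk, by simp only; rw [← smul_neg, neg_sub]⟩
  have hNs : ∀ (c : ℝ) (x : V2), gauge ((2 : ℝ)⁻¹ • (K - K)) (c • x)
      = |c| * gauge ((2 : ℝ)⁻¹ • (K - K)) x := by
    intro c x
    rcases le_total 0 c with h | h
    · rw [gauge_smul_of_nonneg h, abs_of_nonneg h, smul_eq_mul]
    · rw [← gauge_neg hsymm, ← neg_smul, gauge_smul_of_nonneg (by linarith), abs_of_nonpos h,
        smul_eq_mul]
  have hNp : ∀ x : V2, x ≠ 0 → 0 < gauge ((2 : ℝ)⁻¹ • (K - K)) x := fun x hx =>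
    (gauge_pos habs (((diff_compact hc).smul (2 : ℝ)⁻¹).isVonNBounded ℝ)).2 hx
  have hgle : ∀ (c : ℝ) x, anti K (c • x) ≤ |c| * anti K x := by
    intro c x
    apply anti_le hne
    intro d hd
    have : om d (c • x) = c * om d x := by simp [om]; ring
    rw [this, abs_mul]
    exact mul_le_mul_of_nonneg_left (le_anti hc hd x) (abs_nonneg c)
  have hg0 : ∀ x, 0 ≤ anti K x := by
    intro x
    obtain ⟨k, hk⟩ := hne
    exact (abs_nonneg _).trans (le_anti hc (sub_mem_sub hk hk) x)
  refine ⟨hNs, gauge_add_le ((hv.sub hv).smul _) habs, hNp, ?_, ?_, ?_, ?_⟩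
  · intro c x
    apply le_antisymm (hgle c x)
    by_cases h : c = 0
    · simp [h, hg0]
    · have h1 := hgle c⁻¹ (c • x)
      rw [smul_smul, inv_mul_cancel₀ h, one_smul] at h1
      have h2 := mul_le_mul_of_nonneg_left h1 (abs_nonneg c)
      rwa [← mul_assoc, ← abs_mul, mul_inv_cancel₀ h, abs_one, one_mul] at h2
  · intro x y
    apply anti_le hne
    intro d hd
    have : om d (x + y) = om d x + om d y := by simp [om]; ring
    rw [this]
    exact (abs_add_le _ _).trans (add_le_add (le_anti hc hd x) (le_anti hc hd y))
  · intro x y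
    by_cases hx : x = 0
    · simp [hx, om]
    have hN := hNp x hx
    set n := gauge ((2 : ℝ)⁻¹ • (K - K)) x with hn
    have hd : (2 / n) • x ∈ K - K := by
      rw [← gauge_le_two hc hv hi, hNs, ← hn, abs_of_pos (by positivity)]
      apply le_of_eq; field_simp
    have h1 := le_anti hc hd y
    have : om ((2 / n) • x) y = (2 / n) * om x y := by simp [om]; ring
    rw [this, abs_mul, abs_of_pos (by positivity), div_mul_eq_mul_div, div_le_iff₀ hN] at h1
    linarith
  · intro y C h
    apply anti_le hne
    intro d hd
    exact h d ((gauge_le_two hc hv hi d).2 hd)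

lemma vol_touch (hc : IsCompact K) (hv : Convex ℝ K) (hi : (interior K).Nonempty) {v w : V2}
    (h : gauge ((2 : ℝ)⁻¹ • (K - K)) (w - v) = 2) :
    (volume (convexHull ℝ ((v +ᵥ K) ∪ (w +ᵥ K)))).toReal
      = (volume K).toReal + anti K (w - v) := by
  have hne : K.Nonempty := hi.mono interior_subset
  have hu : w - v ≠ 0 := by
    intro h0
    rw [h0, gauge_zero] at h
    norm_num at h
  have e : (v +ᵥ K) ∪ (w +ᵥ K) = v +ᵥ (K ∪ ((w - v) +ᵥ K)) := by
    rw [vadd_set_union, vadd_vadd, add_sub_cancel]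
  rw [e, convexHull_vadd, measure_vadd, area_hull hc hv hu, ENNReal.toReal_add,
    volume_image_om hc hv hne]
  · exact hc.measure_lt_top.ne
  · have : IsCompact ((fun k => om (w - v) k) '' K) := hc.image (by unfold om; fun_prop)
    exact this.measure_lt_top.ne

end body

theorem stmt9 (K : Set (EuclideanSpace ℝ (Fin 2))) (hK : IsConvexBody K) :
    TCVP K ↔
      ∀ x y : EuclideanSpace ℝ (Fin 2),
        (∀ t : ℝ, gauge ((2 : ℝ)⁻¹ • (K - K)) x ≤ gauge ((2 : ℝ)⁻¹ • (K - K)) (x + t • y)) →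
        (∀ t : ℝ, gauge ((2 : ℝ)⁻¹ • (K - K)) y ≤ gauge ((2 : ℝ)⁻¹ • (K - K)) (y + t • x)) := by
  obtain ⟨hc, hv, hi⟩ := hK
  have ng := ng_body hc hv hi
  constructor
  · rintro ⟨c, h⟩
    have hconst : ∀ x, anti K x
        = ((c - (volume K).toReal) / 2) * gauge ((2 : ℝ)⁻¹ • (K - K)) x := by
      intro x
      by_cases hx : x = 0
      · have : anti K 0 = 0 := by simpa using ng.g_smul 0 0
        rw [hx, ng.N_zero, this, mul_zero]
      have hN := ng.N_pos x hx
      set n := gauge ((2 : ℝ)⁻¹ • (K - K)) x with hn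
      have h1 : gauge ((2 : ℝ)⁻¹ • (K - K)) ((2 / n) • x - 0) = 2 := by
        rw [sub_zero, ng.N_smul, ← hn, abs_of_pos (by positivity)]
        field_simp
      have h2 := vol_touch hc hv hi h1
      rw [h _ _ ((touching_iff hc hv hi _ _).2 h1), sub_zero, ng.g_smul,
        abs_of_pos (by positivity)] at h2
      rw [h2]; field_simp; ring
    intro x y hp
    exact ng.perp_symm_of_const hconst hp
  · intro hs
    obtain ⟨c, h⟩ := ng.ratio_const hs
    refine ⟨(volume K).toReal + c * 2, fun v w ht => ?_⟩
    rw [touching_iff hc hv hi] at ht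
    rw [vol_touch hc hv hi ht, h, ht]
end

section
/- Let n ≥ 2, let K ⊂ ℝⁿ be a convex body with the origin in its interior, let 0 ≤ λ < 1, and let t ∈ ℝⁿ. Then G_{K,0}(t/(1−λ)) = (G_{K,λ}(t) − λⁿ · vol_n(K)) / (1 − λⁿ). Consequently, if L is a sublevel set of G_{K,λ} then (1/(1−λ))·L is a sublevel set of G_{K,0}, i.e., an illumination body of K, and vice versa. -/
open MeasureTheory Set Pointwise Metric

/-- The λ-homothetic convex hull function `G_{K,λ}(t) = volₙ(conv(K ∪ (λK + t)))`. -/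
noncomputable def homChf {n : ℕ} (K : Set (EuclideanSpace ℝ (Fin n))) (l : ℝ)
    (t : EuclideanSpace ℝ (Fin n)) : ℝ :=
  (volume (convexHull ℝ (K ∪ (t +ᵥ l • K)))).toReal

lemma hull_mem_iff {n : ℕ} {K : Set (EuclideanSpace ℝ (Fin n))} (hK : Convex ℝ K)
    (hne : K.Nonempty) {l : ℝ} (hl0 : 0 ≤ l) (hl1 : l < 1)
    {t p : EuclideanSpace ℝ (Fin n)} (ht : t = (1 - l) • p) (x : EuclideanSpace ℝ (Fin n)) :
    x ∈ convexHull ℝ (K ∪ (t +ᵥ l • K)) ↔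
      ∃ m : ℝ, l ≤ m ∧ m ≤ 1 ∧ ∃ k ∈ K, x = m • k + (1 - m) • p := by
  have hc2 : Convex ℝ (t +ᵥ l • K) := (hK.smul l).vadd t
  rw [hK.convexHull_union hc2 hne (hne.smul_set.vadd_set), mem_convexJoin]
  constructor
  · rintro ⟨k, hk, y, hy, a, b, ha, hb, hab, rfl⟩
    obtain ⟨z, ⟨k', hk', rfl⟩, rfl⟩ := hy
    have hbl : 0 ≤ b * l := mul_nonneg hb hl0
    refine ⟨a + b * l, by nlinarith, by nlinarith, ?_⟩
    obtain rfl : a = 1 - b := by linarith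
    rcases eq_or_lt_of_le (add_nonneg ha hbl) with h | h
    · refine ⟨k, hk, ?_⟩
      have h1 : 1 - b = 0 := by linarith
      have h2 : b * l = 0 := by linarith
      have h3 : b = 1 := by linarith
      subst h3
      have h4 : l = 0 := by linarith
      subst h4
      subst ht
      simp
    · refine ⟨((1 - b) / ((1 - b) + b * l)) • k + ((b * l) / ((1 - b) + b * l)) • k',
        hK hk hk' (by positivity) (by positivity) (by field_simp), ?_⟩
      subst ht
      simp only [vadd_eq_add]
      match_scalars <;> field_simp
      ring
  · rintro ⟨m, hm0, hm1, k, hk, rfl⟩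
    have hl : 0 < 1 - l := by linarith
    refine ⟨k, hk, t + l • k, ⟨l • k, ⟨k, hk, rfl⟩, rfl⟩, 1 - (1 - m) / (1 - l),
      (1 - m) / (1 - l), ?_, div_nonneg (by linarith) hl.le, by ring, ?_⟩
    · rw [sub_nonneg, div_le_one hl]; linarith
    · subst ht
      match_scalars
      · field_simp; ring
      · field_simp

lemma main_eq {n : ℕ} (hn : 2 ≤ n) (K : Set (EuclideanSpace ℝ (Fin n)))
    (hK : IsConvexBody K)
    (l : ℝ) (hl0 : 0 ≤ l) (hl1 : l < 1) (t : EuclideanSpace ℝ (Fin n)) :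
    homChf K 0 ((1 - l)⁻¹ • t) + l ^ n * (volume K).toReal =
      homChf K l t + l ^ n * homChf K 0 ((1 - l)⁻¹ • t) := by
  obtain ⟨hcomp, hconv, hint⟩ := hK
  have hne : K.Nonempty := hint.mono interior_subset
  have hl : 0 < 1 - l := by linarith
  set p := (1 - l)⁻¹ • t with hp
  have ht : t = (1 - l) • p := by rw [hp, smul_smul, mul_inv_cancel₀ hl.ne', one_smul]
  have hp0 : p = (1 - (0:ℝ)) • p := by simp
  unfold homChf
  set C := convexHull ℝ (K ∪ (p +ᵥ (0:ℝ) • K)) with hC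
  set D := convexHull ℝ (K ∪ (t +ᵥ l • K)) with hD
  have memC : ∀ x, x ∈ C ↔ _ := hull_mem_iff hconv hne le_rfl one_pos hp0
  have memD : ∀ x, x ∈ D ↔ _ := hull_mem_iff hconv hne hl0 hl1 ht
  have hhom : ∀ y, AffineMap.homothety p l y = l • y + (1 - l) • p := by
    intro y
    simp only [AffineMap.homothety_apply, vsub_eq_sub, vadd_eq_add]
    module
  have hU : D ∪ AffineMap.homothety p l '' C = C := by
    ext x
    constructor
    · rintro (h | ⟨y, h, rfl⟩)
      · obtain ⟨m, h1, h2, k, hk, rfl⟩ := (memD x).1 h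
        exact (memC _).2 ⟨m, hl0.trans h1, h2, k, hk, rfl⟩
      · obtain ⟨m, h1, h2, k, hk, rfl⟩ := (memC y).1 h
        refine (memC _).2 ⟨l * m, by positivity, by nlinarith, k, hk, ?_⟩
        rw [hhom]; module
    · intro h
      obtain ⟨m, h1, h2, k, hk, rfl⟩ := (memC x).1 h
      rcases le_or_gt l m with h3 | h3
      · exact Or.inl ((memD _).2 ⟨m, h3, h2, k, hk, rfl⟩)
      · have hlp : 0 < l := by linarith
        refine Or.inr ⟨(m / l) • k + (1 - m / l) • p,
          (memC _).2 ⟨m / l, by positivity, by rw [div_le_one hlp]; exact h3.le, k, hk, rfl⟩, ?_⟩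
        rw [hhom]
        match_scalars <;> field_simp
        ring
  have hI : D ∩ AffineMap.homothety p l '' C = AffineMap.homothety p l '' K := by
    ext x
    constructor
    · rintro ⟨h, y, hy, rfl⟩
      obtain ⟨m, h1, h2, k, hk, he⟩ := (memD _).1 h
      obtain ⟨v, h3, h4, k', hk', rfl⟩ := (memC y).1 hy
      rw [hhom] at he
      have he' : (l * v) • (k' - p) = m • (k - p) := by
        have : (l * v) • (k' - p) - m • (k - p) =
          (l • (v • k' + (1 - v) • p) + (1 - l) • p) - (m • k + (1 - m) • p) := by module
        rw [← sub_eq_zero, this, he, sub_self]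
      rcases eq_or_lt_of_le hl0 with h0 | hlp
      · subst h0
        exact ⟨k, hk, by simp⟩
      refine ⟨v • k' + (1 - v) • p, ?_, rfl⟩
      have hm : 0 < m := by linarith
      rcases eq_or_lt_of_le h4 with hv1 | hv1
      · subst hv1; simpa using hk'
      have hden : 0 < m - l * v := by nlinarith
      have hd : m - l * v ≠ 0 := hden.ne'
      have hd' : m - v * l ≠ 0 := by rwa [mul_comm v l]
      have hkp : k = p + (l * v / m) • (k' - p) := by
        have : (l * v / m) • (k' - p) = k - p := by
          rw [div_eq_inv_mul, mul_smul, he', smul_smul, inv_mul_cancel₀ hm.ne', one_smul]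
        rw [this]; abel
      have key := hconv hk hk' (a := m * (1 - v) / (m - l * v))
        (b := v * (m - l) / (m - l * v))
        (div_nonneg (mul_nonneg hm.le (by linarith)) hden.le)
        (div_nonneg (mul_nonneg h3 (by linarith)) hden.le)
        (by field_simp; ring)
      convert key using 1
      rw [hkp]
      match_scalars <;> field_simp <;> ring
    · rintro ⟨k, hk, rfl⟩
      refine ⟨(memD _).2 ⟨l, le_rfl, hl1.le, k, hk, hhom k⟩, k, (memC _).2
        ⟨1, zero_le_one, le_rfl, k, hk, by simp⟩, rfl⟩
  have bC : Bornology.IsBounded C := by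
    rw [hC, isBounded_convexHull]
    exact hcomp.isBounded.union ((hcomp.smul (0:ℝ)).vadd p).isBounded
  have bD : Bornology.IsBounded D := by
    rw [hD, isBounded_convexHull]
    exact hcomp.isBounded.union ((hcomp.smul l).vadd t).isBounded
  have cD : NullMeasurableSet D volume := (convex_convexHull ℝ _).nullMeasurableSet volume
  have hmeas := measure_union_add_inter₀' cD (AffineMap.homothety p l '' C)
  rw [hU, hI, Measure.addHaar_image_homothety, Measure.addHaar_image_homothety,
    finrank_euclideanSpace_fin, abs_of_nonneg (pow_nonneg hl0 n)] at hmeas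
  have fC : volume C ≠ ⊤ := bC.measure_lt_top.ne
  have fD : volume D ≠ ⊤ := bD.measure_lt_top.ne
  have fK : volume K ≠ ⊤ := hcomp.measure_lt_top.ne
  have := congrArg ENNReal.toReal hmeas
  rwa [ENNReal.toReal_add fC (ENNReal.mul_ne_top ENNReal.ofReal_ne_top fK),
    ENNReal.toReal_add fD (ENNReal.mul_ne_top ENNReal.ofReal_ne_top fC),
    ENNReal.toReal_mul, ENNReal.toReal_mul, ENNReal.toReal_ofReal (pow_nonneg hl0 n)] at this

theorem stmt10 {n : ℕ} (hn : 2 ≤ n) (K : Set (EuclideanSpace ℝ (Fin n)))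
    (hK : IsConvexBody K) (h0 : (0 : EuclideanSpace ℝ (Fin n)) ∈ interior K)
    (l : ℝ) (hl0 : 0 ≤ l) (hl1 : l < 1) (t : EuclideanSpace ℝ (Fin n)) :
    homChf K 0 ((1 - l)⁻¹ • t) = (homChf K l t - l ^ n * (volume K).toReal) / (1 - l ^ n) ∧
      (∀ L : Set (EuclideanSpace ℝ (Fin n)),
        (∃ c : ℝ, L = {s | homChf K l s ≤ c}) →
          ∃ d : ℝ, (1 - l)⁻¹ • L = {s | homChf K 0 s ≤ d}) ∧
      (∀ L : Set (EuclideanSpace ℝ (Fin n)),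
        (∃ d : ℝ, (1 - l)⁻¹ • L = {s | homChf K 0 s ≤ d}) →
          ∃ c : ℝ, L = {s | homChf K l s ≤ c}) := by
  have hl : 0 < 1 - l := by linarith
  have hln : 0 < 1 - l ^ n := by
    have := pow_lt_one₀ hl0 hl1 (show n ≠ 0 by omega)
    linarith
  have E : ∀ s, homChf K l s =
      (1 - l ^ n) * homChf K 0 ((1 - l)⁻¹ • s) + l ^ n * (volume K).toReal := by
    intro s
    have := main_eq hn K hK l hl0 hl1 s
    linarith
  have hinv : (1 - l)⁻¹ ≠ 0 := inv_ne_zero hl.ne'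
  refine ⟨?_, ?_, ?_⟩
  · rw [E t, eq_div_iff hln.ne']; ring
  · rintro L ⟨c, rfl⟩
    refine ⟨(c - l ^ n * (volume K).toReal) / (1 - l ^ n), ?_⟩
    ext s
    rw [mem_smul_set_iff_inv_smul_mem₀ hinv, mem_setOf_eq, mem_setOf_eq, E,
      smul_inv_smul₀ hinv, le_div_iff₀ hln, le_sub_iff_add_le, mul_comm]
  · rintro L ⟨d, hd⟩
    refine ⟨(1 - l ^ n) * d + l ^ n * (volume K).toReal, ?_⟩
    ext s
    rw [← smul_mem_smul_set_iff₀ hinv L s, hd, mem_setOf_eq, mem_setOf_eq, E,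
      add_le_add_iff_right, mul_le_mul_iff_right₀ hln]
end

section
/- Let 0 ≤ λ < 1 and n ≥ 2. If K, L ⊂ ℝⁿ are convex bodies with the origin in their interiors and G_{K,λ}(t) = G_{L,λ}(t) for all t ∈ ℝⁿ, then K = L. -/
open MeasureTheory Set Pointwise Metric

theorem hull_eq_of_subset {n : ℕ} {K A : Set (EuclideanSpace ℝ (Fin n))} (hK : Convex ℝ K)
    (hA : A ⊆ K) : convexHull ℝ (K ∪ A) = K := by
  rw [union_eq_self_of_subset_right hA, hK.convexHull_eq]

theorem subset_of_volume_eq {n : ℕ} {K A : Set (EuclideanSpace ℝ (Fin n))} (hK : IsConvexBody K)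
    (hA : Bornology.IsBounded A)
    (h : (volume (convexHull ℝ (K ∪ A))).toReal = (volume K).toReal) : A ⊆ K := by
  obtain ⟨hc, hcv, hi⟩ := hK
  have hKC : K ⊆ convexHull ℝ (K ∪ A) := subset_union_left.trans (subset_convexHull ℝ _)
  have hAC : A ⊆ convexHull ℝ (K ∪ A) := subset_union_right.trans (subset_convexHull ℝ _)
  have hb : Bornology.IsBounded (convexHull ℝ (K ∪ A)) :=
    isBounded_convexHull.2 (hc.isBounded.union hA)
  have hCcv : Convex ℝ (convexHull ℝ (K ∪ A)) := convex_convexHull ℝ _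
  generalize convexHull ℝ (K ∪ A) = C at *
  have hv : volume C = volume K :=
    (ENNReal.toReal_eq_toReal_iff' hb.measure_lt_top.ne hc.measure_lt_top.ne).1 h
  intro x hx
  by_contra hxK
  have hCi : (interior C).Nonempty := hi.mono (interior_mono hKC)
  have hxcl : x ∈ closure (interior C) := by
    rw [hCcv.closure_interior_eq_closure_of_nonempty_interior hCi]
    exact subset_closure (hAC hx)
  have hne : (Kᶜ ∩ interior C).Nonempty :=
    mem_closure_iff.1 hxcl _ hc.isClosed.isOpen_compl hxK
  have hpos : 0 < volume (Kᶜ ∩ interior C) :=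
    (hc.isClosed.isOpen_compl.inter isOpen_interior).measure_pos _ hne
  have hz : volume (C \ K) = 0 := by
    rw [measure_diff hKC hc.isClosed.measurableSet.nullMeasurableSet hc.measure_lt_top.ne, hv,
      tsub_self]
  have hle : volume (Kᶜ ∩ interior C) ≤ volume (C \ K) :=
    measure_mono fun y hy => ⟨interior_subset hy.2, hy.1⟩
  rw [hz] at hle
  exact absurd hpos (not_lt.2 hle)

theorem mem_iff_homChf {n : ℕ} {l : ℝ} (hl0 : 0 ≤ l) (hl1 : l < 1)
    {K : Set (EuclideanSpace ℝ (Fin n))} (hK : IsConvexBody K)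
    (hK0 : (0 : EuclideanSpace ℝ (Fin n)) ∈ interior K) (s : EuclideanSpace ℝ (Fin n)) :
    s ∈ K ↔ homChf K l ((1 - l) • s) = homChf K l 0 := by
  have key : ∀ s ∈ K, ((1 - l) • s +ᵥ l • K) ⊆ K := by
    rintro s hs _ ⟨_, ⟨y, hy, rfl⟩, rfl⟩
    exact hK.2.1 hs hy (by linarith) hl0 (by ring)
  have h0K : (0 : EuclideanSpace ℝ (Fin n)) ∈ K := interior_subset hK0
  have h0 : homChf K l 0 = (volume K).toReal := by
    have := key 0 h0K
    rw [smul_zero] at this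
    rw [homChf, hull_eq_of_subset hK.2.1 this]
  rw [h0]
  constructor
  · intro hs
    rw [homChf, hull_eq_of_subset hK.2.1 (key s hs)]
  · intro h
    have hsub := subset_of_volume_eq hK ((hK.1.smul l).vadd ((1 - l) • s)).isBounded h
    have hit : ∀ k : ℕ, (1 - l ^ k) • s ∈ K := by
      intro k
      induction k with
      | zero => simpa using h0K
      | succ k ih =>
        have := hsub (vadd_mem_vadd_set (a := (1 - l) • s) (smul_mem_smul_set (a := l) ih))
        convert this using 1
        rw [vadd_eq_add]
        module
    have hlim : Filter.Tendsto (fun k : ℕ => (1 - l ^ k) • s) Filter.atTop (nhds s) := by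
      have := ((tendsto_pow_atTop_nhds_zero_of_lt_one hl0 hl1).const_sub 1).smul_const s
      simpa using this
    exact hK.1.isClosed.mem_of_tendsto hlim (Filter.Eventually.of_forall hit)

theorem stmt12 {n : ℕ} (hn : 2 ≤ n) (l : ℝ) (hl0 : 0 ≤ l) (hl1 : l < 1)
    (K L : Set (EuclideanSpace ℝ (Fin n))) (hK : IsConvexBody K) (hL : IsConvexBody L)
    (hK0 : (0 : EuclideanSpace ℝ (Fin n)) ∈ interior K)
    (hL0 : (0 : EuclideanSpace ℝ (Fin n)) ∈ interior L)
    (h : ∀ t : EuclideanSpace ℝ (Fin n), homChf K l t = homChf L l t) :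
    K = L := by
  ext s
  rw [mem_iff_homChf hl0 hl1 hK hK0, mem_iff_homChf hl0 hl1 hL hL0, h, h]
end

section
/- Let 0 ≤ λ < 1 and n ≥ 2, and let K, L ⊂ ℝⁿ be convex bodies with the origin in their interiors. If G_{K,λ}(t) depends only on the gauge of t with respect to L — i.e., there is a function f : ℝ → ℝ such that G_{K,λ}(t) = f(inf{τ > 0 : t ∈ τL}) for all t ∈ ℝⁿ — then K is a homothetic copy of L, i.e., K = x + μL for some x ∈ ℝⁿ and μ > 0. -/
open MeasureTheory Set Pointwise Metric

/-- If the volume does not increase, the translated copy sits inside `K`. -/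
lemma aux_subset {n : ℕ} {K C : Set (EuclideanSpace ℝ (Fin n))} (hK : IsConvexBody K)
    (hC : Convex ℝ C) (hKC : K ⊆ C) (hCb : Bornology.IsBounded C)
    (hv : (volume C).toReal = (volume K).toReal) : C ⊆ K := by
  intro y hy
  by_contra hyK
  have hCint : (interior C).Nonempty := hK.2.2.mono (interior_mono hKC)
  have hcl : y ∈ closure (interior C) := by
    rw [hC.closure_interior_eq_closure_of_nonempty_interior hCint]
    exact subset_closure hy
  have hKm : MeasurableSet K := hK.1.isClosed.measurableSet
  have hUo : IsOpen (Kᶜ) := hK.1.isClosed.isOpen_compl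
  have hne : (Kᶜ ∩ interior C).Nonempty := mem_closure_iff.1 hcl _ hUo hyK
  have hpos : 0 < volume (Kᶜ ∩ interior C) :=
    (hUo.inter isOpen_interior).measure_pos volume hne
  have hpos' : 0 < volume (C \ K) :=
    lt_of_lt_of_le hpos (measure_mono fun z hz => ⟨interior_subset hz.2, hz.1⟩)
  have hCf : volume C ≠ ⊤ := hCb.measure_lt_top.ne
  have hKf : volume K ≠ ⊤ := hK.1.measure_lt_top.ne
  rw [measure_sdiff hKC hKm.nullMeasurableSet hKf] at hpos'
  rw [(ENNReal.toReal_eq_toReal_iff' hCf hKf).1 hv] at hpos'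
  simp at hpos'

/-- `λK + t ⊆ K` forces `t ∈ (1-λ)K`, by iterating the contraction. -/
lemma aux_fixed {n : ℕ} {K : Set (EuclideanSpace ℝ (Fin n))} (hK : IsConvexBody K)
    (h0 : (0 : EuclideanSpace ℝ (Fin n)) ∈ K)
    {l : ℝ} (hl0 : 0 ≤ l) (hl1 : l < 1) {t : EuclideanSpace ℝ (Fin n)}
    (h : ∀ k ∈ K, t + l • k ∈ K) : (1 - l)⁻¹ • t ∈ K := by
  have h1 : (1 - l) ≠ 0 := by linarith
  have hmem : ∀ j : ℕ, (1 - l ^ j) • ((1 - l)⁻¹ • t) ∈ K := by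
    intro j
    induction j with
    | zero => simpa using h0
    | succ j ih =>
      convert h _ ih using 1
      have : t = (1 - l) • ((1 - l)⁻¹ • t) := by rw [smul_smul, mul_inv_cancel₀ h1, one_smul]
      nth_rewrite 2 [this]
      module
  have hlim : Filter.Tendsto (fun j : ℕ => (1 - l ^ j) • ((1 - l)⁻¹ • t)) Filter.atTop
      (nhds ((1 - 0 : ℝ) • ((1 - l)⁻¹ • t))) :=
    ((tendsto_const_nhds).sub (tendsto_pow_atTop_nhds_zero_of_lt_one hl0 hl1)).smul_const _
  have := hK.1.isClosed.mem_of_tendsto hlim (Filter.Eventually.of_forall hmem)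
  simpa using this

lemma aux_iff {n : ℕ} {K : Set (EuclideanSpace ℝ (Fin n))} (hK : IsConvexBody K)
    (h0 : (0 : EuclideanSpace ℝ (Fin n)) ∈ K)
    {l : ℝ} (hl0 : 0 ≤ l) (hl1 : l < 1) (k : EuclideanSpace ℝ (Fin n)) :
    homChf K l ((1 - l) • k) = (volume K).toReal ↔ k ∈ K := by
  have h1 : (1 - l) ≠ 0 := by linarith
  constructor
  · intro h
    have hb : Bornology.IsBounded (convexHull ℝ (K ∪ (((1 - l) • k) +ᵥ l • K))) :=
      isBounded_convexHull.2 (hK.1.isBounded.union ((hK.1.isBounded.smul₀ l).vadd _))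
    have hsub := aux_subset hK (convex_convexHull ℝ _)
      (subset_union_left.trans (subset_convexHull ℝ _)) hb h
    have := aux_fixed hK h0 hl0 hl1 (t := (1 - l) • k) (fun x hx => hsub
      (subset_convexHull ℝ _ (Or.inr ⟨l • x, ⟨x, hx, rfl⟩, rfl⟩)))
    rwa [smul_smul, inv_mul_cancel₀ h1, one_smul] at this
  · intro hk
    have : K ∪ (((1 - l) • k) +ᵥ l • K) = K := by
      apply union_eq_self_of_subset_right
      rintro _ ⟨_, ⟨x, hx, rfl⟩, rfl⟩
      exact hK.2.1 hk hx (by linarith) hl0 (by ring)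
    rw [homChf, this, hK.2.1.convexHull_eq]

theorem stmt13 {n : ℕ} (hn : 2 ≤ n) (l : ℝ) (hl0 : 0 ≤ l) (hl1 : l < 1)
    (K L : Set (EuclideanSpace ℝ (Fin n))) (hK : IsConvexBody K) (hL : IsConvexBody L)
    (hK0 : (0 : EuclideanSpace ℝ (Fin n)) ∈ interior K)
    (hL0 : (0 : EuclideanSpace ℝ (Fin n)) ∈ interior L)
    (h : ∃ f : ℝ → ℝ, ∀ t : EuclideanSpace ℝ (Fin n), homChf K l t = f (gauge L t)) :
    ∃ (x : EuclideanSpace ℝ (Fin n)) (μ : ℝ), 0 < μ ∧ K = x +ᵥ μ • L := by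
  obtain ⟨f, hf⟩ := h
  have hK0' := interior_subset hK0
  have hLn : L ∈ nhds (0 : EuclideanSpace ℝ (Fin n)) := mem_interior_iff_mem_nhds.1 hL0
  have hKn : K ∈ nhds (0 : EuclideanSpace ℝ (Fin n)) := mem_interior_iff_mem_nhds.1 hK0
  have hLa : Absorbent ℝ L := absorbent_nhds_zero hLn
  have hKa : Absorbent ℝ K := absorbent_nhds_zero hKn
  have hinv : ∀ x ∈ K, ∀ y, gauge L x = gauge L y → y ∈ K := by
    intro x hx y hxy
    rw [← aux_iff hK hK0' hl0 hl1] at hx ⊢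
    rw [← hx, hf, hf, gauge_smul_of_nonneg (by linarith), gauge_smul_of_nonneg (by linarith), hxy]
  obtain ⟨x, hx, hmax⟩ := hK.1.exists_isMaxOn ⟨0, hK0'⟩ (continuous_gauge hL.2.1 hLn).continuousOn
  have hc : 0 < gauge L x := by
    have : Nonempty (Fin n) := ⟨⟨0, by omega⟩⟩
    obtain ⟨v, hv⟩ := exists_ne (0 : EuclideanSpace ℝ (Fin n))
    obtain ⟨r, hr, w, hw, hwv⟩ := hKa.gauge_set_nonempty (x := v)
    have hw0 : w ≠ 0 := by
      rintro rfl
      exact hv (by simpa using hwv.symm)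
    exact lt_of_lt_of_le ((gauge_pos hLa (NormedSpace.isVonNBounded_of_isBounded ℝ
      hL.1.isBounded)).2 hw0) (hmax hw)
  refine ⟨0, gauge L x, hc, ?_⟩
  ext y
  rw [zero_vadd, mem_smul_set_iff_inv_smul_mem₀ hc.ne']
  have e : (gauge L x)⁻¹ • y ∈ L ↔ gauge L y ≤ gauge L x := by
    have e1 : ∀ z, z ∈ L ↔ gauge L z ≤ 1 := fun z => by
      rw [gauge_le_one_iff_mem_closure hL.2.1 hLn, hL.1.isClosed.closure_eq]
    rw [e1,
      gauge_smul_of_nonneg (inv_nonneg.2 hc.le), smul_eq_mul, inv_mul_le_iff₀ hc, mul_one]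
  rw [e]
  refine ⟨fun hy => hmax hy, fun hy => ?_⟩
  have hs : 0 ≤ gauge L y / gauge L x := div_nonneg (gauge_nonneg _) hc.le
  refine hinv ((gauge L y / gauge L x) • x)
    (hK.2.1.smul_mem_of_zero_mem hK0' hx ⟨hs, (div_le_one hc).2 hy⟩) y ?_
  rw [gauge_smul_of_nonneg hs, smul_eq_mul, div_mul_cancel₀ _ hc.ne']
end

section
/- Let 0 ≤ λ < 1 and n ≥ 2, and let K ⊂ ℝⁿ be a convex body with the origin in its interior. If G_{K,λ} is rotationally symmetric, i.e., G_{K,λ}(R t) = G_{K,λ}(t) for every orthogonal linear map R of ℝⁿ and every t ∈ ℝⁿ, then K is a Euclidean ball centered at the origin. -/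
open MeasureTheory Set Pointwise Metric

theorem homChf_eq_imp {n : ℕ} (l : ℝ) (hl0 : 0 ≤ l) (hl1 : l < 1)
    (K : Set (EuclideanSpace ℝ (Fin n))) (hK : IsConvexBody K)
    (hK0 : (0 : EuclideanSpace ℝ (Fin n)) ∈ interior K) (t : EuclideanSpace ℝ (Fin n))
    (h : homChf K l t = (volume K).toReal) : (1 - l)⁻¹ • t ∈ K := by
  obtain ⟨hc, hconv, hint⟩ := hK
  set C := convexHull ℝ (K ∪ (t +ᵥ l • K)) with hC
  have hKC : K ⊆ C := subset_union_left.trans (subset_convexHull ℝ _)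
  have hcomp : IsCompact (K ∪ (t +ᵥ l • K)) := hc.union ((hc.smul l).vadd t)
  have hCfin : volume C ≠ ⊤ :=
    ((isBounded_convexHull.2 hcomp.isBounded).measure_lt_top).ne
  have hKfin : volume K ≠ ⊤ := hc.measure_lt_top.ne
  have hvol : volume C = volume K := (ENNReal.toReal_eq_toReal_iff' hCfin hKfin).1 h
  have hdiff : volume (C \ K) = 0 := by
    rw [measure_sdiff hKC hc.measurableSet.nullMeasurableSet hKfin, hvol, tsub_self]
  have hopen : IsOpen (interior C \ K) := isOpen_interior.sdiff hc.isClosed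
  have hempty : interior C \ K = ∅ := by
    refine (hopen.measure_eq_zero_iff volume).1 (measure_mono_null ?_ hdiff)
    exact sdiff_subset_sdiff_left interior_subset
  have hiK : interior C ⊆ K := sdiff_eq_empty.1 hempty
  have hCK : C ⊆ K := by
    have h1 := (convex_convexHull ℝ (K ∪ (t +ᵥ l • K))).closure_interior_eq_closure_of_nonempty_interior
      (hint.mono (interior_mono hKC))
    calc C ⊆ closure C := subset_closure
      _ = closure (interior C) := h1.symm
      _ ⊆ K := closure_minimal hiK hc.isClosed
  have hstep : ∀ x ∈ K, t + l • x ∈ K := fun x hx =>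
    hCK (subset_convexHull ℝ _ (Or.inr (Set.vadd_mem_vadd_set (Set.smul_mem_smul_set hx))))
  have h1l : (1 - l) ≠ 0 := by linarith
  have hseq : ∀ k : ℕ, ((1 - l ^ k) * (1 - l)⁻¹) • t ∈ K := by
    intro k
    induction k with
    | zero => simpa using interior_subset hK0
    | succ k ih =>
      have := hstep _ ih
      convert this using 1
      rw [smul_smul]
      nth_rewrite 2 [← one_smul ℝ t]
      rw [← add_smul]
      congr 1
      field_simp
      ring
  have hlim : Filter.Tendsto (fun k : ℕ => ((1 - l ^ k) * (1 - l)⁻¹) • t) Filter.atTop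
      (nhds (((1 - 0) * (1 - l)⁻¹) • t)) :=
    (((tendsto_pow_atTop_nhds_zero_of_lt_one hl0 hl1).const_sub 1).mul_const _).smul_const t
  have := hc.isClosed.mem_of_tendsto hlim (Filter.Eventually.of_forall hseq)
  simpa using this

theorem homChf_eq_of_mem {n : ℕ} (l : ℝ) (hl0 : 0 ≤ l) (hl1 : l < 1)
    (K : Set (EuclideanSpace ℝ (Fin n))) (hK : IsConvexBody K)
    (x : EuclideanSpace ℝ (Fin n)) (hx : x ∈ K) :
    homChf K l ((1 - l) • x) = (volume K).toReal := by
  have : K ∪ ((1 - l) • x +ᵥ l • K) = K := by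
    apply union_eq_self_of_subset_right
    rintro _ ⟨_, ⟨y, hy, rfl⟩, rfl⟩
    exact hK.2.1 hx hy (by linarith) hl0 (by ring)
  rw [homChf, this, hK.2.1.convexHull_eq]

theorem stmt14 {n : ℕ} (hn : 2 ≤ n) (l : ℝ) (hl0 : 0 ≤ l) (hl1 : l < 1)
    (K : Set (EuclideanSpace ℝ (Fin n))) (hK : IsConvexBody K)
    (hK0 : (0 : EuclideanSpace ℝ (Fin n)) ∈ interior K)
    (h : ∀ (R : EuclideanSpace ℝ (Fin n) ≃ₗᵢ[ℝ] EuclideanSpace ℝ (Fin n))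
      (t : EuclideanSpace ℝ (Fin n)), homChf K l (R t) = homChf K l t) :
    ∃ r : ℝ, 0 < r ∧ K = Metric.closedBall 0 r := by
  have hinv : ∀ (R : EuclideanSpace ℝ (Fin n) ≃ₗᵢ[ℝ] EuclideanSpace ℝ (Fin n)),
      ∀ x ∈ K, R x ∈ K := by
    intro R x hx
    have h1 := h R ((1 - l) • x)
    rw [homChf_eq_of_mem l hl0 hl1 K hK x hx] at h1
    have h2 := homChf_eq_imp l hl0 hl1 K hK hK0 _ h1
    rwa [map_smul, inv_smul_smul₀ (by linarith)] at h2
  have h0 : (0 : EuclideanSpace ℝ (Fin n)) ∈ K := interior_subset hK0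
  obtain ⟨x0, hx0, hmax⟩ := hK.1.exists_isMaxOn ⟨0, h0⟩ continuous_norm.continuousOn
  have hmax' : ∀ y ∈ K, ‖y‖ ≤ ‖x0‖ := fun y hy => hmax hy
  have hpos : 0 < ‖x0‖ := by
    obtain ⟨ε, hε, hball⟩ := Metric.isOpen_iff.1 isOpen_interior 0 hK0
    have hm : EuclideanSpace.single (⟨0, by omega⟩ : Fin n) (ε / 2) ∈ K := by
      apply interior_subset
      apply hball
      rw [mem_ball_zero_iff, EuclideanSpace.norm_single, Real.norm_eq_abs, abs_of_pos (by linarith)]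
      linarith
    have := hmax' _ hm
    rw [EuclideanSpace.norm_single, Real.norm_eq_abs, abs_of_pos (by linarith)] at this
    linarith
  refine ⟨‖x0‖, hpos, Subset.antisymm (fun y hy => by simpa using hmax' y hy) ?_⟩
  intro y hy
  rw [mem_closedBall_zero_iff] at hy
  by_cases hy0 : y = 0
  · rwa [hy0]
  have hyn : 0 < ‖y‖ := norm_pos_iff.2 hy0
  have hnorm : ‖x0‖ = ‖(‖x0‖ / ‖y‖) • y‖ := by
    rw [norm_smul, Real.norm_eq_abs, abs_of_pos (by positivity)]
    field_simp
  have hmem := hinv (Submodule.reflection (Submodule.span ℝ {x0 - (‖x0‖ / ‖y‖) • y})ᗮ) x0 hx0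
  rw [Submodule.reflection_sub hnorm] at hmem
  have h3 := hK.2.1.smul_mem_of_zero_mem h0 hmem (t := ‖y‖ / ‖x0‖)
    ⟨by positivity, (div_le_one hpos).2 hy⟩
  rw [smul_smul] at h3
  have : ‖y‖ / ‖x0‖ * (‖x0‖ / ‖y‖) = 1 := by field_simp
  rwa [this, one_smul] at h3
end

section
/- Let K, L ⊂ ℝⁿ be convex bodies. Then the function t ↦ vol_n(conv(K ∪ (t + L))) is a convex function on ℝⁿ. In particular, for any convex body K with the origin in its interior and any 0 ≤ λ < 1, the λ-homothetic convex hull function G_{K,λ} is convex, and hence all its sublevel sets are convex. -/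
open MeasureTheory Set Pointwise Metric

/-- Description of the convex hull of the union as an image of a product. -/
lemma hull_eq_image {n : ℕ} {K L : Set (EuclideanSpace ℝ (Fin n))}
    (hK : Convex ℝ K) (hL : Convex ℝ L) (hK0 : K.Nonempty) (hL0 : L.Nonempty)
    (t : EuclideanSpace ℝ (Fin n)) :
    convexHull ℝ (K ∪ (t +ᵥ L)) =
      (fun p : ℝ × EuclideanSpace ℝ (Fin n) × EuclideanSpace ℝ (Fin n) =>
        (1 - p.1) • p.2.1 + p.1 • (t + p.2.2)) '' (Icc (0 : ℝ) 1 ×ˢ (K ×ˢ L)) := by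
  rw [Convex.convexHull_union hK (hL.vadd t) hK0 (hL0.vadd_set)]
  ext x
  simp only [mem_convexJoin, mem_image, mem_prod, Prod.exists, mem_Icc]
  constructor
  · rintro ⟨a, ha, b, hb, hx⟩
    obtain ⟨b', hb', rfl⟩ := mem_vadd_set.1 hb
    obtain ⟨u, w, hu, hw, huw, rfl⟩ := hx
    refine ⟨w, a, b', ⟨⟨hw, by linarith⟩, ha, hb'⟩, ?_⟩
    rw [← huw]; simp
  · rintro ⟨w, a, b, ⟨⟨h0, h1⟩, ha, hb⟩, rfl⟩
    exact ⟨a, ha, t + b, mem_vadd_set.2 ⟨b, hb, rfl⟩, 1 - w, w, by linarith, h0, by ring, rfl⟩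

lemma hull_compact {n : ℕ} {K L : Set (EuclideanSpace ℝ (Fin n))}
    (hK : Convex ℝ K) (hL : Convex ℝ L) (hK0 : K.Nonempty) (hL0 : L.Nonempty)
    (hKc : IsCompact K) (hLc : IsCompact L)
    (t : EuclideanSpace ℝ (Fin n)) :
    IsCompact (convexHull ℝ (K ∪ (t +ᵥ L))) := by
  rw [hull_eq_image hK hL hK0 hL0]
  apply (isCompact_Icc.prod (hKc.prod hLc)).image
  fun_prop

/-- One-dimensional estimate. -/
lemma line_est {A A0 A1 : Set ℝ} (hA : IsCompact A) (h0 : Convex ℝ A0) (h1 : Convex ℝ A1)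
    {s : ℝ} (hs0 : 0 ≤ s) (hs1 : s ≤ 1)
    (h : ∀ x ∈ A, ∃ m : ℝ, x - m * s ∈ A0 ∧ x + m * (1 - s) ∈ A1) :
    volume A ≤ ENNReal.ofReal (1 - s) * volume A0 + ENNReal.ofReal s * volume A1 := by
  rcases A.eq_empty_or_nonempty with rfl | hne
  · simp
  obtain ⟨g, hg, hgm⟩ := hA.exists_isLeast hne
  obtain ⟨k, hk, hkm⟩ := hA.exists_isGreatest hne
  obtain ⟨m, hm0, hm1⟩ := h g hg
  obtain ⟨m', hm0', hm1'⟩ := h k hk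
  have e0 : ENNReal.ofReal ((k - m' * s) - (g - m * s)) ≤ volume A0 := by
    rw [← Real.volume_Icc]
    exact measure_mono (h0.ordConnected.out hm0 hm0')
  have e1 : ENNReal.ofReal ((k + m' * (1 - s)) - (g + m * (1 - s))) ≤ volume A1 := by
    rw [← Real.volume_Icc]
    exact measure_mono (h1.ordConnected.out hm1 hm1')
  calc volume A ≤ volume (Icc g k) := measure_mono fun x hx => ⟨hgm hx, hkm hx⟩
    _ = ENNReal.ofReal ((1 - s) * ((k - m' * s) - (g - m * s))
          + s * ((k + m' * (1 - s)) - (g + m * (1 - s)))) := by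
        rw [Real.volume_Icc]; congr 1; ring
    _ ≤ _ := ENNReal.ofReal_add_le
    _ ≤ _ := by
        rw [ENNReal.ofReal_mul (by linarith), ENNReal.ofReal_mul hs0]
        gcongr

/-- Estimate in all dimensions by slicing along `v`. -/
lemma vol_est {n : ℕ} {A A0 A1 : Set (EuclideanSpace ℝ (Fin n))} (hA : IsCompact A)
    (hA0 : IsCompact A0) (hA1 : IsCompact A1) (h0 : Convex ℝ A0) (h1 : Convex ℝ A1)
    {s : ℝ} (hs0 : 0 ≤ s) (hs1 : s ≤ 1) {v : EuclideanSpace ℝ (Fin n)} (hv : v ≠ 0)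
    (h : ∀ x ∈ A, ∃ m : ℝ, x - (m * s) • v ∈ A0 ∧ x + (m * (1 - s)) • v ∈ A1) :
    volume A ≤ ENNReal.ofReal (1 - s) * volume A0 + ENNReal.ofReal s * volume A1 := by
  obtain ⟨f, hf⟩ : ∃ f : EuclideanSpace ℝ (Fin n) →L[ℝ] ℝ, f v = 1 :=
    SeparatingDual.exists_eq_one hv
  let f2 : ℝ →L[ℝ] EuclideanSpace ℝ (Fin n) := ContinuousLinearMap.toSpanSingleton ℝ v
  have hr : Function.RightInverse f2 f := fun x => by simp [f2, hf]
  let e := (ContinuousLinearEquiv.equivOfRightInverse f f2 hr).symm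
  have he : ∀ (r : ℝ) y, e (r, y) = r • v + y := fun r y => by
    simp [e, f2]
  let P : Measure (ℝ × f.ker) := (volume : Measure ℝ).prod (volume : Measure f.ker)
  have : (Measure.map e P).IsAddHaarMeasure := e.isAddHaarMeasure_map P
  obtain ⟨c, hc⟩ : ∃ c : NNReal, (volume : Measure (EuclideanSpace ℝ (Fin n)))
      = c • Measure.map e P := ⟨_, Measure.isAddLeftInvariant_eq_smul _ _⟩
  have key : ∀ B : Set (EuclideanSpace ℝ (Fin n)), IsCompact B →
      volume B = c * ∫⁻ y : f.ker, volume {r : ℝ | e (r, y) ∈ B} := by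
    intro B hB
    have hm : MeasurableSet (e ⁻¹' B) := e.continuous.measurable hB.measurableSet
    rw [hc, Measure.smul_apply, Measure.map_apply e.continuous.measurable hB.measurableSet,
      Measure.prod_apply_symm hm]
    rfl
  have meas : ∀ B : Set (EuclideanSpace ℝ (Fin n)), IsCompact B →
      Measurable fun y : f.ker => volume {r : ℝ | e (r, y) ∈ B} := by
    intro B hB
    exact measurable_measure_prodMk_right (e.continuous.measurable hB.measurableSet)
  have conv : ∀ B : Set (EuclideanSpace ℝ (Fin n)), Convex ℝ B → ∀ y : f.ker,
      Convex ℝ {r : ℝ | e (r, y) ∈ B} := by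
    intro B hB y r hr r' hr' a b ha hb hab
    have := hB hr hr' ha hb hab
    simp only [he, mem_ofPred_eq] at this ⊢
    convert this using 1
    obtain rfl : a = 1 - b := by linarith
    simp only [smul_eq_mul]
    module
  have comp : ∀ y : f.ker, IsCompact {r : ℝ | e (r, y) ∈ A} := by
    intro y
    have h2 : IsCompact (e ⁻¹' A) := e.toHomeomorph.isCompact_preimage.2 hA
    refine (h2.image continuous_fst).of_isClosed_subset ?_ ?_
    · exact hA.isClosed.preimage (by fun_prop)
    · intro r hr
      exact ⟨(r, y), hr, rfl⟩
  have slice : ∀ y : f.ker, volume {r : ℝ | e (r, y) ∈ A} ≤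
      ENNReal.ofReal (1 - s) * volume {r : ℝ | e (r, y) ∈ A0}
        + ENNReal.ofReal s * volume {r : ℝ | e (r, y) ∈ A1} := by
    intro y
    refine line_est (comp y) (conv _ h0 y) (conv _ h1 y) hs0 hs1 ?_
    intro r hr
    obtain ⟨m, hm0, hm1⟩ := h _ hr
    refine ⟨m, ?_, ?_⟩
    · simp only [he, mem_ofPred_eq] at hm0 ⊢
      convert hm0 using 1
      module
    · simp only [he, mem_ofPred_eq] at hm1 ⊢
      convert hm1 using 1
      module
  rw [key A hA, key A0 hA0, key A1 hA1]
  calc _ ≤ (c : ENNReal) * ∫⁻ y : f.ker, (ENNReal.ofReal (1 - s) * volume {r : ℝ | e (r, y) ∈ A0}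
        + ENNReal.ofReal s * volume {r : ℝ | e (r, y) ∈ A1}) := by
        gcongr with y
        exact slice y
    _ = _ := by
        rw [lintegral_add_left ((meas A0 hA0).const_mul _), lintegral_const_mul _ (meas A0 hA0),
          lintegral_const_mul _ (meas A1 hA1)]
        ring

lemma main_convex {n : ℕ} {K L : Set (EuclideanSpace ℝ (Fin n))}
    (hK : Convex ℝ K) (hL : Convex ℝ L) (hK0 : K.Nonempty) (hL0 : L.Nonempty)
    (hKc : IsCompact K) (hLc : IsCompact L) :
    ConvexOn ℝ Set.univ
        (fun t : EuclideanSpace ℝ (Fin n) => (volume (convexHull ℝ (K ∪ (t +ᵥ L)))).toReal) := by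
  refine ⟨convex_univ, ?_⟩
  intro t0 _ t1 _ a s ha hs has
  obtain rfl : a = 1 - s := by linarith
  rcases eq_or_ne t0 t1 with rfl | hne
  · have : (1 - s) • t0 + s • t0 = t0 := by module
    simp only [this, smul_eq_mul]
    apply le_of_eq; ring
  have hC := hull_compact hK hL hK0 hL0 hKc hLc
  have hfin : ∀ t, volume (convexHull ℝ (K ∪ (t +ᵥ L))) ≠ ⊤ := fun t => (hC t).measure_lt_top.ne
  have est := vol_est (hC ((1 - s) • t0 + s • t1)) (hC t0) (hC t1) (convex_convexHull ℝ _)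
    (convex_convexHull ℝ _) hs (by linarith) (sub_ne_zero.2 hne.symm) (by
      intro x hx
      rw [hull_eq_image hK hL hK0 hL0] at hx
      obtain ⟨⟨m, p, q⟩, hmem, rfl⟩ := hx
      refine ⟨m, ?_, ?_⟩
      · rw [hull_eq_image hK hL hK0 hL0]
        refine ⟨⟨m, p, q⟩, hmem, ?_⟩
        dsimp only
        module
      · rw [hull_eq_image hK hL hK0 hL0]
        refine ⟨⟨m, p, q⟩, hmem, ?_⟩
        dsimp only
        module)
  have := ENNReal.toReal_mono (by finiteness [hfin t0, hfin t1]) est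
  rw [ENNReal.toReal_add (by finiteness [hfin t0]) (by finiteness [hfin t1]), ENNReal.toReal_mul,
    ENNReal.toReal_mul, ENNReal.toReal_ofReal ha, ENNReal.toReal_ofReal hs] at this
  exact this

theorem stmt15 {n : ℕ} (K L : Set (EuclideanSpace ℝ (Fin n)))
    (hK : IsConvexBody K) (hL : IsConvexBody L) :
    ConvexOn ℝ Set.univ
        (fun t : EuclideanSpace ℝ (Fin n) => (volume (convexHull ℝ (K ∪ (t +ᵥ L)))).toReal) ∧
      (∀ K' : Set (EuclideanSpace ℝ (Fin n)), IsConvexBody K' →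
        (0 : EuclideanSpace ℝ (Fin n)) ∈ interior K' →
          ∀ l : ℝ, 0 ≤ l → l < 1 →
            ConvexOn ℝ Set.univ (homChf K' l) ∧
              ∀ c : ℝ, Convex ℝ {t | homChf K' l t ≤ c}) := by
  refine ⟨main_convex hK.2.1 hL.2.1 (hK.2.2.mono interior_subset) (hL.2.2.mono interior_subset)
    hK.1 hL.1, ?_⟩
  intro K' hK' _ l _ _
  have hne := hK'.2.2.mono interior_subset
  have hc : ConvexOn ℝ Set.univ (homChf K' l) :=
    main_convex hK'.2.1 (hK'.2.1.smul l) hne hne.smul_set hK'.1 (hK'.1.smul l)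
  refine ⟨hc, fun c => ?_⟩
  simpa using hc.convex_le c
end
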